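/- arXiv:0812.2734 — 5 statements merged into one kernel-verified Lean document; each statement's English description precedes it below -/
import Mathlib

section
/- If S is a minimal separator of a chordal graph G, then there are at least two connected components of G \ S each containing a vertex that is adjacent to every vertex of S. -/
/-!
Let `S` be a minimal `{u,v}`-separator of a chordal graph, and let `A`, `B` be the vertex sets of
the components of `G \ S` containing `u` and `v` (`componentSet`). The claim is that each of `A`
and `B` contains a vertex complete to `S`.

* By minimality of `S`, every `s ∈ S` has a neighbour in `A` and in `B` (`exists_adj_component`).
* `S` is a clique (`separator_isClique`): if `s, t ∈ S` were distinct and non-adjacent, shortest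
  `s`–`t` paths through `A` and through `B` would together form an induced cycle of length at
  least four, as there are no edges between `A` and `B`.
* A connected set `C` in which every vertex of the clique `S` has a neighbour contains a vertex
  complete to `S` (`exists_complete`). Take `x ∈ C` with `N(x) ∩ S` as large as possible and suppose
  `s ∈ S` is not adjacent to `x`. On a shortest path from `x` to `s` through `C`, let `y` be
  the vertex before `s`. If some `t ∈ N(x) ∩ S` were not adjacent to `y`, then the part of the path
  from the last neighbour of `t` before `s` onwards, closed up through `t`, would be an induced cycle
  of length at least four. Hence `N(y) ∩ S` contains `N(x) ∩ S` and also `s`, contradicting maximality.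

Both induced cycles come from the same principle (`no_two_induced_paths`): a chordal graph has no
two internally disjoint induced paths of length at least two with common ends and no edges between
their interiors.
-/

open SimpleGraph

variable {V : Type*}

/-- A graph is chordal if it contains no induced cycle of length at least four. -/
def IsChordal (G : SimpleGraph V) : Prop :=
  ∀ n : ℕ, 4 ≤ n → IsEmpty (SimpleGraph.cycleGraph n ↪g G)

/-- `S` separates `u` from `v`: every walk from `u` to `v` meets `S`, and `u, v ∉ S`. -/
def IsSeparator (G : SimpleGraph V) (u v : V) (S : Set V) : Prop :=
  u ∉ S ∧ v ∉ S ∧ ∀ p : G.Walk u v, ∃ x ∈ p.support, x ∈ S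

/-- A `{u,v}`-separator: a separator of `u,v` minimal with this property. -/
def IsMinUVSeparator (G : SimpleGraph V) (u v : V) (S : Set V) : Prop :=
  IsSeparator G u v S ∧ ∀ T, T ⊂ S → ¬ IsSeparator G u v T

/-- A minimal separator: a `{u,v}`-separator for some non-adjacent pair `u ≠ v`. -/
def IsMinimalSeparator (G : SimpleGraph V) (S : Set V) : Prop :=
  ∃ u v, u ≠ v ∧ ¬ G.Adj u v ∧ IsMinUVSeparator G u v S

/-- A maximal clique. -/
def IsMaxClique (G : SimpleGraph V) (Q : Set V) : Prop :=
  G.IsClique Q ∧ ∀ R, G.IsClique R → Q ⊆ R → Q = R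

abbrev MaxClique (G : SimpleGraph V) := {Q : Set V // IsMaxClique G Q}

/-- A clique tree of `G`: a tree on the maximal cliques of `G` such that for every
vertex `v` the maximal cliques containing `v` induce a (nonempty connected) subtree. -/
structure CliqueTree (G : SimpleGraph V) where
  tree : SimpleGraph (MaxClique G)
  isTree : tree.IsTree
  subtree : ∀ v : V, ((tree.induce {Q : MaxClique G | v ∈ Q.1})).Connected

/-- An asteroidal triple: three pairwise non-adjacent vertices such that any two are
joined by a path avoiding the closed neighborhood of the third. -/
def IsAsteroidalTriple (G : SimpleGraph V) (a b c : V) : Prop :=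
  a ≠ b ∧ b ≠ c ∧ a ≠ c ∧ ¬ G.Adj a b ∧ ¬ G.Adj b c ∧ ¬ G.Adj a c ∧
  (∃ p : G.Walk a b, ∀ x ∈ p.support, x ≠ c ∧ ¬ G.Adj c x) ∧
  (∃ p : G.Walk b c, ∀ x ∈ p.support, x ≠ a ∧ ¬ G.Adj a x) ∧
  (∃ p : G.Walk a c, ∀ x ∈ p.support, x ≠ b ∧ ¬ G.Adj b x)

/-! ### Definitions -/

/-- The vertices `p 0, …, p k` form an induced path of length `k`; values of `p` beyond `k` are
irrelevant. -/
def IsIndPath (G : SimpleGraph V) (k : ℕ) (p : ℕ → V) : Prop :=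
  ∀ i j, i < j → j ≤ k → p i ≠ p j ∧ (G.Adj (p i) (p j) ↔ j = i + 1)

/-- Some walk from `a` to `b` stays inside `A`. -/
def WalkJoinedIn (G : SimpleGraph V) (A : Set V) (a b : V) : Prop :=
  ∃ p : G.Walk a b, ∀ x ∈ p.support, x ∈ A

/-- The vertex set of the component of `u` in `G \ S` (empty if `u ∈ S`). -/
def componentSet (G : SimpleGraph V) (S : Set V) (u : V) : Set V :=
  {x | WalkJoinedIn G Sᶜ u x}

/-! ### Induced cycles in chordal graphs -/

/-- An induced cycle `f 0, …, f (n - 1)` of length `n ≥ 4`, described through pairs of increasing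
indices, cannot occur in a chordal graph. -/
lemma no_induced_cycle {G : SimpleGraph V} (hG : IsChordal G) (n : ℕ) (hn : 4 ≤ n) (f : ℕ → V)
    (hf : ∀ i j, i < j → j < n →
      f i ≠ f j ∧ (G.Adj (f i) (f j) ↔ (j = i + 1 ∨ (i = 0 ∧ j + 1 = n)))) : False := by
  have key : ∀ i j : Fin n, i < j → (G.Adj (f i) (f j) ↔ (cycleGraph n).Adj i j) := by
    intro i j hij
    rw [(hf i j hij j.2).2, cycleGraph_adj']
    have h1 : (i : ℕ) < j := hij
    have h2 := j.2
    have e1 : ((j - i : Fin n) : ℕ) = j - i := Fin.sub_val_of_le hij.le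
    have e2 : ((i - j : Fin n) : ℕ) = n + i - j := by
      rw [Fin.coe_sub_iff_lt.2 hij]
    rw [e1, e2]
    omega
  refine (hG n hn).false ⟨⟨fun i => f i, ?_⟩, ?_⟩
  · intro i j h
    rcases lt_trichotomy i j with hij | hij | hij
    · exact absurd h (hf i j hij j.2).1
    · exact hij
    · exact absurd h.symm (hf j i hij i.2).1
  · intro i j
    change G.Adj (f i) (f j) ↔ _
    rcases lt_trichotomy i j with hij | hij | hij
    · exact key i j hij
    · subst hij; simp
    · rw [G.adj_comm, (cycleGraph n).adj_comm]; exact key j i hij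

/-- Two induced paths with common ends would close up to an induced cycle of length `k + m ≥ 4`. -/
lemma no_two_induced_paths {G : SimpleGraph V} (hG : IsChordal G) {k m : ℕ} {p q : ℕ → V}
    (hk : 2 ≤ k) (hm : 2 ≤ m) (hp : IsIndPath G k p) (hq : IsIndPath G m q)
    (h0 : p 0 = q 0) (h1 : p k = q m)
    (hpq : ∀ i j, 0 < i → i < k → 0 < j → j < m → p i ≠ q j ∧ ¬ G.Adj (p i) (q j)) : False := by
  -- The cycle runs along `p` and returns along `q`.
  refine no_induced_cycle hG (k + m) (by omega) (fun i => if i ≤ k then p i else q (k + m - i)) ?_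
  intro i j hij hj
  by_cases hjk : j ≤ k
  · have hik : i ≤ k := by omega
    simp only [hjk, hik, if_true]
    refine ⟨(hp i j hij hjk).1, (hp i j hij hjk).2.trans ?_⟩
    omega
  · simp only [hjk, if_false]
    by_cases hik : i ≤ k
    · simp only [hik, if_true]
      rcases Nat.eq_zero_or_pos i with rfl | hi
      · rw [h0]
        have := hq 0 (k + m - j) (by omega) (by omega)
        refine ⟨this.1, this.2.trans ?_⟩
        omega
      · rcases hik.eq_or_lt with rfl | hik
        · rw [h1]
          have := hq (i + m - j) m (by omega) le_rfl
          refine ⟨this.1.symm, (G.adj_comm _ _).trans (this.2.trans ?_)⟩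
          omega
        · have := hpq i (k + m - j) hi hik (by omega) (by omega)
          refine ⟨this.1, iff_of_false this.2 ?_⟩
          omega
    · simp only [hik, if_false]
      have := hq (k + m - j) (k + m - i) (by omega) (by omega)
      refine ⟨this.1.symm, (G.adj_comm _ _).trans (this.2.trans ?_)⟩
      omega

/-! ### Walks inside a set and components -/

/-- A shortest path inside `A` is an induced path. -/
lemma WalkJoinedIn.exists_isIndPath {G : SimpleGraph V} {A : Set V} {a b : V}
    (h : WalkJoinedIn G A a b) :
    ∃ k p, IsIndPath G k p ∧ p 0 = a ∧ p k = b ∧ ∀ i ≤ k, p i ∈ A := by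
  obtain ⟨w, hw⟩ := h
  obtain ⟨p, hp⟩ := (w.induce A hw).reachable.exists_walk_length_eq_dist
  -- Replacing the segment from index `i` to index `j` cannot shorten a shortest walk.
  have short : ∀ i j, i < j → j ≤ p.length → ∀ r : (G.induce A).Walk (p.getVert i) (p.getVert j),
      j - i ≤ r.length := by
    intro i j hij hj r
    have := dist_le (((p.take i).append r).append (p.drop j))
    rw [← hp] at this
    simp only [Walk.length_append, Walk.take_length, Walk.drop_length] at this
    omega
  refine ⟨p.length, fun i => (p.getVert i).1, ?_, by simp, by simp, fun i _ => (p.getVert i).2⟩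
  intro i j hij hj
  refine ⟨fun he => ?_, fun hadj => ?_, ?_⟩
  · have he' : p.getVert i = p.getVert j := Subtype.ext he
    have := short i j hij hj ((Walk.nil : (G.induce A).Walk _ _).copy rfl he')
    simp at this
    omega
  · have hadj' : (G.induce A).Adj (p.getVert i) (p.getVert j) := hadj
    have := short i j hij hj hadj'.toWalk
    simp at this
    omega
  · rintro rfl
    exact p.adj_getVert_succ (by omega)

lemma WalkJoinedIn.trans {G : SimpleGraph V} {A : Set V} {a b c : V} (h : WalkJoinedIn G A a b)
    (h' : WalkJoinedIn G A b c) : WalkJoinedIn G A a c := by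
  obtain ⟨p, hp⟩ := h
  obtain ⟨q, hq⟩ := h'
  refine ⟨p.append q, fun x hx => ?_⟩
  rcases Walk.mem_support_append_iff _ _ |>.1 hx with h | h
  exacts [hp x h, hq x h]

lemma WalkJoinedIn.symm {G : SimpleGraph V} {A : Set V} {a b : V} (h : WalkJoinedIn G A a b) :
    WalkJoinedIn G A b a := by
  obtain ⟨p, hp⟩ := h
  exact ⟨p.reverse, fun x hx => hp x (by simpa using hx)⟩

lemma WalkJoinedIn.mono {G : SimpleGraph V} {A B : Set V} {a b : V} (h : WalkJoinedIn G A a b)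
    (hAB : A ⊆ B) : WalkJoinedIn G B a b := by
  obtain ⟨p, hp⟩ := h
  exact ⟨p, fun x hx => hAB (hp x hx)⟩

lemma walkJoinedIn_of_adj {G : SimpleGraph V} {A : Set V} {a b : V} (h : G.Adj a b) (ha : a ∈ A)
    (hb : b ∈ A) : WalkJoinedIn G A a b := by
  refine ⟨h.toWalk, fun x hx => ?_⟩
  have : x = a ∨ x = b := by simpa using hx
  rcases this with rfl | rfl <;> assumption

lemma walkJoinedIn_of_induce {G : SimpleGraph V} {A : Set V} {a b : A}
    (p : (G.induce A).Walk a b) : WalkJoinedIn G A a b := by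
  induction p with
  | nil => exact ⟨Walk.nil, by simp⟩
  | cons h _ ih => exact (walkJoinedIn_of_adj (G := G) h (Subtype.prop _) (Subtype.prop _)).trans ih

lemma WalkJoinedIn.right_mem {G : SimpleGraph V} {A : Set V} {a b : V} (h : WalkJoinedIn G A a b) :
    b ∈ A := by
  obtain ⟨p, hp⟩ := h
  exact hp b p.end_mem_support

lemma componentSet_notMem {G : SimpleGraph V} {S : Set V} {u x : V}
    (h : x ∈ componentSet G S u) : x ∉ S := WalkJoinedIn.right_mem h

lemma self_mem_componentSet {G : SimpleGraph V} {S : Set V} {u : V} (h : u ∉ S) :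
    u ∈ componentSet G S u := ⟨Walk.nil, by simpa using h⟩

lemma mem_componentSet_of_adj {G : SimpleGraph V} {S : Set V} {u x y : V}
    (hx : x ∈ componentSet G S u) (h : G.Adj x y) (hy : y ∉ S) : y ∈ componentSet G S u :=
  WalkJoinedIn.trans hx (walkJoinedIn_of_adj h (componentSet_notMem hx) hy)

/-- A component is connected: walks between its vertices can be taken inside the component. -/
lemma walkJoinedIn_componentSet {G : SimpleGraph V} {S : Set V} {u x y : V}
    (hx : x ∈ componentSet G S u) (hy : y ∈ componentSet G S u) :
    WalkJoinedIn G (componentSet G S u) x y := by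
  classical
  have key : ∀ z ∈ componentSet G S u, WalkJoinedIn G (componentSet G S u) u z := by
    rintro z ⟨p, hp⟩
    exact ⟨p, fun w hw => ⟨p.takeUntil w hw, fun a ha =>
      hp a (p.support_takeUntil_subset_support hw ha)⟩⟩
  exact (key x hx).symm.trans (key y hy)

/-! ### Minimal separators are cliques -/

lemma IsSeparator.symm {G : SimpleGraph V} {u v : V} {S : Set V} (h : IsSeparator G u v S) :
    IsSeparator G v u S :=
  ⟨h.2.1, h.1, fun p => by simpa using h.2.2 p.reverse⟩

lemma IsMinUVSeparator.symm {G : SimpleGraph V} {u v : V} {S : Set V}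
    (h : IsMinUVSeparator G u v S) : IsMinUVSeparator G v u S :=
  ⟨h.1.symm, fun T hT hs => h.2 T hT hs.symm⟩

lemma IsSeparator.not_walkJoinedIn {G : SimpleGraph V} {u v : V} {S : Set V}
    (h : IsSeparator G u v S) : ¬ WalkJoinedIn G Sᶜ u v := by
  rintro ⟨p, hp⟩
  obtain ⟨x, hx, hxS⟩ := h.2.2 p
  exact hp x hx hxS

/-- Each vertex `s` of a minimal separator has a neighbour in the component of `u`: as `S \ {s}` does
not separate, some walk from `u` to `v` avoids it, and this walk can leave the component only
through `s`. -/
lemma exists_adj_component {G : SimpleGraph V} {u v : V} {S : Set V}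
    (h : IsMinUVSeparator G u v S) {s : V} (hs : s ∈ S) : ∃ x ∈ componentSet G S u, G.Adj x s := by
  obtain ⟨p, hp⟩ : ∃ p : G.Walk u v, ∀ x ∈ p.support, x ∉ S \ {s} := by
    by_contra! hc
    exact h.2 (S \ {s}) (Set.sdiff_singleton_ssubset.2 hs)
      ⟨fun hu => h.1.1 hu.1, fun hv => h.1.2.1 hv.1, hc⟩
  obtain ⟨d, hd, hd1, hd2⟩ := p.exists_boundary_dart (componentSet G S u)
    (self_mem_componentSet h.1.1) h.1.not_walkJoinedIn
  have hdS : d.snd ∈ S := by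
    by_contra hc
    exact hd2 (mem_componentSet_of_adj hd1 d.adj hc)
  have hds : d.snd = s := by
    by_contra hc
    exact hp _ (p.dart_snd_mem_support_of_mem_darts hd) ⟨hdS, hc⟩
  exact ⟨d.fst, hd1, hds ▸ d.adj⟩

/-- Two non-adjacent separator vertices are joined by an induced path with interior in the component
of `u`. -/
lemma exists_isIndPath_through {G : SimpleGraph V} {u v : V} {S : Set V}
    (h : IsMinUVSeparator G u v S) {s t : V} (hs : s ∈ S) (ht : t ∈ S) (hst : s ≠ t)
    (hadj : ¬ G.Adj s t) : ∃ k p, 2 ≤ k ∧ IsIndPath G k p ∧ p 0 = s ∧ p k = t ∧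
      ∀ i, 0 < i → i < k → p i ∈ componentSet G S u := by
  obtain ⟨x, hx, hxs⟩ := exists_adj_component h hs
  obtain ⟨y, hy, hyt⟩ := exists_adj_component h ht
  have hsub : componentSet G S u ⊆ insert s (insert t (componentSet G S u)) := by grind
  have hj : WalkJoinedIn G (insert s (insert t (componentSet G S u))) s t :=
    ((walkJoinedIn_of_adj hxs.symm (by simp) (hsub hx)).trans
      ((walkJoinedIn_componentSet hx hy).mono hsub)).trans
      (walkJoinedIn_of_adj hyt (hsub hy) (by simp))
  obtain ⟨k, p, hp, h0, hk, hA⟩ := hj.exists_isIndPath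
  refine ⟨k, p, ?_, hp, h0, hk, fun i hi hik => ?_⟩
  · by_contra hc
    have : k = 0 ∨ k = 1 := by omega
    rcases this with rfl | rfl
    · exact hst (h0.symm.trans hk)
    · apply hadj
      rw [← h0, ← hk]
      exact (hp 0 1 (by omega) le_rfl).2.2 rfl
  · rcases hA i hik.le with h' | h' | h'
    · exact absurd (h0.trans h'.symm) (hp 0 i hi hik.le).1
    · exact absurd (h'.trans hk.symm) (hp i k hik le_rfl).1
    · exact h'

lemma separator_isClique {G : SimpleGraph V} (hG : IsChordal G) {u v : V} {S : Set V}
    (h : IsMinUVSeparator G u v S) : G.IsClique S := by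
  intro s hs t ht hst
  by_contra hadj
  obtain ⟨k, p, hk, hp, hp0, hpk, hpA⟩ := exists_isIndPath_through h hs ht hst hadj
  obtain ⟨m, q, hm, hq, hq0, hqm, hqB⟩ := exists_isIndPath_through h.symm hs ht hst hadj
  refine no_two_induced_paths hG hk hm hp hq (hp0.trans hq0.symm) (hpk.trans hqm.symm) ?_
  intro i j hi hik hj hjm
  have hx := hpA i hi hik
  have hy := hqB j hj hjm
  refine ⟨fun he => ?_, fun ha => ?_⟩
  · rw [he] at hx
    exact h.1.not_walkJoinedIn (WalkJoinedIn.trans hx (WalkJoinedIn.symm hy))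
  · exact h.1.not_walkJoinedIn (WalkJoinedIn.trans
      (mem_componentSet_of_adj hx ha (componentSet_notMem hy)) (WalkJoinedIn.symm hy))

/-! ### Vertices complete to the separator -/

/-- A nonempty connected set `C` in which every vertex of a disjoint clique `S` has a neighbour
contains a vertex complete to `S`. -/
lemma exists_complete [Finite V] {G : SimpleGraph V} (hG : IsChordal G) {S C : Set V}
    (hS : G.IsClique S) (hne : C.Nonempty) (hdisj : ∀ x ∈ C, x ∉ S)
    (hconn : ∀ x ∈ C, ∀ y ∈ C, WalkJoinedIn G C x y) (hfull : ∀ s ∈ S, ∃ x ∈ C, G.Adj x s) :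
    ∃ x ∈ C, ∀ s ∈ S, G.Adj x s := by
  classical
  obtain ⟨x, hxC, hmax⟩ := Set.exists_max_image C (fun x => {s ∈ S | G.Adj x s}.ncard)
    C.toFinite hne
  refine ⟨x, hxC, ?_⟩
  by_contra! hcon
  obtain ⟨s, hs, hxs⟩ := hcon
  obtain ⟨z, hz, hzs⟩ := hfull s hs
  have hj : WalkJoinedIn G (insert s C) x s :=
    ((hconn x hxC z hz).mono (Set.subset_insert _ _)).trans
      (walkJoinedIn_of_adj hzs (Set.mem_insert_of_mem _ hz) (Set.mem_insert _ _))
  obtain ⟨k, p, hp, h0, hk, hA⟩ := hj.exists_isIndPath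
  have hpC : ∀ i, i < k → p i ∈ C := fun i hi =>
    (hA i hi.le).resolve_left fun he => (hp i k hi le_rfl).1 (he.trans hk.symm)
  have hk2 : 2 ≤ k := by
    by_contra hc
    have : k = 0 ∨ k = 1 := by omega
    rcases this with rfl | rfl
    · exact hdisj x hxC (by rwa [← h0, hk])
    · apply hxs
      rw [← h0, ← hk]
      exact (hp 0 1 (by omega) le_rfl).2.2 rfl
  have hys : G.Adj (p (k - 1)) s := by
    rw [← hk]
    exact (hp (k - 1) k (by omega) le_rfl).2.2 (by omega)
  have hsub : ∀ t ∈ S, G.Adj x t → G.Adj (p (k - 1)) t := by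
    intro t ht hxt
    by_contra hyt
    have hts : t ≠ s := by rintro rfl; exact hxs hxt
    -- `p i` is the last neighbour of `t` on the path before `s`.
    obtain ⟨i, hik, hit, hlast⟩ : ∃ i, i ≤ k - 1 ∧ G.Adj (p i) t ∧
        ∀ j, i < j → j ≤ k - 1 → ¬ G.Adj (p j) t :=
      ⟨Nat.findGreatest (fun i => G.Adj (p i) t) (k - 1), Nat.findGreatest_le _,
        Nat.findGreatest_spec (P := fun i => G.Adj (p i) t) (Nat.zero_le _) (by rwa [h0]),
        fun j hj hj' => Nat.findGreatest_is_greatest hj hj'⟩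
    have hik' : i < k - 1 := by
      rcases hik.eq_or_lt with rfl | h
      · exact absurd hit hyt
      · exact h
    have hlong := hp i k (by omega) le_rfl
    rw [hk] at hlong
    have hits : p i ≠ t := fun he => hdisj _ (hpC i (by omega)) (he ▸ ht)
    refine no_two_induced_paths hG (k := k - i) (m := 2) (p := fun j => p (i + j))
      (q := fun j => if j = 0 then p i else if j = 1 then t else s) (by omega) le_rfl ?_ ?_
      (by simp) ?_ ?_
    · intro a b hab hb
      have := hp (i + a) (i + b) (by omega) (by omega)
      refine ⟨this.1, this.2.trans ?_⟩
      omega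
    · intro a b hab hb
      have : (a = 0 ∧ b = 1) ∨ (a = 0 ∧ b = 2) ∨ (a = 1 ∧ b = 2) := by omega
      rcases this with ⟨rfl, rfl⟩ | ⟨rfl, rfl⟩ | ⟨rfl, rfl⟩
      · simpa using ⟨hits, hit⟩
      · have hne : k ≠ i + 1 := by omega
        simpa [hne] using hlong
      · simpa using ⟨hts, hS ht hs hts⟩
    · simp only [show i + (k - i) = k by omega, hk]
      simp
    · intro a b ha hak hb hb2
      obtain rfl : b = 1 := by omega
      simp only [one_ne_zero, if_false, if_true]
      exact ⟨fun he => hdisj _ (hpC (i + a) (by omega)) (he ▸ ht),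
        hlast (i + a) (by omega) (by omega)⟩
  have hlt : {t ∈ S | G.Adj x t}.ncard < {t ∈ S | G.Adj (p (k - 1)) t}.ncard := by
    apply Set.ncard_lt_ncard _ (Set.toFinite _)
    have hle : {t ∈ S | G.Adj x t} ⊆ {t ∈ S | G.Adj (p (k - 1)) t} :=
      fun t ht => ⟨ht.1, hsub t ht.1 ht.2⟩
    exact (Set.ssubset_iff_of_subset hle).2 ⟨s, ⟨hs, hys⟩, fun hc => hxs hc.2⟩
  exact absurd (hmax _ (hpC (k - 1) (by omega))) (not_le.2 hlt)

/-- The component of `u`, viewed in the induced graph on `Sᶜ`, has a vertex complete to `S`. -/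
lemma exists_complete_component [Finite V] {G : SimpleGraph V} (hG : IsChordal G) {u v : V}
    {S : Set V} (h : IsMinUVSeparator G u v S) :
    ∃ x : (Sᶜ : Set V), (G.induce (Sᶜ : Set V)).connectedComponentMk x =
      (G.induce (Sᶜ : Set V)).connectedComponentMk ⟨u, h.1.1⟩ ∧ ∀ s ∈ S, G.Adj x.1 s := by
  obtain ⟨x, hx, hxS⟩ := exists_complete hG (separator_isClique hG h)
    ⟨u, self_mem_componentSet h.1.1⟩ (fun _ => componentSet_notMem)
    (fun _ hx _ hy => walkJoinedIn_componentSet hx hy) (fun _ hs => exists_adj_component h hs)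
  refine ⟨⟨x, componentSet_notMem hx⟩, ?_, hxS⟩
  obtain ⟨p, hp⟩ := hx
  exact ConnectedComponent.sound (p.induce _ hp).reachable.symm

/-- If `S` is a minimal separator of a chordal graph `G`, then at least two connected
components of `G \ S` contain a vertex complete to `S`. -/
theorem minimal_separator_two_full_components [Fintype V] (G : SimpleGraph V)
    (hG : IsChordal G) (S : Set V) (hS : IsMinimalSeparator G S) :
    ∃ C D : (G.induce (Sᶜ : Set V)).ConnectedComponent, C ≠ D ∧
      (∃ x : (Sᶜ : Set V), (G.induce (Sᶜ : Set V)).connectedComponentMk x = C ∧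
        ∀ s ∈ S, G.Adj x.1 s) ∧
      (∃ y : (Sᶜ : Set V), (G.induce (Sᶜ : Set V)).connectedComponentMk y = D ∧
        ∀ s ∈ S, G.Adj y.1 s) := by
  obtain ⟨u, v, -, -, h⟩ := hS
  refine ⟨_, _, fun he => ?_, exists_complete_component hG h, exists_complete_component hG h.symm⟩
  obtain ⟨p⟩ := ConnectedComponent.exact he
  exact h.1.not_walkJoinedIn (walkJoinedIn_of_induce p)
end

section
/- A graph is chordal if and only if it has a clique tree. -/
/-!
A clique tree makes `G` an intersection graph of subtrees of a tree. Root the tree, and among the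
vertices of an induced cycle pick one whose subtree has its vertex nearest to the root (its *gate*,
`SimpleGraph.IsTree.exists_gate`) as far away as possible. The subtrees of its two neighbours on the cycle
contain that gate, so the two neighbours lie in a common clique and are adjacent; the cycle is
therefore a triangle (`CliqueTree.isChordal`).

Conversely, by Dirac's theorem every nonempty induced subgraph of a chordal graph has a simplicial
vertex (`IsChordal.exists_simplicialIn`). Deleting simplicial vertices one at a time shows by
induction that the maximal cliques can be listed with the running intersection property `RIP`
(`IsChordal.rip_maxCliquesIn`): restoring a simplicial vertex either enlarges one maximal clique by
a new element or adds a new maximal clique meeting the others inside a single one of them. Joining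
each clique in the list to the earlier clique that contains its intersection with all earlier ones
produces the clique tree (`RIP.exists_forest`, `RIP.cliqueTree`).
-/

open SimpleGraph

variable {V : Type*}

/-! ### A graph with a clique tree is chordal -/

/-- In a tree rooted at `r`, a subtree `S` has a gate `q`: every path from `r` to a vertex of `S`
passes through `q` after `d = dist r q` steps and remains in `S` from then on. -/
lemma SimpleGraph.IsTree.exists_gate {α : Type*} {T : SimpleGraph α} (hT : T.IsTree) (r : α)
    {S : Set α} (hS : (T.induce S).Connected) :
    ∃ d, ∃ q ∈ S, ∀ p ∈ S, ∀ w : T.Walk r p, w.IsPath →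
      w.getVert d = q ∧ ∀ k, d ≤ k → w.getVert k ∈ S := by
  classical
  have hne : S.Nonempty := Set.nonempty_coe_sort.mp hS.nonempty
  obtain ⟨q, hqS, hq⟩ : ∃ q ∈ S, ∀ p ∈ S, T.dist r q ≤ T.dist r p :=
    exists_minimalFor_of_wellFoundedLT (· ∈ S) (T.dist r) hne |>.imp fun q hq =>
      ⟨hq.1, fun p hp => (le_total _ _).elim id (hq.2 hp)⟩
  refine ⟨T.dist r q, q, hqS, fun p hp w hw => ?_⟩
  obtain ⟨A, hA, hAlen⟩ := hT.connected.exists_path_of_dist r q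
  obtain ⟨B', hB'⟩ := (hS ⟨q, hqS⟩ ⟨p, hp⟩).exists_isPath
  obtain ⟨B, hB, hBS⟩ : ∃ B : T.Walk q p, B.IsPath ∧ ∀ x ∈ B.support, x ∈ S := by
    refine ⟨B'.map (Embedding.induce S).toHom,
      hB'.map Subtype.val_injective, fun x hx => ?_⟩
    obtain ⟨y, -, rfl⟩ := List.mem_map.1 (Walk.support_map _ B' ▸ hx)
    exact y.2
  -- Before its end, `A` is closer to `r` than `q` and hence avoids `S`, which contains `B`.
  have hAB : (A.append B).IsPath := by
    rw [Walk.isPath_def, Walk.support_append, List.nodup_append]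
    have hBn := hB.support_nodup
    rw [← Walk.cons_tail_support, List.nodup_cons] at hBn
    refine ⟨hA.support_nodup, hBn.2, ?_⟩
    rintro x hxA y hyB rfl
    have hxS := hBS x (List.mem_of_mem_tail hyB)
    by_cases hxq : x = q
    · exact hBn.1 (hxq ▸ hyB)
    · have h1 := A.length_takeUntil_lt_length hxA hxq
      have h2 := T.dist_le (A.takeUntil x hxA)
      have h3 := hq x hxS
      omega
  have hw' : w = A.append B :=
    congrArg Subtype.val ((hT.isAcyclic.subsingleton_path r p).elim ⟨w, hw⟩ ⟨_, hAB⟩)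
  subst hw'
  refine ⟨by simp [Walk.getVert_append, hAlen], fun k hk => ?_⟩
  rw [Walk.getVert_append, if_neg (by omega)]
  exact hBS _ (B.getVert_mem_support _)

lemma exists_isMaxClique_superset [Finite V] (G : SimpleGraph V) {K : Set V} (hK : G.IsClique K) :
    ∃ Q, IsMaxClique G Q ∧ K ⊆ Q := by
  obtain ⟨Q, hKQ, hQ⟩ := (Set.toFinite {Q | G.IsClique Q}).exists_le_maximal hK
  exact ⟨Q, ⟨hQ.1, fun R hR hQR => hQR.antisymm (hQ.2 hR hQR)⟩, hKQ⟩

/-- On an induced cycle, take the vertex `i` whose gate is farthest from the root. Each neighbour `j`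
shares a clique `Q` with `i`; the path from the root to `Q` has entered the subtree of `j` before
reaching the gate of `i`. So both neighbours of `i` lie in the clique at that gate, and are
adjacent. -/
lemma CliqueTree.isChordal [Finite V] {G : SimpleGraph V} (C : CliqueTree G) : IsChordal G := by
  intro n hn
  refine ⟨fun f => ?_⟩
  obtain ⟨m, rfl⟩ : ∃ m, n = (m + 2) + 2 := ⟨n - 4, by omega⟩
  obtain ⟨r⟩ := C.isTree.connected.nonempty
  choose d q hq hgate using fun v => C.isTree.exists_gate r (C.subtree v)
  obtain ⟨i, hi⟩ := Finite.exists_max fun i => d (f i)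
  have key : ∀ j, (cycleGraph (m + 2 + 2)).Adj i j → f j ∈ (q (f i)).1 := by
    intro j hij
    have hadj : G.Adj (f i) (f j) := f.map_rel_iff.2 hij
    obtain ⟨Q, hQ, hsub⟩ := exists_isMaxClique_superset G (K := {f i, f j})
      (by simp [isClique_iff, Set.pairwise_insert, hadj, hadj.symm])
    obtain ⟨w, hw⟩ := (C.isTree.connected r ⟨Q, hQ⟩).exists_isPath
    rw [← (hgate (f i) ⟨Q, hQ⟩ (hsub (by simp)) w hw).1]
    exact (hgate (f j) ⟨Q, hQ⟩ (hsub (by simp)) w hw).2 _ (hi j)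
  have h1 := key (i + 1) (by rw [cycleGraph_adj]; right; abel)
  have h2 := key (i - 1) (by rw [cycleGraph_adj]; left; abel)
  -- The neighbours `i + 1` and `i - 1` are distinct and nonadjacent, as `1`, `2` and `3` are nonzero
  -- modulo a number that is at least `4`.
  have hne : i + 1 ≠ i - 1 := by
    intro h
    have : (1 : Fin (m + 2 + 2)) + 1 = 0 := by
      calc (1 : Fin (m + 2 + 2)) + 1 = (i + 1) - (i - 1) := by abel
        _ = 0 := by rw [h]; abel
    simp [Fin.ext_iff, Fin.val_add] at this
    rw [Nat.mod_eq_of_lt (by omega)] at this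
    omega
  have hcl := f.map_rel_iff.1 ((q (f i)).2.1 h1 h2 (f.injective.ne hne))
  rw [cycleGraph_adj] at hcl
  rcases hcl with h | h
  · have : (1 : Fin (m + 2 + 2)) = 0 := by
      calc (1 : Fin (m + 2 + 2)) = ((i + 1) - (i - 1)) - 1 := by abel
        _ = 0 := by rw [h]; abel
    simp at this
  · have : (1 : Fin (m + 2 + 2)) + 1 + 1 = 0 := by
      calc (1 : Fin (m + 2 + 2)) + 1 + 1 = 1 - ((i - 1) - (i + 1)) := by abel
        _ = 0 := by rw [h]; abel
    simp [Fin.ext_iff, Fin.val_add] at this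
    rw [Nat.mod_eq_of_lt (by omega)] at this
    omega

/-! ### Families with the running intersection property -/

/-- A finite nonempty family of sets has the running intersection property if it can be listed so
that the intersection of each set `Q` with the union of its predecessors lies in a single
predecessor `P`. The predicate builds such a listing one set at a time. -/
inductive RIP : Set (Set V) → Prop
  | single (Q : Set V) : RIP {Q}
  | attach (F : Set (Set V)) (P Q : Set V) (hF : RIP F) (hP : P ∈ F) (hQ : Q ∉ F)
      (h : ∀ R ∈ F, Q ∩ R ⊆ P) : RIP (insert Q F)

lemma RIP.nonempty {F : Set (Set V)} (h : RIP F) : F.Nonempty := by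
  cases h <;> simp

/-- Joining each new set `Q` to its `P` gives a junction tree: a forest on `Set V`, all of whose
edges lie in `F`, in which two members `a`, `b` of `F` are joined by a walk of members of `F`
containing `a ∩ b`. Sets outside `F` are isolated, so `T` is a tree once restricted to `F`. -/
lemma RIP.exists_forest {F : Set (Set V)} (h : RIP F) :
    ∃ T : SimpleGraph (Set V), T.IsAcyclic ∧ (∀ a b, T.Adj a b → a ∈ F ∧ b ∈ F) ∧
      ∀ a ∈ F, ∀ b ∈ F, ∃ w : T.Walk a b, ∀ c ∈ w.support, c ∈ F ∧ a ∩ b ⊆ c := by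
  induction h with
  | single Q =>
    refine ⟨⊥, isAcyclic_bot, by simp, ?_⟩
    rintro a rfl b rfl
    exact ⟨.nil, by simp⟩
  | attach F P Q hF hP hQ h ih =>
    obtain ⟨T, hT, hTF, hw⟩ := ih
    have hPQ : P ≠ Q := fun e => hQ (e ▸ hP)
    -- `Q` is isolated in `T`, so the new edge closes no cycle.
    have hnr : ¬ T.Reachable P Q := by
      apply not_reachable_of_neighborSet_right_eq_empty hPQ
      ext x
      simp only [mem_neighborSet, Set.mem_empty_iff_false, iff_false]
      exact fun hx => hQ (hTF _ _ hx).1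
    have hle : T ≤ T ⊔ edge P Q := le_sup_left
    have hadj : (T ⊔ edge P Q).Adj Q P := by simp [edge_adj, hPQ, hPQ.symm]
    have hmono : ∀ a ∈ F, ∀ b ∈ F, ∃ w : (T ⊔ edge P Q).Walk a b,
        ∀ c ∈ w.support, c ∈ F ∧ a ∩ b ⊆ c := by
      intro a ha b hb
      obtain ⟨w, hw⟩ := hw a ha b hb
      exact ⟨w.mapLe hle, by simpa using hw⟩
    have hnew : ∀ b ∈ F, ∃ w : (T ⊔ edge P Q).Walk Q b,
        ∀ c ∈ w.support, c ∈ insert Q F ∧ Q ∩ b ⊆ c := by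
      intro b hb
      obtain ⟨w, hw⟩ := hmono P hP b hb
      refine ⟨.cons hadj w, fun c hc => ?_⟩
      rw [Walk.support_cons, List.mem_cons] at hc
      rcases hc with rfl | hc
      · exact ⟨.inl rfl, Set.inter_subset_left⟩
      · exact ⟨.inr (hw c hc).1, fun x hx => (hw c hc).2 ⟨h b hb hx, hx.2⟩⟩
    refine ⟨T ⊔ edge P Q, hT.sup_edge_of_not_reachable hnr, ?_, ?_⟩
    · intro a b hab
      rw [sup_adj, edge_adj] at hab
      rcases hab with hab | ⟨⟨rfl, rfl⟩ | ⟨rfl, rfl⟩, -⟩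
      · exact ⟨.inr (hTF _ _ hab).1, .inr (hTF _ _ hab).2⟩
      · exact ⟨.inr hP, .inl rfl⟩
      · exact ⟨.inl rfl, .inr hP⟩
    · rintro a (rfl | ha) b (rfl | hb)
      · exact ⟨.nil, by simp⟩
      · exact hnew b hb
      · obtain ⟨w, hw⟩ := hnew a ha
        exact ⟨w.reverse, fun c hc => by
          rw [Set.inter_comm]; exact hw c (by simpa using hc)⟩
      · obtain ⟨w, hw⟩ := hmono a ha b hb
        exact ⟨w, fun c hc => ⟨.inr (hw c hc).1, (hw c hc).2⟩⟩

open Classical in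
/-- The running intersection property is stable under adding a fresh element `v` to a single
member `K`. -/
lemma RIP.enlarge {F : Set (Set V)} (h : RIP F) (K : Set V) (v : V) (hv : ∀ Q ∈ F, v ∉ Q) :
    RIP ((fun X => if X = K then insert v K else X) '' F) := by
  induction h with
  | single Q => rw [Set.image_singleton]; exact .single _
  | attach F P Q hF hP hQ h ih =>
    rw [Set.image_insert_eq]
    have hvF : ∀ R ∈ F, v ∉ R := fun R hR => hv R (.inr hR)
    have hvQ : v ∉ Q := hv Q (.inl rfl)
    have hsub : ∀ X : Set V, X ⊆ if X = K then insert v K else X := by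
      intro X; split_ifs with e
      · exact e ▸ Set.subset_insert _ _
      · exact subset_rfl
    have hmem : ∀ (X : Set V) (x : V), x ≠ v → x ∈ (if X = K then insert v K else X) →
        x ∈ X := by
      intro X x hx; split_ifs with e
      · rintro (rfl | h)
        · exact absurd rfl hx
        · exact e ▸ h
      · exact id
    have hmemv : ∀ X : Set V, v ∉ X → v ∈ (if X = K then insert v K else X) → X = K := by
      intro X hX; split_ifs with e
      · exact fun _ => e
      · exact fun h => absurd h hX
    refine .attach _ _ _ (ih hvF) (Set.mem_image_of_mem _ hP) ?_ ?_
    · rintro ⟨R, hR, hRQ⟩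
      -- Away from `v`, both sets are recovered from their images.
      refine hQ (?_ : Q ∈ F)
      have : R = Q := by
        ext x
        have hRQ' : x ∈ (if R = K then insert v K else R) ↔
          x ∈ (if Q = K then insert v K else Q) := by
            exact Set.ext_iff.1 hRQ x
        by_cases hx : x = v
        · subst hx; exact iff_of_false (hvF R hR) hvQ
        · exact ⟨fun h => hmem Q x hx (hRQ'.1 (hsub R h)),
            fun h => hmem R x hx (hRQ'.2 (hsub Q h))⟩
      exact this ▸ hR
    · rintro _ ⟨R, hR, rfl⟩ x ⟨hxQ, hxR⟩
      by_cases hx : x = v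
      · subst hx
        exact absurd ((hmemv R (hvF R hR) hxR).trans (hmemv Q hvQ hxQ).symm ▸ hR) hQ
      · exact hsub P (h R hR ⟨hmem Q x hx hxQ, hmem R x hx hxR⟩)

/-- The junction property gives both the connectedness of the tree and that of the subtree of each
vertex `v`, since `v ∈ a ∩ b` forces `v` into every clique on the walk from `a` to `b`. -/
lemma RIP.cliqueTree {G : SimpleGraph V} (h : RIP {Q | IsMaxClique G Q})
    (hex : ∀ v : V, ∃ Q, IsMaxClique G Q ∧ v ∈ Q) : Nonempty (CliqueTree G) := by
  obtain ⟨T, hT, -, hw⟩ := h.exists_forest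
  obtain ⟨Q₀, hQ₀⟩ := h.nonempty
  refine ⟨⟨T.induce {Q | IsMaxClique G Q},
    ⟨{ preconnected := fun a b => ?_, nonempty := ⟨⟨Q₀, hQ₀⟩⟩ }, hT.induce _⟩, fun v => ?_⟩⟩
  · obtain ⟨w, hw⟩ := hw a.1 a.2 b.1 b.2
    exact ⟨w.induce _ fun c hc => (hw c hc).1⟩
  · obtain ⟨Q, hQ, hvQ⟩ := hex v
    have : Nonempty {Q : MaxClique G | v ∈ Q.1} := ⟨⟨⟨Q, hQ⟩, hvQ⟩⟩
    refine { preconnected := fun a b => ?_ }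
    obtain ⟨w, hw⟩ := hw a.1.1 a.1.2 b.1.1 b.1.2
    let w' := w.induce {Q | IsMaxClique G Q} fun c hc => (hw c hc).1
    refine ⟨w'.induce _ fun c hc => ?_⟩
    have : c.1 ∈ w.support := by
      have := List.mem_map_of_mem (f := Subtype.val) hc
      exact (by simpa [w'] using this : _ ∧ _).2
    exact (hw _ this).2 ⟨a.2, b.2⟩

/-! ### Simplicial vertices of chordal graphs -/

/-- Reachable vertices are joined by a shortest path, here a sequence `g 0, …, g n` in which the last
clause says that `g i` and `g j` are at distance at least `j - i`. -/
lemma SimpleGraph.Reachable.exists_geodesic {H : SimpleGraph V} {s t : V} (h : H.Reachable s t) :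
    ∃ (n : ℕ) (g : ℕ → V), g 0 = s ∧ g n = t ∧ (∀ i < n, H.Adj (g i) (g (i + 1))) ∧
      ∀ i j, i ≤ j → j ≤ n → ∀ w : H.Walk (g i) (g j), j ≤ i + w.length := by
  obtain ⟨p, hp⟩ := h.exists_walk_length_eq_dist
  refine ⟨p.length, p.getVert, by simp, by simp, fun i hi => p.adj_getVert_succ hi, ?_⟩
  intro i j hij hj w
  have := H.dist_le ((p.take i).append (w.append (p.drop j)))
  simp only [Walk.length_append, Walk.take_length, Walk.drop_length] at this
  omega

/-- An induced path `g 0, …, g n` with `n ≥ 2`, together with a vertex `x` adjacent to exactly its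
two ends, is an induced cycle of length `n + 2`. -/
lemma not_isChordal_of_geodesic {G : SimpleGraph V} {n : ℕ} {g : ℕ → V} {x : V} (hn : 2 ≤ n)
    (hadj : ∀ i < n, G.Adj (g i) (g (i + 1)))
    (hG : ∀ i j, i < j → j ≤ n → G.Adj (g i) (g j) → j = i + 1)
    (hne : ∀ i j, i < j → j ≤ n → g i ≠ g j)
    (hx : ∀ i ≤ n, x ≠ g i) (hxadj : ∀ i ≤ n, G.Adj x (g i) ↔ i = 0 ∨ i = n) :
    ¬ IsChordal G := by
  intro hch
  -- The cycle visits `g 0, …, g n` and then, at index `n + 1`, the vertex `x`.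
  let f : Fin (n + 2) → V := fun i => if i.1 ≤ n then g i.1 else x
  have hf1 : ∀ i : Fin (n + 2), i.1 ≤ n → f i = g i.1 := fun i hi => if_pos hi
  have hf2 : ∀ i : Fin (n + 2), ¬ i.1 ≤ n → f i = x := fun i hi => if_neg hi
  have hlt : ∀ i j : Fin (n + 2), i < j →
      f i ≠ f j ∧ (G.Adj (f i) (f j) ↔ (cycleGraph (n + 2)).Adj i j) := by
    intro i j hij
    have hcyc : (cycleGraph (n + 2)).Adj i j ↔ j.1 = i.1 + 1 ∨ (i.1 = 0 ∧ j.1 = n + 1) := by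
      rw [cycleGraph_adj', Fin.sub_val_of_le hij.le, Fin.coe_sub_iff_lt.2 hij]
      have := j.2
      have : i.1 < j.1 := hij
      omega
    have hij' : i.1 < j.1 := hij
    have hj2 := j.2
    rw [hcyc, hf1 i (by omega)]
    by_cases hj : j.1 ≤ n
    · rw [hf1 j hj]
      refine ⟨hne _ _ hij' hj, fun h => .inl (hG _ _ hij' hj h), ?_⟩
      rintro (h | h)
      · rw [h]; exact hadj _ (by omega)
      · omega
    · rw [hf2 j hj, G.adj_comm, hxadj _ (by omega)]
      refine ⟨(hx _ (by omega)).symm, by omega⟩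
  have hinj : Function.Injective f := by
    intro i j h
    by_contra hne
    rcases lt_or_gt_of_ne hne with hl | hl
    · exact (hlt i j hl).1 h
    · exact (hlt j i hl).1 h.symm
  refine (hch (n + 2) (by omega)).false ⟨⟨f, hinj⟩, ?_⟩
  intro i j
  change G.Adj (f i) (f j) ↔ _
  rcases lt_trichotomy i j with hl | rfl | hl
  · exact (hlt i j hl).2
  · simp
  · rw [G.adj_comm, (hlt j i hl).2, adj_comm]

/-- The graph on `V` keeping only the edges of `G` with both ends in `W`. -/
def restrictTo (G : SimpleGraph V) (W : Set V) : SimpleGraph V where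
  Adj a b := G.Adj a b ∧ a ∈ W ∧ b ∈ W
  symm := ⟨fun _ _ h => ⟨h.1.symm, h.2.2, h.2.1⟩⟩
  loopless := ⟨fun _ h => h.1.ne rfl⟩

/-- If `C` is connected and misses the closed neighbourhood of `x`, then the neighbours of `x` that
have a neighbour in `C` form a clique: otherwise a shortest path through `C` between two of them
closes up with `x` to an induced cycle. -/
lemma IsChordal.adj_of_common_component {G : SimpleGraph V} (hG : IsChordal G) {C : Set V}
    {x s t : V} (hC : ∀ a ∈ C, ∀ b ∈ C, (restrictTo G C).Reachable a b)
    (hxC : ∀ c ∈ C, c ≠ x ∧ ¬ G.Adj x c) (hs : G.Adj x s) (ht : G.Adj x t) (hst : s ≠ t)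
    (hsC : ∃ c ∈ C, G.Adj s c) (htC : ∃ c ∈ C, G.Adj t c) : G.Adj s t := by
  by_contra hnadj
  obtain ⟨a, ha, hsa⟩ := hsC
  obtain ⟨b, hb, htb⟩ := htC
  set W : Set V := insert s (insert t C) with hW
  set H := restrictTo G W
  have hle : restrictTo G C ≤ H := fun u v h => ⟨h.1, .inr (.inr h.2.1), .inr (.inr h.2.2)⟩
  have h1 : H.Adj s a := ⟨hsa, .inl rfl, .inr (.inr ha)⟩
  have h2 : H.Adj b t := ⟨htb.symm, .inr (.inr hb), .inr (.inl rfl)⟩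
  have hreach : H.Reachable s t :=
    h1.reachable.trans (((hC a ha b hb).mono hle).trans h2.reachable)
  obtain ⟨n, g, h0, hn, hadj, hgeo⟩ := hreach.exists_geodesic
  have hn0 : n ≠ 0 := by rintro rfl; exact hst (h0.symm.trans hn)
  have hn1 : n ≠ 1 := by
    rintro rfl
    have := (hadj 0 one_pos).1
    rw [zero_add, h0, hn] at this
    exact hnadj this
  have hgW : ∀ i ≤ n, g i ∈ W := by
    intro i hi
    rcases hi.lt_or_eq with h | rfl
    · exact (hadj i h).2.1
    · rw [hn]; exact .inr (.inl rfl)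
  have hne : ∀ i j, i < j → j ≤ n → g i ≠ g j := by
    intro i j hij hj h
    have := hgeo i j hij.le hj (Walk.nil.copy rfl h)
    simp at this
    omega
  have hxW : ∀ y ∈ W, G.Adj x y ↔ y = s ∨ y = t := by
    rintro y (rfl | rfl | hy)
    · simp [hs]
    · simp [ht]
    · refine iff_of_false (hxC y hy).2 ?_
      rintro (rfl | rfl)
      · exact (hxC _ hy).2 hs
      · exact (hxC _ hy).2 ht
  refine not_isChordal_of_geodesic (x := x) (g := g) (n := n) (by omega)
    (fun i hi => (hadj i hi).1) ?_ hne ?_ ?_ hG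
  · intro i j hij hj h
    have h' : H.Adj (g i) (g j) := ⟨h, hgW i (by omega), hgW j hj⟩
    have := hgeo i j hij.le hj h'.toWalk
    simp at this
    omega
  · intro i hi h
    rcases hgW i hi with h' | h' | h'
    · exact hs.ne (h.trans h')
    · exact ht.ne (h.trans h')
    · exact (hxC _ h').1 h.symm
  · intro i hi
    rw [hxW _ (hgW i hi)]
    refine or_congr ⟨fun h => ?_, fun h => h ▸ h0⟩ ⟨fun h => ?_, fun h => h ▸ hn⟩
    · by_contra h3
      exact hne 0 i (by omega) hi (h0.trans h.symm)
    · by_contra h3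
      exact hne i n (by omega) le_rfl (h.trans hn.symm)

/-- The connected component of `y` in the subgraph induced on `B`. -/
lemma exists_component (G : SimpleGraph V) {B : Set V} {y : V} (hy : y ∈ B) :
    ∃ C ⊆ B, y ∈ C ∧ (∀ a ∈ C, ∀ b ∈ C, (restrictTo G C).Reachable a b) ∧
      ∀ a ∈ C, ∀ b ∈ B, G.Adj a b → b ∈ C := by
  let R : V → V → Prop := fun a b => G.Adj a b ∧ b ∈ B
  let C : Set V := {z | Relation.ReflTransGen R y z}
  have hCy : ∀ z ∈ C, (restrictTo G C).Reachable y z := by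
    intro z hz
    induction hz with
    | refl => exact .rfl
    | tail h1 h2 ih =>
      exact ih.trans (Adj.reachable ⟨h2.1, h1, h1.tail h2⟩)
  refine ⟨C, fun z hz => ?_, .refl, fun a ha b hb => (hCy a ha).symm.trans (hCy b hb),
    fun a ha b hb hab => ha.tail ⟨hab, hb⟩⟩
  cases hz with
  | refl => exact hy
  | tail _ h => exact h.2

/-- `v` is simplicial in the subgraph of `G` induced on `A`. -/
def SimplicialIn (G : SimpleGraph V) (A : Set V) (v : V) : Prop :=
  v ∈ A ∧ G.IsClique {u | u ∈ A ∧ G.Adj v u}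

/-- A form of Dirac's theorem suited to induction: a vertex `x` that is not adjacent to all others
has a simplicial vertex outside its closed neighbourhood. Let `C` be a component of the complement
of that neighbourhood and `S ⊆ N(x)` the clique of outside neighbours of `C`. A simplicial vertex
of `C ∪ S` that lies in `C` is simplicial in `A`, so it suffices to find one; unless `C ∪ S` is a
clique, it is obtained by induction from a non-universal vertex of `C ∪ S`, chosen in `S` if
possible. -/
lemma IsChordal.exists_simplicialIn_not_adj [Finite V] {G : SimpleGraph V} (hG : IsChordal G)
    (A : Set V) : ∀ x ∈ A, (∃ y ∈ A, y ≠ x ∧ ¬ G.Adj x y) →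
      ∃ z, SimplicialIn G A z ∧ z ≠ x ∧ ¬ G.Adj x z := by
  induction A using WellFoundedLT.induction with
  | ind A ih =>
    rintro x hx ⟨y, hyA, hyx, hxy⟩
    obtain ⟨C, hCB, hyC, hCconn, hCmax⟩ := exists_component G
      (B := {y | y ∈ A ∧ y ≠ x ∧ ¬ G.Adj x y}) (y := y) ⟨hyA, hyx, hxy⟩
    let S : Set V := {s | s ∈ A ∧ G.Adj x s ∧ ∃ c ∈ C, G.Adj s c}
    have hS : G.IsClique S := fun s hs t ht hst =>
      hG.adj_of_common_component hCconn (fun c hc => (hCB hc).2) hs.2.1 ht.2.1 hst hs.2.2 ht.2.2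
    have hxCS : x ∉ C ∪ S := by
      rintro (h | h)
      · exact (hCB h).2.1 rfl
      · exact h.2.1.ne rfl
    have hsub : C ∪ S ⊆ A := Set.union_subset (fun c hc => (hCB hc).1) (fun s hs => hs.1)
    have hlt : C ∪ S < A := hsub.ssubset_of_mem_notMem hx hxCS
    -- All `A`-neighbours of a vertex of `C` lie in `C ∪ S`.
    have hlift : ∀ z ∈ C, SimplicialIn G (C ∪ S) z →
        ∃ z, SimplicialIn G A z ∧ z ≠ x ∧ ¬ G.Adj x z := by
      refine fun z hz hzs => ⟨z, ⟨(hCB hz).1, hzs.2.subset ?_⟩, (hCB hz).2⟩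
      rintro u ⟨huA, hzu⟩
      refine ⟨?_, hzu⟩
      by_cases hxu : G.Adj x u
      · exact .inr ⟨huA, hxu, z, hz, hzu.symm⟩
      · refine .inl (hCmax z hz u ⟨huA, ?_, hxu⟩ hzu)
        rintro rfl
        exact (hCB hz).2.2 hzu.symm
    by_cases h1 : ∃ s ∈ S, ∃ w ∈ C ∪ S, w ≠ s ∧ ¬ G.Adj s w
    · obtain ⟨s, hs, hw⟩ := h1
      obtain ⟨z, hz, hzs, hsz⟩ := ih _ hlt s (.inr hs) hw
      refine hlift z (hz.1.resolve_right fun hzS => hsz (hS hs hzS hzs.symm)) hz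
    · push Not at h1
      by_cases h2 : ∃ c ∈ C, ∃ w ∈ C ∪ S, w ≠ c ∧ ¬ G.Adj c w
      · obtain ⟨c, hc, hw⟩ := h2
        obtain ⟨z, hz, hzc, hcz⟩ := ih _ hlt c (.inl hc) hw
        exact hlift z (hz.1.resolve_right fun hzS =>
          hcz (h1 z hzS c (.inl hc) hzc.symm).symm) hz
      · push Not at h2
        refine hlift y hyC ⟨.inl hyC, ?_⟩
        rintro u ⟨hu | hu, -⟩ w ⟨hw, -⟩ huw
        · exact h2 u hu w hw huw.symm
        · exact h1 u hu w hw huw.symm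

lemma IsChordal.exists_simplicialIn [Finite V] {G : SimpleGraph V} (hG : IsChordal G)
    {A : Set V} (hA : A.Nonempty) : ∃ v, SimplicialIn G A v := by
  by_cases h : ∃ x ∈ A, ∃ y ∈ A, y ≠ x ∧ ¬ G.Adj x y
  · obtain ⟨x, hx, hy⟩ := h
    exact (hG.exists_simplicialIn_not_adj A x hx hy).imp fun z hz => hz.1
  · push Not at h
    obtain ⟨v, hv⟩ := hA
    exact ⟨v, hv, fun u hu w hw huw => h u hu.1 w hw.1 huw.symm⟩

/-! ### From simplicial vertices to a clique tree -/

/-- The cliques of `G` inside `A` that are maximal among the cliques inside `A`; equivalently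
the maximal cliques of the subgraph induced on `A`. -/
def maxCliquesIn (G : SimpleGraph V) (A : Set V) : Set (Set V) :=
  {Q | Maximal (fun K => K ⊆ A ∧ G.IsClique K) Q}

lemma maximal_of_mem {G : SimpleGraph V} {A Q : Set V} (hQ : Q ∈ maxCliquesIn G A) :
    Maximal (fun K => K ⊆ A ∧ G.IsClique K) Q := hQ

/-- Undoing the deletion of a simplicial vertex `v` with neighbourhood `N` in `A`. The only maximal
clique through `v` is `N ∪ {v}`. If `N` is a maximal clique of `A \ {v}`, it gets replaced by
`N ∪ {v}`; otherwise no maximal clique disappears and `N ∪ {v}` is attached to one containing `N`. -/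
lemma rip_maxCliquesIn_of_simplicialIn [Finite V] {G : SimpleGraph V} {A : Set V} {v : V}
    (hv : SimplicialIn G A v) (h : RIP (maxCliquesIn G (A \ {v}))) : RIP (maxCliquesIn G A) := by
  classical
  obtain ⟨hvA, hN⟩ := hv
  set N : Set V := {u | u ∈ A ∧ G.Adj v u} with hNdef
  have hvN : v ∉ N := fun h => h.2.ne rfl
  have hNA : N ⊆ A \ {v} := fun u hu => ⟨hu.1, fun e => hvN (e ▸ hu)⟩
  have hv' : ∀ Q ∈ maxCliquesIn G (A \ {v}), v ∉ Q := fun Q hQ hvQ => ((maximal_of_mem hQ).prop.1 hvQ).2 rfl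
  have hclq : G.IsClique (insert v N) := hN.insert fun u hu _ => hu.2
  have hsubN : ∀ K, K ⊆ A → G.IsClique K → v ∈ K → K ⊆ insert v N := by
    intro K hKA hK hvK u hu
    by_cases huv : u = v
    · exact .inl huv
    · exact .inr ⟨hKA hu, hK hvK hu (Ne.symm huv)⟩
  have hvNmax : insert v N ∈ maxCliquesIn G A :=
    ⟨⟨Set.insert_subset hvA fun u hu => hu.1, hclq⟩,
      fun K hK hle => hsubN K hK.1 hK.2 (hle (.inl rfl))⟩
  have hmem : ∀ Q, Q ∈ maxCliquesIn G A ↔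
      Q = insert v N ∨ (Q ∈ maxCliquesIn G (A \ {v}) ∧ Q ≠ N) := by
    intro Q
    constructor
    · intro hQ
      by_cases hvQ : v ∈ Q
      · exact .inl ((maximal_of_mem hQ).eq_of_subset (maximal_of_mem hvNmax).prop (hsubN Q (maximal_of_mem hQ).prop.1 (maximal_of_mem hQ).prop.2 hvQ))
      · refine .inr ⟨⟨⟨fun u hu => ⟨(maximal_of_mem hQ).prop.1 hu, fun e => hvQ (e ▸ hu)⟩, (maximal_of_mem hQ).prop.2⟩,
          fun K hK => hQ.2 ⟨hK.1.trans Set.sdiff_subset, hK.2⟩⟩, ?_⟩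
        rintro rfl
        exact hvN (hQ.2 (maximal_of_mem hvNmax).prop (Set.subset_insert _ _) (.inl rfl))
    · rintro (rfl | ⟨hQ, hQN⟩)
      · exact hvNmax
      · refine ⟨⟨(maximal_of_mem hQ).prop.1.trans Set.sdiff_subset, (maximal_of_mem hQ).prop.2⟩, fun K hK hQK => ?_⟩
        by_cases hvK : v ∈ K
        · refine absurd ((maximal_of_mem hQ).eq_of_subset ⟨hNA, hN⟩ fun u hu => ?_) hQN
          exact (hsubN K hK.1 hK.2 hvK (hQK hu)).resolve_left fun e => hv' Q hQ (e ▸ hu)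
        · exact hQ.2 ⟨fun u hu => ⟨hK.1 hu, fun e => hvK (e ▸ hu)⟩, hK.2⟩ hQK
  by_cases hNmax : N ∈ maxCliquesIn G (A \ {v})
  · convert h.enlarge N v hv' using 1
    ext Q
    rw [hmem]
    constructor
    · rintro (rfl | ⟨hQ, hQN⟩)
      · exact ⟨N, hNmax, if_pos rfl⟩
      · exact ⟨Q, hQ, if_neg hQN⟩
    · rintro ⟨R, hR, rfl⟩
      dsimp only
      split_ifs with e
      · exact .inl rfl
      · exact .inr ⟨hR, e⟩
  · obtain ⟨P, hNP, hP⟩ := (Set.toFinite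
      {K | K ⊆ A \ {v} ∧ G.IsClique K}).exists_le_maximal ⟨hNA, hN⟩
    have heq : maxCliquesIn G A = insert (insert v N) (maxCliquesIn G (A \ {v})) := by
      ext Q
      rw [hmem, Set.mem_insert_iff]
      refine or_congr_right ⟨fun h => h.1, fun h => ⟨h, ?_⟩⟩
      rintro rfl
      exact hNmax h
    rw [heq]
    refine .attach _ P _ h hP (fun hin => hv' _ hin (.inl rfl)) ?_
    rintro R hR u ⟨rfl | hu, huR⟩
    · exact absurd huR (hv' R hR)
    · exact hNP hu

/-- The induction starts from `A = ∅`, whose only maximal clique is `∅`. -/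
lemma IsChordal.rip_maxCliquesIn [Finite V] {G : SimpleGraph V} (hG : IsChordal G) (A : Set V) :
    RIP (maxCliquesIn G A) := by
  induction A using WellFoundedLT.induction with
  | ind A ih =>
    rcases A.eq_empty_or_nonempty with rfl | hA
    · convert RIP.single (∅ : Set V) using 1
      ext Q
      refine ⟨fun hQ => Set.subset_empty_iff.1 (maximal_of_mem hQ).prop.1, ?_⟩
      rintro rfl
      exact ⟨⟨subset_rfl, by simp⟩, fun K hK _ => hK.1⟩
    · obtain ⟨v, hv⟩ := hG.exists_simplicialIn hA
      exact rip_maxCliquesIn_of_simplicialIn hv (ih _ (Set.sdiff_singleton_ssubset.2 hv.1))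

lemma maxCliquesIn_univ (G : SimpleGraph V) : maxCliquesIn G Set.univ = {Q | IsMaxClique G Q} := by
  ext Q
  exact ⟨fun h => ⟨(maximal_of_mem h).prop.2, fun R hR hQR => (maximal_of_mem h).eq_of_subset ⟨Set.subset_univ _, hR⟩ hQR⟩,
    fun h => ⟨⟨Set.subset_univ _, h.1⟩, fun R hR hQR => (h.2 R hR.2 hQR).ge⟩⟩

/-- A graph is chordal if and only if it has a clique tree. -/
theorem chordal_iff_cliqueTree [Fintype V] [Nonempty V] (G : SimpleGraph V) :
    IsChordal G ↔ Nonempty (CliqueTree G) := by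
  refine ⟨fun hG => ?_, fun ⟨C⟩ => C.isChordal⟩
  refine RIP.cliqueTree (maxCliquesIn_univ G ▸ hG.rip_maxCliquesIn Set.univ) fun v => ?_
  obtain ⟨Q, hQ, hvQ⟩ := exists_isMaxClique_superset G (K := {v}) (by simp)
  exact ⟨Q, hQ, hvQ rfl⟩
end

section
/- A chordal graph is an interval graph if and only if it contains no asteroidal triple. -/
/-! An interval graph has no asteroidal triple: among three disjoint intervals one lies between the
other two, and a walk joining these two has to meet it (`left_of_walk`).

For the converse, a stronger rooted statement (`rootedRep_of_no_triple`) is proved by induction on a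
vertex set `W`. Let `K ⊆ W` be a clique such that there are no non-adjacent `a`, `b` for which `a` is
reached from `K` by a walk in `W` avoiding the closed neighborhood `N[b]`, and `b` by one avoiding
`N[a]`. Then `G[W]` has an interval representation in which all intervals of `K` contain the left end
point. The theorem is the case `K = ∅`, `W = V`. There are three steps.

* If `K` is nonempty, the closed neighborhoods of its vertices are nested (`nested_root`). Starting
  from a representation rooted at the vertex `t ∈ K` with least `N[t]`, all of `K` can be extended to
  the left end (`RootedRep.extend_root`). So one may take `K = {t}`.
* If `K = {t}`, let `M` be the neighborhood of `t`, `F` the complement of `N[t]`, and `R` the set of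
  vertices of `M` with a neighbor in `F`. Any two vertices of `R` have a common neighbor in `F`
  (`common_far_neighbor`), so `R` is a clique, and both `(G[M], R)` and `(G[F ∪ R], R)` satisfy the
  induction hypothesis: a rooted triple in `M` would form an asteroidal triple together with a vertex
  of `F`. The two representations are glued along `R`, with `t` covering `M`.
* If `K = ∅` and `W` is not a clique, choose a vertex `x` and a component `C` of `G[W] - N[x]` with
  `C` as large as possible. Let `S` be the set of vertices outside `C` with a neighbor in `C`, and `X`
  the rest. Maximality of `C` makes every vertex of `X` adjacent to all of `S`. As there is no
  asteroidal triple, `S` is a clique and `(G[C ∪ S], S)` has no rooted triple, because `x` would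
  complete it to an asteroidal one. A representation of `G[X]` is placed to the left of one of
  `G[C ∪ S]` rooted at `S`, and `S` is extended over it.

Chordality enters only through the absence of induced cycles of length 4 and 5. -/


open SimpleGraph

variable {V : Type*}

/-- `Q` is a leaf of the subtree induced on `W`: it lies in `W` and has exactly one
neighbor in `W`. -/
def IsLeafIn (T : SimpleGraph α) (W : Set α) (Q : α) : Prop :=
  Q ∈ W ∧ ∃! R, R ∈ W ∧ T.Adj Q R

/-- `W` is a connected set of cliques of the clique tree `T` meeting each of the
subtrees `T^{z1}, T^{z2}, T^{z3}`. -/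
def IsConnector3 (G : SimpleGraph V) (T : CliqueTree G) (z1 z2 z3 : V)
    (W : Set (MaxClique G)) : Prop :=
  (T.tree.induce W).Connected ∧
    (∃ Q ∈ W, z1 ∈ Q.1) ∧ (∃ Q ∈ W, z2 ∈ Q.1) ∧ (∃ Q ∈ W, z3 ∈ Q.1)

/-- `W` is a connected set of cliques of the clique tree `T` meeting each of the
subtrees `T^{z1}, T^{z2}, T^{z3}, T^{z4}`. -/
def IsConnector4 (G : SimpleGraph V) (T : CliqueTree G) (z1 z2 z3 z4 : V)
    (W : Set (MaxClique G)) : Prop :=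
  (T.tree.induce W).Connected ∧
    (∃ Q ∈ W, z1 ∈ Q.1) ∧ (∃ Q ∈ W, z2 ∈ Q.1) ∧ (∃ Q ∈ W, z3 ∈ Q.1) ∧ (∃ Q ∈ W, z4 ∈ Q.1)

/-- An interval graph: the intersection graph of a family of (nonempty) closed
intervals of the real line. -/
def IsIntervalGraph (G : SimpleGraph V) : Prop :=
  ∃ a b : V → ℝ, (∀ v, a v ≤ b v) ∧
    ∀ u v : V, G.Adj u v ↔ u ≠ v ∧ (Set.Icc (a u) (b u) ∩ Set.Icc (a v) (b v)).Nonempty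

/-- The underlying tree of `T` is a path: every vertex has at most two neighbors. -/
def CliqueTree.IsCliquePath (G : SimpleGraph V) (T : CliqueTree G) : Prop :=
  ∀ Q a b c : MaxClique G, T.tree.Adj Q a → T.tree.Adj Q b → T.tree.Adj Q c →
    a = b ∨ a = c ∨ b = c

/-! ### Walks inside a vertex set -/

/-- `u` and `v` are joined by a walk all of whose vertices lie in `A`. -/
def Linked (G : SimpleGraph V) (A : Set V) (u v : V) : Prop :=
  ∃ p : G.Walk u v, ∀ x ∈ p.support, x ∈ A

/-- The complement of the closed neighborhood of `c`. -/
def away (G : SimpleGraph V) (c : V) : Set V := {v | v ≠ c ∧ ¬ G.Adj c v}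

namespace Linked

variable {G : SimpleGraph V} {A B : Set V} {u v w : V}

lemma refl (hu : u ∈ A) : Linked G A u u :=
  ⟨Walk.nil, by simpa using hu⟩

lemma symm : Linked G A u v → Linked G A v u := by
  rintro ⟨p, hp⟩
  exact ⟨p.reverse, by simpa using hp⟩

lemma trans : Linked G A u v → Linked G A v w → Linked G A u w := by
  rintro ⟨p, hp⟩ ⟨q, hq⟩
  refine ⟨p.append q, fun x hx => ?_⟩
  rcases (Walk.mem_support_append_iff p q).1 hx with h | h
  exacts [hp x h, hq x h]

lemma cons (hu : u ∈ A) (h : G.Adj u v) : Linked G A v w → Linked G A u w := by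
  rintro ⟨p, hp⟩
  refine ⟨Walk.cons h p, fun x hx => ?_⟩
  rw [Walk.support_cons, List.mem_cons] at hx
  rcases hx with rfl | hx
  exacts [hu, hp x hx]

lemma mono (h : A ⊆ B) : Linked G A u v → Linked G B u v := by
  rintro ⟨p, hp⟩
  exact ⟨p, fun x hx => h (hp x hx)⟩

lemma left_mem : Linked G A u v → u ∈ A := fun ⟨p, hp⟩ => hp _ p.start_mem_support

lemma right_mem : Linked G A u v → v ∈ A := fun ⟨p, hp⟩ => hp _ p.end_mem_support

/-- A walk inside `A` stays inside a single connected component of `A`. -/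
lemma component (h : Linked G A u v) : Linked G {x | Linked G A x v} u v := by
  classical
  obtain ⟨p, hp⟩ := h
  exact ⟨p, fun x hx => ⟨p.dropUntil x hx, fun y hy =>
    hp y (p.support_dropUntil_subset_support hx hy)⟩⟩

end Linked

/-! ### Intervals exclude asteroidal triples -/

/-- If a walk avoids the closed neighborhood of `m`, then its intervals all lie on the same side
of the interval of `m`. -/
lemma left_of_walk {G : SimpleGraph V} {a b : V → ℝ} (hab : ∀ v, a v ≤ b v)
    (hG : ∀ u v : V, G.Adj u v ↔ u ≠ v ∧ a u ≤ b v ∧ a v ≤ b u) {m u w : V} (p : G.Walk u w)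
    (hp : ∀ x ∈ p.support, x ≠ m ∧ ¬ G.Adj m x) (hu : b u < a m) : b w < a m := by
  induction p with
  | nil => exact hu
  | cons h p ih =>
    rename_i u v w
    refine ih (fun x hx => hp x (by simp [hx])) ?_
    have hv := hp v (by simp)
    have h1 := (hG _ _).1 h
    have h2 : ¬ (a m ≤ b v ∧ a v ≤ b m) := fun h => hv.2 ((hG _ _).2 ⟨hv.1.symm, h⟩)
    by_contra! h3
    exact h2 ⟨h3, by linarith [hab m]⟩

lemma no_asteroidal_of_interval {G : SimpleGraph V} (h : IsIntervalGraph G) (x y z : V) :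
    ¬ IsAsteroidalTriple G x y z := by
  obtain ⟨a, b, hab, hG'⟩ := h
  have hG : ∀ u v : V, G.Adj u v ↔ u ≠ v ∧ a u ≤ b v ∧ a v ≤ b u := by
    intro u v
    rw [hG', Set.Icc_inter_Icc, Set.nonempty_Icc]
    have := hab u
    have := hab v
    simp only [sup_le_iff, le_inf_iff]
    tauto
  rintro ⟨hxy, hyz, hxz, nxy, nyz, nxz, ⟨p, hp⟩, ⟨q, hq⟩, ⟨r, hr⟩⟩
  have p1 := left_of_walk hab hG p hp
  have p2 := left_of_walk hab hG p.reverse (by simpa using hp)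
  have q1 := left_of_walk hab hG q hq
  have q2 := left_of_walk hab hG q.reverse (by simpa using hq)
  have r1 := left_of_walk hab hG r hr
  have r2 := left_of_walk hab hG r.reverse (by simpa using hr)
  have := hab x
  have := hab y
  have := hab z
  rw [hG] at nxy nyz nxz
  grind

/-! ### Short induced cycles -/

/-- A 4-cycle in a chordal graph has a chord. -/
lemma IsChordal.four {G : SimpleGraph V} (hG : IsChordal G) {a b c d : V} (hab : G.Adj a b)
    (hbc : G.Adj b c) (hcd : G.Adj c d) (hda : G.Adj d a) (hac : a ≠ c) (hbd : b ≠ d) :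
    G.Adj a c ∨ G.Adj b d := by
  by_contra! hn
  refine (hG 4 le_rfl).false ⟨⟨![a, b, c, d], ?_⟩, ?_⟩
  · intro i j hij
    have := hab.ne; have := hbc.ne; have := hcd.ne; have := hda.ne
    fin_cases i <;> fin_cases j <;> simp_all
  · intro i j
    have := hab.symm; have := hbc.symm; have := hcd.symm; have := hda.symm
    have h1 := hn.1; have h2 := hn.2
    rw [G.adj_comm] at h1 h2
    have key : ∀ i j : Fin 4, (cycleGraph 4).Adj i j ↔
        (j.val = (i.val + 1) % 4 ∨ i.val = (j.val + 1) % 4) := by decide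
    rw [key]
    change G.Adj (![a, b, c, d] i) (![a, b, c, d] j) ↔ _
    fin_cases i <;> fin_cases j <;> simp [*]

/-- There is no chordless 5-cycle. That its vertices are distinct follows from the absence of
chords. -/
lemma IsChordal.five {G : SimpleGraph V} (hG : IsChordal G) {a b c d e : V} (hab : G.Adj a b)
    (hbc : G.Adj b c) (hcd : G.Adj c d) (hde : G.Adj d e) (hea : G.Adj e a)
    (hac : ¬ G.Adj a c) (had : ¬ G.Adj a d) (hbd : ¬ G.Adj b d) (hbe : ¬ G.Adj b e)
    (hce : ¬ G.Adj c e) : False := by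
  have hne : a ≠ c ∧ a ≠ d ∧ b ≠ d ∧ b ≠ e ∧ c ≠ e := by
    refine ⟨?_, ?_, ?_, ?_, ?_⟩ <;> rintro rfl <;> simp_all [G.adj_comm]
  refine (hG 5 (by norm_num)).false ⟨⟨![a, b, c, d, e], ?_⟩, ?_⟩
  · intro i j hij
    have := hab.ne; have := hbc.ne; have := hcd.ne; have := hde.ne; have := hea.ne
    fin_cases i <;> fin_cases j <;> simp_all
  · intro i j
    have := hab.symm; have := hbc.symm; have := hcd.symm; have := hde.symm; have := hea.symm
    have h1 := hac; have h2 := had; have h3 := hbd; have h4 := hbe; have h5 := hce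
    rw [G.adj_comm] at h1 h2 h3 h4 h5
    have key : ∀ i j : Fin 5, (cycleGraph 5).Adj i j ↔
        (j.val = (i.val + 1) % 5 ∨ i.val = (j.val + 1) % 5) := by decide
    rw [key]
    change G.Adj (![a, b, c, d, e] i) (![a, b, c, d, e] j) ↔ _
    fin_cases i <;> fin_cases j <;> simp [*]

/-! ### Rooted interval representations and gluing -/

/-- An interval representation `v ↦ [l v, r v]` of `G[W]` inside `[0, B]` for some `B`, in which
the intervals of all vertices of `K` start at the left end `0`. -/
def RootedRep (G : SimpleGraph V) (W K : Finset V) : Prop :=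
  ∃ (l r : V → ℝ) (B : ℝ), 0 ≤ B ∧ (∀ v ∈ W, 0 ≤ l v ∧ l v ≤ r v ∧ r v ≤ B) ∧
    (∀ u ∈ W, ∀ v ∈ W, u ≠ v → (G.Adj u v ↔ l u ≤ r v ∧ l v ≤ r u)) ∧ ∀ k ∈ K, l k = 0

/-- `a` and `b` are non-adjacent vertices of `W`, and each of them can be reached from `K` by a
walk in `W` that avoids the closed neighborhood of the other. This prevents a representation
of `G[W]` in which the clique `K` is at the left end. -/
def RootedTriple (G : SimpleGraph V) (W K : Finset V) (a b : V) : Prop :=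
  a ≠ b ∧ ¬ G.Adj a b ∧
  (∃ s ∈ K, Linked G (↑W ∩ away G b) s a) ∧ (∃ s ∈ K, Linked G (↑W ∩ away G a) s b)

/-- Let `M` be the neighborhood of `t`, `F` the set of vertices outside its closed neighborhood, and
`R ⊆ M` the set of neighbors of `t` with a neighbor in `F`. Reflecting a representation of `G[M]`
moves `R` to its right end, where it can be continued by a representation of `G[F ∪ R]` starting
with `R`; the interval of `t` is the stretch occupied by `M`. -/
lemma RootedRep.glue_star [DecidableEq V] {G : SimpleGraph V} {W M F R : Finset V} {t : V}
    (hM : ∀ v, v ∈ M ↔ v ∈ W ∧ G.Adj t v) (hF : ∀ v, v ∈ F ↔ v ∈ W ∧ v ≠ t ∧ ¬ G.Adj t v)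
    (hR : ∀ v, v ∈ R ↔ v ∈ M ∧ ∃ f ∈ F, G.Adj v f)
    (h1 : RootedRep G M R) (h2 : RootedRep G (F ∪ R) R) : RootedRep G W {t} := by
  classical
  obtain ⟨l₁, r₁, B₁, hB₁, hb₁, ha₁, hk₁⟩ := h1
  obtain ⟨l₂, r₂, B₂, hB₂, hb₂, ha₂, hk₂⟩ := h2
  have htM : t ∉ M := by simp [hM]
  have htF : t ∉ F := by simp [hF]
  have hRM : ∀ v ∈ R, v ∈ M := fun v hv => ((hR v).1 hv).1
  have htR : t ∉ R := fun h => htM (hRM t h)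
  have hcov : ∀ v ∈ W, v = t ∨ (v ∈ R ∧ v ∈ M ∧ v ∉ F ∧ v ≠ t) ∨
      (v ∈ M ∧ v ∉ R ∧ v ∉ F ∧ v ≠ t) ∨ (v ∈ F ∧ v ∉ M ∧ v ∉ R ∧ v ≠ t) := by
    intro v hv
    have := hM v; have := hF v; have := hRM v
    have := G.irrefl (v := t)
    grind
  have hMt : ∀ v ∈ M, G.Adj t v ∧ G.Adj v t := fun v hv =>
    ⟨((hM v).1 hv).2, ((hM v).1 hv).2.symm⟩
  have hFt : ∀ v ∈ F, ¬ G.Adj t v ∧ ¬ G.Adj v t := fun v hv =>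
    ⟨((hF v).1 hv).2.2, fun h => ((hF v).1 hv).2.2 h.symm⟩
  have hMF : ∀ v ∈ M, v ∉ R → ∀ f ∈ F, ¬ G.Adj v f ∧ ¬ G.Adj f v := fun v hv hvR f hf =>
    ⟨fun h => hvR ((hR v).2 ⟨hv, f, hf, h⟩), fun h => hvR ((hR v).2 ⟨hv, f, hf, h.symm⟩)⟩
  clear hM hF hR
  -- the intervals of `M` are reflected, so that those of `R` end at `B₁`
  refine ⟨fun v => if v ∈ M then B₁ - r₁ v else if v ∈ F then B₁ + 1 + l₂ v else 0,
    fun v => if v ∈ F ∪ R then B₁ + 1 + r₂ v else if v ∈ M then B₁ - l₁ v else B₁,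
    B₁ + 1 + B₂, by linarith, ?_, ?_, ?_⟩
  · intro v hv
    have h1 := hb₁ v
    have h2 := hb₂ v
    simp only [Finset.mem_union] at h2 ⊢
    rcases hcov v hv with rfl | hv | hv | hv <;> clear hcov hRM <;> grind
  · intro u hu v hv huv
    have hu1 := hb₁ u
    have hu2 := hb₂ u
    have hv1 := hb₁ v
    have hv2 := hb₂ v
    have a1 := ha₁ u
    have a2 := ha₂ u
    have ku1 := hk₁ u
    have ku2 := hk₂ u
    have kv1 := hk₁ v
    have kv2 := hk₂ v
    have mu := hMt u
    have mv := hMt v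
    have fu := hFt u
    have fv := hFt v
    have su := hMF u
    have sv := hMF v
    simp only [Finset.mem_union] at hu2 hv2 a2 ⊢
    clear hb₁ hb₂ ha₁ ha₂ hk₁ hk₂ hMt hFt hMF
    rcases hcov u hu with rfl | hu | hu | hu <;> rcases hcov v hv with rfl | hv | hv | hv <;>
      clear hcov hRM <;> grind
  · simp [htM, htF]

/-- A representation of `X` can be put to the left of a representation of `C ∪ S` with the clique
`S` at its left end, the intervals of `S` being extended over all of `X`. -/
lemma RootedRep.glue_join [DecidableEq V] {G : SimpleGraph V} {W X C S : Finset V}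
    (hW : W = X ∪ (C ∪ S)) (hXC : Disjoint X C) (hXS : Disjoint X S) (hCS : Disjoint C S)
    (hXC' : ∀ x ∈ X, ∀ c ∈ C, ¬ G.Adj x c) (hXS' : ∀ x ∈ X, ∀ s ∈ S, G.Adj x s)
    (h1 : RootedRep G X ∅) (h2 : RootedRep G (C ∪ S) S) : RootedRep G W ∅ := by
  classical
  obtain ⟨l₁, r₁, B₁, hB₁, hb₁, ha₁, hk₁⟩ := h1
  obtain ⟨l₂, r₂, B₂, hB₂, hb₂, ha₂, hk₂⟩ := h2
  have hcov : ∀ v ∈ W, (v ∈ X ∧ v ∉ C ∧ v ∉ S) ∨ (v ∈ C ∧ v ∉ X ∧ v ∉ S) ∨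
      (v ∈ S ∧ v ∉ X ∧ v ∉ C) := by
    intro v hv
    have := @Finset.disjoint_left _ X C
    have := @Finset.disjoint_left _ X S
    have := @Finset.disjoint_left _ C S
    grind
  refine ⟨fun v => if v ∈ X then l₁ v else if v ∈ C then B₁ + 1 + l₂ v else 0,
    fun v => if v ∈ X then r₁ v else B₁ + 1 + r₂ v, B₁ + 1 + B₂, by linarith, ?_, ?_, by simp⟩
  · intro v hv
    have h1 := hb₁ v
    have h2 := hb₂ v
    simp only [Finset.mem_union] at h2 ⊢
    grind
  · intro u hu v hv huv
    have hu1 := hb₁ u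
    have hu2 := hb₂ u
    have hv1 := hb₁ v
    have hv2 := hb₂ v
    have a1 := ha₁ u
    have a2 := ha₂ u
    have ku2 := hk₂ u
    have kv2 := hk₂ v
    have := G.adj_comm u v
    have := hXC' u
    have := hXC' v
    have := hXS' u
    have := hXS' v
    simp only [Finset.mem_union] at hu2 hv2 a2 ⊢
    rcases hcov u hu with hu | hu | hu <;> rcases hcov v hv with hv | hv | hv <;>
      clear hcov <;> grind

/-- If `t` is a vertex of the clique `K` with least closed neighborhood, then a representation
starting with `t` can be altered to one starting with all of `K`: no vertex lying to the left of
some `s ∈ K` is disjoint from `t`. -/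
lemma RootedRep.extend_root {G : SimpleGraph V} {W K : Finset V} {t : V} (ht : t ∈ K) (hKW : K ⊆ W)
    (hK : G.IsClique (K : Set V))
    (hmin : ∀ s ∈ K, ∀ v ∈ W, G.Adj t v → v ≠ s → G.Adj s v)
    (h : RootedRep G W {t}) : RootedRep G W K := by
  classical
  obtain ⟨l, r, B, hB, hb, ha, hk⟩ := h
  have hk : l t = 0 := hk t (by simp)
  refine ⟨fun v => if v ∈ K then 0 else l v, r, B, hB, ?_, ?_, fun k hk => by simp [hk]⟩
  · intro v hv
    have := hb v hv
    grind
  · have key : ∀ s ∈ K, ∀ v ∈ W, v ∉ K → (G.Adj s v ↔ 0 ≤ r v ∧ l v ≤ r s) := by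
      intro s hs v hv hvK
      have hsv : s ≠ v := fun h => hvK (h ▸ hs)
      have htv : t ≠ v := fun h => hvK (h ▸ ht)
      rw [ha s (hKW hs) v hv hsv]
      refine ⟨fun h => ⟨by linarith [hb v hv], h.2⟩, fun h => ⟨?_, h.2⟩⟩
      by_contra! hlt
      have hst : l s ≤ r t := by
        rcases eq_or_ne s t with rfl | hne
        · exact (hb s (hKW hs)).2.1
        · exact ((ha s (hKW hs) t (hKW ht) hne).1 (hK hs ht hne)).1
      have h1 : G.Adj t v :=
        (ha t (hKW ht) v hv htv).2 ⟨by linarith [hb v hv], by linarith [hb v hv]⟩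
      have h2 := hmin s hs v hv h1 hsv.symm
      rw [ha s (hKW hs) v hv hsv] at h2
      linarith
    intro u hu v hv huv
    by_cases huK : u ∈ K <;> by_cases hvK : v ∈ K
    · simp only [huK, hvK, if_true]
      have := hb u hu
      have := hb v hv
      exact ⟨fun _ => ⟨by linarith, by linarith⟩, fun _ => hK huK hvK huv⟩
    · simp only [huK, hvK, if_true, if_false]
      exact key u huK v hv hvK
    · simp only [huK, hvK, if_true, if_false]
      rw [G.adj_comm, key v hvK u hu huK, and_comm]
    · simp only [huK, hvK, if_false]
      exact ha u hu v hv huv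

/-! ### The inductive step for a nonempty root -/

/-- In the absence of rooted triples, the closed neighborhoods of the vertices of a root clique are
nested. -/
lemma nested_root {G : SimpleGraph V} (hG : IsChordal G) {W K : Finset V} (hKW : K ⊆ W)
    (hK : G.IsClique (K : Set V)) (hroot : ∀ a b, ¬ RootedTriple G W K a b)
    {s t a b : V} (hs : s ∈ K) (ht : t ∈ K) (ha : a ∈ W) (hb : b ∈ W)
    (hsa : G.Adj s a) (hta : ¬ G.Adj t a) (hat : a ≠ t) (htb : G.Adj t b) (hsb : ¬ G.Adj s b)
    (hbs : b ≠ s) : False := by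
  have hst : s ≠ t := by rintro rfl; exact hta hsa
  have hadj := hK hs ht hst
  have hab : a ≠ b := by rintro rfl; exact hta htb
  have hnab : ¬ G.Adj a b := fun h => by
    rcases hG.four hsa h htb.symm hadj.symm hbs.symm hat with h | h
    · exact hsb h
    · exact hta h.symm
  have hnab' : ¬ G.Adj b a := fun h => hnab h.symm
  refine hroot a b ⟨hab, hnab, ⟨s, hs, ?_⟩, ⟨t, ht, ?_⟩⟩
  · exact .cons ⟨hKW hs, hbs.symm, fun h => hsb h.symm⟩ hsa (.refl ⟨ha, hab, hnab'⟩)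
  · exact .cons ⟨hKW ht, hat.symm, fun h => hta h.symm⟩ htb (.refl ⟨hb, hab.symm, hnab⟩)

/-- In the absence of triples rooted at `t`, two neighbors `r`, `r'` of `t` that both have neighbors
outside the closed neighborhood of `t` have such a neighbor in common. If `r` and `r'` were not
adjacent, it would close a 4-cycle with `t`; so such vertices form a clique. -/
lemma common_far_neighbor {G : SimpleGraph V} (hG : IsChordal G) {W : Finset V} {t : V}
    (htW : t ∈ W) (hroot : ∀ a b, ¬ RootedTriple G W {t} a b) {r r' f f' : V}
    (hr : r ∈ W) (hr' : r' ∈ W) (hf : f ∈ W) (hf' : f' ∈ W) (htr : G.Adj t r) (htr' : G.Adj t r')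
    (hft : f ∈ away G t) (hft' : f' ∈ away G t) (hrf : G.Adj r f) (hrf' : G.Adj r' f') :
    G.Adj r' f ∨ G.Adj r f' := by
  by_contra! hn
  have hff : f ≠ f' := by rintro rfl; exact hn.1 hrf'
  have hrr : r ≠ r' := by rintro rfl; exact hn.1 hrf
  have hnff : ¬ G.Adj f f' := fun h => by
    by_cases hadj : G.Adj r r'
    · rcases hG.four hrf h hrf'.symm hadj.symm
        (by rintro rfl; exact hft'.2 htr) (by rintro rfl; exact hft.2 htr') with h | h
      · exact hn.2 h
      · exact hn.1 h.symm
    · exact hG.five htr hrf h hrf'.symm htr'.symm hft.2 hft'.2 hn.2 hadj fun h => hn.1 h.symm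
  refine hroot f f' ⟨hff, hnff, ⟨t, by simp, ?_⟩, ⟨t, by simp, ?_⟩⟩
  · exact .cons ⟨htW, hft'.1.symm, fun h => hft'.2 h.symm⟩ htr
      (.cons ⟨hr, by rintro rfl; exact hft'.2 htr, fun h => hn.2 h.symm⟩ hrf
        (.refl ⟨hf, hff, fun h => hnff h.symm⟩))
  · exact .cons ⟨htW, hft.1.symm, fun h => hft.2 h.symm⟩ htr'
      (.cons ⟨hr', by rintro rfl; exact hft.2 htr', fun h => hn.1 h.symm⟩ hrf'
        (.refl ⟨hf', hff.symm, hnff⟩))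

/-- A one-vertex root `{t}`: the graph is cut along the neighbors of `t` that have a neighbor outside
the closed neighborhood of `t`. They form a clique, by `common_far_neighbor`, and this clique serves
as the root of both parts. -/
lemma rootedRep_singleton {G : SimpleGraph V} (hG : IsChordal G)
    (hAT : ∀ a b c : V, ¬ IsAsteroidalTriple G a b c) {W : Finset V}
    (ih : ∀ W' ⊂ W, ∀ K ⊆ W', G.IsClique (K : Set V) → (∀ a b, ¬ RootedTriple G W' K a b) →
      RootedRep G W' K)
    {t : V} (htW : t ∈ W) (hroot : ∀ a b, ¬ RootedTriple G W {t} a b) : RootedRep G W {t} := by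
  classical
  set M := W.filter (G.Adj t) with hMdef
  set F := W.filter (fun v => v ≠ t ∧ ¬ G.Adj t v) with hFdef
  set R := M.filter (fun v => ∃ f ∈ F, G.Adj v f) with hRdef
  have hM : ∀ v, v ∈ M ↔ v ∈ W ∧ G.Adj t v := by simp [hMdef]
  have hF : ∀ v, v ∈ F ↔ v ∈ W ∧ v ≠ t ∧ ¬ G.Adj t v := by simp [hFdef]
  have hR : ∀ v, v ∈ R ↔ v ∈ M ∧ ∃ f ∈ F, G.Adj v f := by simp [hRdef]
  have common : ∀ r ∈ R, ∀ r' ∈ R, ∃ f ∈ F, G.Adj r f ∧ G.Adj r' f := by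
    intro r hr r' hr'
    obtain ⟨hrM, f, hfF, hrf⟩ := (hR r).1 hr
    obtain ⟨hrM', f', hfF', hrf'⟩ := (hR r').1 hr'
    have a1 := (hM _).1 hrM
    have a2 := (hM _).1 hrM'
    have b1 := (hF _).1 hfF
    have b2 := (hF _).1 hfF'
    rcases common_far_neighbor hG htW hroot a1.1 a2.1 b1.1 b2.1 a1.2 a2.2 b1.2 b2.2 hrf hrf'
      with h | h
    · exact ⟨f, hfF, hrf, h⟩
    · exact ⟨f', hfF', h, hrf'⟩
  have hRcl : G.IsClique (R : Set V) := by
    intro r hr r' hr' hne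
    obtain ⟨f, hf, h1, h2⟩ := common r hr r' hr'
    have a1 := (hM _).1 ((hR r).1 hr).1
    have a2 := (hM _).1 ((hR r').1 hr').1
    have b := (hF _).1 hf
    exact (hG.four a1.2 h1 h2.symm a2.2.symm b.2.1.symm hne).resolve_left b.2.2
  have hRM : R ⊆ M := Finset.filter_subset _ _
  have htM : t ∉ M := by simp [hM]
  have htFR : t ∉ F ∪ R := by
    simp only [Finset.mem_union, not_or]
    exact ⟨by simp [hF], fun h => htM (hRM h)⟩
  have hMW : M ⊆ W := Finset.filter_subset _ _
  have hFRW : F ∪ R ⊆ W := Finset.union_subset (Finset.filter_subset _ _) (hRM.trans hMW)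
  refine RootedRep.glue_star hM hF hR (ih M ?_ R hRM hRcl ?_)
    (ih (F ∪ R) ?_ R Finset.subset_union_right hRcl ?_)
  · exact (Finset.ssubset_iff_of_subset hMW).2 ⟨t, htW, htM⟩
  · -- a common far neighbor `f` completes `a, b` to an asteroidal triple, as `a, t, b` is a path
    rintro a b ⟨hab, hnab, ⟨r, hr, hra⟩, ⟨r', hr', hrb⟩⟩
    obtain ⟨f, hf, h1, h2⟩ := common r hr r' hr'
    have hf' := (hF f).1 hf
    have ha := (hM a).1 hra.right_mem.1
    have hb := (hM b).1 hrb.right_mem.1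
    have haR : a ∉ R := fun h => by
      have := hrb.left_mem.2
      exact this.2 (hRcl h hr' this.1.symm)
    have hbR : b ∉ R := fun h => by
      have := hra.left_mem.2
      exact this.2 (hRcl h hr this.1.symm)
    have hnaf : ¬ G.Adj a f := fun h => haR ((hR a).2 ⟨hra.right_mem.1, f, hf, h⟩)
    have hnbf : ¬ G.Adj b f := fun h => hbR ((hR b).2 ⟨hrb.right_mem.1, f, hf, h⟩)
    have haf : a ≠ f := by rintro rfl; exact hf'.2.2 ha.2
    have hbf : b ≠ f := by rintro rfl; exact hf'.2.2 hb.2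
    refine hAT a b f ⟨hab, hbf, haf, hnab, hnbf, hnaf, ?_, ?_, ?_⟩
    · exact Linked.cons (A := away G f) ⟨haf, fun h => hnaf h.symm⟩ ha.2.symm
        (.cons ⟨hf'.2.1.symm, fun h => hf'.2.2 h.symm⟩ hb.2 (.refl ⟨hbf, fun h => hnbf h.symm⟩))
    · exact (Linked.cons (A := away G a) ⟨haf.symm, hnaf⟩ h2.symm
        (hrb.mono Set.inter_subset_right)).symm
    · exact (Linked.cons (A := away G b) ⟨hbf.symm, hnbf⟩ h1.symm
        (hra.mono Set.inter_subset_right)).symm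
  · exact (Finset.ssubset_iff_of_subset hFRW).2 ⟨t, htW, htFR⟩
  · rintro a b ⟨hab, hnab, ⟨r, hr, hra⟩, ⟨r', hr', hrb⟩⟩
    have haF : a ∈ F := (Finset.mem_union.1 hra.right_mem.1).resolve_right fun h => by
      have := hrb.left_mem.2
      exact this.2 (hRcl h hr' this.1.symm)
    have hbF : b ∈ F := (Finset.mem_union.1 hrb.right_mem.1).resolve_right fun h => by
      have := hra.left_mem.2
      exact this.2 (hRcl h hr this.1.symm)
    have ha := (hF a).1 haF
    have hb := (hF b).1 hbF
    refine hroot a b ⟨hab, hnab, ⟨t, by simp, ?_⟩, ⟨t, by simp, ?_⟩⟩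
    · exact .cons ⟨htW, hb.2.1.symm, fun h => hb.2.2 h.symm⟩ ((hM _).1 (hRM hr)).2
        (hra.mono (Set.inter_subset_inter_left _ (by exact_mod_cast hFRW)))
    · exact .cons ⟨htW, ha.2.1.symm, fun h => ha.2.2 h.symm⟩ ((hM _).1 (hRM hr')).2
        (hrb.mono (Set.inter_subset_inter_left _ (by exact_mod_cast hFRW)))

/-- A nonempty root clique is reduced to one of its vertices, chosen with least closed neighborhood;
by `nested_root` that neighborhood is contained in the others. -/
lemma rootedRep_of_nonempty {G : SimpleGraph V} (hG : IsChordal G)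
    (hAT : ∀ a b c : V, ¬ IsAsteroidalTriple G a b c) {W : Finset V}
    (ih : ∀ W' ⊂ W, ∀ K ⊆ W', G.IsClique (K : Set V) → (∀ a b, ¬ RootedTriple G W' K a b) →
      RootedRep G W' K)
    {K : Finset V} (hne : K.Nonempty) (hKW : K ⊆ W) (hK : G.IsClique (K : Set V))
    (hroot : ∀ a b, ¬ RootedTriple G W K a b) : RootedRep G W K := by
  classical
  obtain ⟨t, ht, hmin⟩ := Finset.exists_min_image K
    (fun s => (W.filter (fun v => v = s ∨ G.Adj s v)).card) hne
  have hroot' : ∀ a b, ¬ RootedTriple G W {t} a b := by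
    rintro a b ⟨hab, hnab, ⟨s, hs, h⟩, ⟨s', hs', h'⟩⟩
    rw [Finset.mem_singleton] at hs hs'
    subst hs hs'
    exact hroot a b ⟨hab, hnab, ⟨_, ht, h⟩, ⟨_, ht, h'⟩⟩
  refine RootedRep.extend_root ht hKW hK ?_ (rootedRep_singleton hG hAT ih (hKW ht) hroot')
  intro s hs v hv htv hvs
  by_contra hsv
  have hts : t ≠ s := by rintro rfl; exact hsv htv
  -- otherwise the closed neighborhood of `s` would be strictly smaller than that of `t`
  refine absurd (hmin s hs) (not_le.2 (Finset.card_lt_card ?_))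
  refine (Finset.ssubset_iff_of_subset fun a ha => ?_).2 ⟨v, ?_, ?_⟩
  · rw [Finset.mem_filter] at ha ⊢
    refine ⟨ha.1, ?_⟩
    by_contra! hn
    rcases ha.2 with rfl | hsa
    · exact hn.2 (hK ht hs hts)
    · exact nested_root hG hKW hK hroot hs ht ha.1 hv hsa hn.2 hn.1 htv hsv hvs
  · simp [hv, htv]
  · simp [hvs, hsv]

/-! ### The inductive step for an empty root -/

/-- Cutting along the boundary `S` of a largest component `C` of the complement of a closed
neighborhood. Largeness forces the vertices beyond `S` to be adjacent to all of `S`. -/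
lemma rootedRep_empty {G : SimpleGraph V} (hG : IsChordal G)
    (hAT : ∀ a b c : V, ¬ IsAsteroidalTriple G a b c) {W : Finset V}
    (ih : ∀ W' ⊂ W, ∀ K ⊆ W', G.IsClique (K : Set V) → (∀ a b, ¬ RootedTriple G W' K a b) →
      RootedRep G W' K) : RootedRep G W ∅ := by
  classical
  by_cases hcl : G.IsClique (W : Set V)
  · refine ⟨fun _ => 0, fun _ => 0, 0, le_rfl, by simp, ?_, by simp⟩
    intro u hu v hv huv
    simpa using hcl hu hv huv
  let comp : V → V → Finset V := fun x c => W.filter (fun v => Linked G (↑W ∩ away G x) v c)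
  have hcomp : ∀ x c v, v ∈ comp x c ↔ Linked G (↑W ∩ away G x) v c := by
    intro x c v
    simp only [comp, Finset.mem_filter, and_iff_right_iff_imp]
    exact fun h => h.left_mem.1
  let P : Finset (V × V) := (W ×ˢ W).filter (fun q => q.2 ∈ away G q.1)
  have hP : ∀ x c, (x, c) ∈ P ↔ (x ∈ W ∧ c ∈ W) ∧ c ∈ away G x := by
    intro x c
    simp [P]
  have hPne : P.Nonempty := by
    simp only [SimpleGraph.IsClique, Set.Pairwise] at hcl
    push Not at hcl
    obtain ⟨x, hx, c, hc, hxc, hn⟩ := hcl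
    exact ⟨(x, c), (hP x c).2 ⟨⟨hx, hc⟩, hxc.symm, hn⟩⟩
  obtain ⟨⟨x, c⟩, hxc, hmax⟩ := Finset.exists_max_image P (fun q => (comp q.1 q.2).card) hPne
  obtain ⟨⟨hxW, hcW⟩, hcx⟩ := (hP x c).1 hxc
  set C := comp x c with hC
  have hcC : c ∈ C := (hcomp _ _ _).2 (.refl ⟨hcW, hcx⟩)
  have hCW : C ⊆ W := Finset.filter_subset _ _
  have hCx : ∀ v ∈ C, v ∈ away G x := fun v hv => ((hcomp _ _ _).1 hv).left_mem.2
  set S := W.filter (fun s => s ∉ C ∧ ∃ v ∈ C, G.Adj s v) with hSdef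
  have hS : ∀ s, s ∈ S ↔ s ∈ W ∧ s ∉ C ∧ ∃ v ∈ C, G.Adj s v := by simp [hSdef]
  set X := W.filter (fun y => y ∉ C ∧ ∀ v ∈ C, ¬ G.Adj y v) with hXdef
  have hX : ∀ y, y ∈ X ↔ y ∈ W ∧ y ∉ C ∧ ∀ v ∈ C, ¬ G.Adj y v := by simp [hXdef]
  have hxX : x ∈ X := (hX x).2 ⟨hxW, fun h => (hCx x h).1 rfl, fun v hv => (hCx v hv).2⟩
  -- any two vertices of `C` are joined inside `C`
  have hCC : ∀ v ∈ C, Linked G (C : Set V) v c := by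
    intro v hv
    refine ((hcomp _ _ _).1 hv).component.mono fun u hu => ?_
    exact (hcomp _ _ _).2 hu
  have hXS : ∀ y ∈ X, ∀ s ∈ S, G.Adj y s := by
    intro y hy s hs
    obtain ⟨hyW, hyC, hyn⟩ := (hX y).1 hy
    obtain ⟨hsW, hsC, v, hv, hsv⟩ := (hS s).1 hs
    by_contra hn
    have hsub : (C : Set V) ⊆ ↑W ∩ away G y := fun u hu =>
      ⟨hCW hu, fun h => hyC (h ▸ hu), hyn u hu⟩
    have hCsub : C ⊆ comp y c := fun u hu => (hcomp _ _ _).2 ((hCC u hu).mono hsub)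
    have heq : C = comp y c := Finset.eq_of_subset_of_card_le hCsub
      (hmax (y, c) ((hP y c).2 ⟨⟨hyW, hcW⟩, (hsub hcC).2⟩))
    refine hsC (heq ▸ (hcomp _ _ _).2 ?_)
    exact .cons ⟨hsW, by rintro rfl; exact hyn v hv hsv, hn⟩ hsv ((hCC v hv).mono hsub)
  have hlink : ∀ u ∈ C, ∀ v ∈ C, Linked G (away G x) u v := fun u hu v hv =>
    ((hCC u hu).trans (hCC v hv).symm).mono hCx
  have hSC : Disjoint C S := Finset.disjoint_right.2 fun s hs => ((hS s).1 hs).2.1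
  have hScl : G.IsClique (S : Set V) := by
    intro s hs s' hs' hne
    obtain ⟨hsW, hsC, v, hv, hsv⟩ := (hS s).1 hs
    obtain ⟨hsW', hsC', v', hv', hsv'⟩ := (hS s').1 hs'
    by_contra hn
    have hxs := hXS x hxX s hs
    have hxs' := hXS x hxX s' hs'
    have hx := hCx v hv
    have hx' := hCx v' hv'
    -- otherwise `x, v, v'` is an asteroidal triple
    have h1 : ¬ G.Adj s' v := fun h =>
      (hG.four hxs hsv h.symm hxs'.symm hx.1.symm hne).elim hx.2 hn
    have h2 : ¬ G.Adj s v' := fun h =>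
      (hG.four hxs h hsv'.symm hxs'.symm hx'.1.symm hne).elim hx'.2 hn
    have hvv : v ≠ v' := by rintro rfl; exact h1 hsv'
    have h3 : ¬ G.Adj v v' := fun h =>
      hG.five hxs hsv h hsv'.symm hxs'.symm hx.2 hx'.2 h2 hn fun h => h1 h.symm
    refine hAT x v v' ⟨hx.1.symm, hvv, hx'.1.symm, hx.2, h3, hx'.2, ?_, hlink v hv v' hv', ?_⟩
    · exact Linked.cons (A := away G v') ⟨hx'.1.symm, fun h => hx'.2 h.symm⟩ hxs
        (.cons ⟨by rintro rfl; exact hsC hv', fun h => h2 h.symm⟩ hsv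
          (.refl ⟨hvv, fun h => h3 h.symm⟩))
    · exact Linked.cons (A := away G v) ⟨hx.1.symm, fun h => hx.2 h.symm⟩ hxs'
        (.cons ⟨by rintro rfl; exact hsC' hv, fun h => h1 h.symm⟩ hsv'
          (.refl ⟨hvv.symm, h3⟩))
  have hXC : Disjoint X C := Finset.disjoint_left.2 fun y hy => ((hX y).1 hy).2.1
  have hXS' : Disjoint X S := Finset.disjoint_left.2 fun y hy hy' => by
    obtain ⟨_, _, v, hv, h⟩ := (hS y).1 hy'
    exact ((hX y).1 hy).2.2 v hv h
  have hW : W = X ∪ (C ∪ S) := by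
    ext v
    have := @hCW v
    simp only [Finset.mem_union, hX, hS]
    by_cases h : ∃ w ∈ C, G.Adj v w
    · tauto
    · push Not at h
      tauto
  have hCSW : C ∪ S ⊆ W := hW ▸ Finset.subset_union_right
  refine RootedRep.glue_join hW hXC hXS' hSC (fun y hy => ((hX y).1 hy).2.2) hXS
    (ih X ?_ ∅ (by simp) (by simp) ?_)
    (ih (C ∪ S) ?_ S Finset.subset_union_right hScl ?_)
  · exact (Finset.ssubset_iff_of_subset (Finset.filter_subset _ _)).2
      ⟨c, hcW, fun h => Finset.disjoint_left.1 hXC h hcC⟩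
  · rintro a b ⟨_, _, ⟨s, hs, _⟩, _⟩
    simp at hs
  · refine (Finset.ssubset_iff_of_subset hCSW).2 ⟨x, hxW, fun h => ?_⟩
    rcases Finset.mem_union.1 h with h | h
    · exact Finset.disjoint_left.1 hXC hxX h
    · exact Finset.disjoint_left.1 hXS' hxX h
  · -- `x` completes a rooted triple to an asteroidal triple
    rintro a b ⟨hab, hnab, ⟨r, hr, hra⟩, ⟨r', hr', hrb⟩⟩
    have haC : a ∈ C := (Finset.mem_union.1 hra.right_mem.1).resolve_right fun h => by
      have := hrb.left_mem.2
      exact this.2 (hScl h hr' this.1.symm)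
    have hbC : b ∈ C := (Finset.mem_union.1 hrb.right_mem.1).resolve_right fun h => by
      have := hra.left_mem.2
      exact this.2 (hScl h hr this.1.symm)
    have ha := hCx a haC
    have hb := hCx b hbC
    refine hAT x a b ⟨ha.1.symm, hab, hb.1.symm, ha.2, hnab, hb.2, ?_, hlink a haC b hbC, ?_⟩
    · exact Linked.cons (A := away G b) ⟨hb.1.symm, fun h => hb.2 h.symm⟩ (hXS x hxX r hr)
        (hra.mono Set.inter_subset_right)
    · exact Linked.cons (A := away G a) ⟨ha.1.symm, fun h => ha.2 h.symm⟩ (hXS x hxX r' hr')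
        (hrb.mono Set.inter_subset_right)

/-- The rooted form of the hard implication, which is what the induction on `W` proves. For `K = ∅`
the condition on rooted triples is void. -/
lemma rootedRep_of_no_triple {G : SimpleGraph V} (hG : IsChordal G)
    (hAT : ∀ a b c : V, ¬ IsAsteroidalTriple G a b c) (W : Finset V) :
    ∀ K ⊆ W, G.IsClique (K : Set V) → (∀ a b, ¬ RootedTriple G W K a b) → RootedRep G W K := by
  induction W using Finset.strongInduction with
  | H W ih =>
    intro K hKW hK hroot
    rcases K.eq_empty_or_nonempty with rfl | hne
    · exact rootedRep_empty hG hAT ih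
    · exact rootedRep_of_nonempty hG hAT ih hne hKW hK hroot

/-- A chordal graph is an interval graph if and only if it contains no asteroidal
triple. -/
theorem intervalGraph_iff_no_asteroidal_triple [Fintype V] [Nonempty V]
    (G : SimpleGraph V) (hG : IsChordal G) :
    IsIntervalGraph G ↔ ∀ a b c : V, ¬ IsAsteroidalTriple G a b c := by
  refine ⟨fun h => no_asteroidal_of_interval h, fun hAT => ?_⟩
  obtain ⟨l, r, B, -, hb, ha, -⟩ := rootedRep_of_no_triple hG hAT Finset.univ ∅ (by simp) (by simp)
    (by rintro a b ⟨_, _, ⟨s, hs, _⟩, _⟩; simp at hs)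
  have hlr : ∀ v, l v ≤ r v := fun v => (hb v (Finset.mem_univ v)).2.1
  refine ⟨l, r, hlr, fun u v => ?_⟩
  rw [Set.Icc_inter_Icc, Set.nonempty_Icc]
  simp only [sup_le_iff, le_inf_iff]
  rcases eq_or_ne u v with rfl | huv
  · simp
  · rw [ha u (Finset.mem_univ u) v (Finset.mem_univ v) huv]
    have := hlr u
    have := hlr v
    tauto
end

section
/- For a fixed minimal separator S of a chordal graph G, the number of edges of a clique tree of G whose label equals S is the same in every clique tree of G; namely it equals c − 1, where c is the number of components of G \ S containing a vertex complete to S. -/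
/-!
Let `F` be the clique tree `T` with all edges of label `S` deleted. Since `T` is a tree, `F` has
one more component than the number of deleted edges (`card_component_deleteEdges`), so it suffices
to biject the components of `F` with the components of `G \ S` containing a vertex complete to `S`.

A vertex `x ∉ S` lies in no label equal to `S`, so the cliques containing `x` stay in a single
component of `F`; adjacent vertices share a clique, so this gives a map from the components of
`G \ S` to the components of `F` (`reachable_cut_of_reachable`).

* It is injective on the components with a vertex complete to `S`: if `x` and `y` are complete to
  `S` and lie in cliques `Q, R ⊇ S` joined by a path of `F`, that path is the tree path, so all its
  cliques contain `S`, and consecutive ones share a vertex outside `S`. Hence `x` and `y` are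
  joined in `G \ S` (`reachable_of_reachable_cut`).
* It is surjective on them: every component of `F` contains a clique `Q ⊇ S`
  (`exists_reachable_cut_superset`), and `Q ≠ S` because `S`, being a label, is not a maximal
  clique; any vertex of `Q \ S` is complete to `S`.

That a minimal separator `S` of `u, v` is a label follows from the same tools
(`exists_label_eq`): the tree path from a clique at `u` to a clique at `v` has some label `L ⊆ S`,
as otherwise vertices chosen from the labels would give a walk from `u` to `v` avoiding `S`; and
`L` already separates `u` from `v`, whence `L = S` by minimality.
-/

open SimpleGraph

variable {V : Type*}

/-! ### Counting components after deleting edges of a forest -/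

/-- Deleting a bridge `uv` splits exactly one component in two: redirecting the component of `v` in
the smaller graph to that of `u` identifies the components of `H` with all components of the
smaller graph except the one of `v`. -/
lemma card_component_deleteEdge {W : Type*} [Finite W] (H : SimpleGraph W) {u v : W}
    (huv : H.Adj u v) (hb : ¬ (H.deleteEdges {s(u, v)}).Reachable u v) :
    Nat.card (H.deleteEdges {s(u, v)}).ConnectedComponent
      = Nat.card H.ConnectedComponent + 1 := by
  classical
  set H' := H.deleteEdges {s(u, v)} with hH'
  have hle : H' ≤ H := deleteEdges_le _
  let f : W → H'.ConnectedComponent := fun x =>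
    if H'.Reachable x v then H'.connectedComponentMk u else H'.connectedComponentMk x
  have hadj : ∀ a b, H.Adj a b → f a = f b := by
    intro a b hab
    by_cases he : s(a, b) = s(u, v)
    · rcases Sym2.eq_iff.1 he with ⟨rfl, rfl⟩ | ⟨rfl, rfl⟩
      · simp [f]
      · simp [f]
    · have h' : H'.Adj a b := by
        rw [hH', deleteEdges_adj]
        exact ⟨hab, he⟩
      have hiff : H'.Reachable a v ↔ H'.Reachable b v :=
        ⟨fun h => h'.symm.reachable.trans h, fun h => h'.reachable.trans h⟩
      have hc : H'.connectedComponentMk a = H'.connectedComponentMk b :=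
        ConnectedComponent.sound h'.reachable
      simp only [f, hiff, hc]
  have hwalk : ∀ a b (p : H.Walk a b), f a = f b := by
    intro a b p
    induction p with
    | nil => rfl
    | cons h _ ih => exact (hadj _ _ h).trans ih
  let σ : H.ConnectedComponent → H'.ConnectedComponent :=
    ConnectedComponent.lift f (fun a b p _ => hwalk a b p)
  have hf : ∀ x y, f x = H'.connectedComponentMk y → H.Reachable x y := by
    intro x y hxy
    by_cases hx : H'.Reachable x v
    · have : H'.Reachable u y := ConnectedComponent.exact (by simpa [f, hx] using hxy)
      exact ((hx.mono hle).trans huv.symm.reachable).trans (this.mono hle)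
    · have : H'.Reachable x y := ConnectedComponent.exact (by simpa [f, hx] using hxy)
      exact this.mono hle
  have hinj : Function.Injective σ := by
    intro a b
    induction a using ConnectedComponent.ind with | _ x
    induction b using ConnectedComponent.ind with | _ y
    intro hxy
    obtain ⟨z, hz⟩ := (f y).exists_rep
    exact ConnectedComponent.sound
      ((hf x z (Eq.trans hxy hz.symm)).trans (hf y z hz.symm).symm)
  have hrange : Set.range σ = {H'.connectedComponentMk v}ᶜ := by
    ext c
    induction c using ConnectedComponent.ind with | _ y
    simp only [Set.mem_range, Set.mem_compl_iff, Set.mem_singleton_iff, ConnectedComponent.eq]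
    constructor
    · rintro ⟨a, ha⟩ hy
      induction a using ConnectedComponent.ind with | _ x
      have ha : f x = H'.connectedComponentMk y := ha
      by_cases hx : H'.Reachable x v
      · exact hb (Reachable.trans (ConnectedComponent.exact (by simpa [f, hx] using ha)) hy)
      · exact hx (Reachable.trans (ConnectedComponent.exact (by simpa [f, hx] using ha)) hy)
    · intro hy
      refine ⟨H.connectedComponentMk y, ?_⟩
      change f y = _
      simp [f, hy]
  have h1 : (Set.range σ).ncard = Nat.card H.ConnectedComponent := by
    rw [← Set.image_univ, Set.ncard_image_of_injective _ hinj, Set.ncard_univ]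
  have h2 := Set.ncard_add_ncard_compl ({H'.connectedComponentMk v} : Set H'.ConnectedComponent)
  rw [← hrange, h1, Set.ncard_singleton] at h2
  omega

/-- By induction on the edge set: every edge of a forest is a bridge. -/
lemma card_component_deleteEdges {W : Type*} [Finite W] (H : SimpleGraph W) (hH : H.IsAcyclic)
    (E : Set (Sym2 W)) (hE : E ⊆ H.edgeSet) :
    Nat.card (H.deleteEdges E).ConnectedComponent
      = Nat.card H.ConnectedComponent + E.ncard := by
  induction E, E.toFinite using Set.Finite.induction_on with
  | empty => simp
  | @insert e E he hfin ih =>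
    have hE' : E ⊆ H.edgeSet := (Set.subset_insert _ _).trans hE
    have hmem : e ∈ (H.deleteEdges E).edgeSet := by
      rw [edgeSet_deleteEdges]
      exact ⟨hE (Set.mem_insert _ _), he⟩
    have hbr := isAcyclic_iff_forall_isBridge.1 (hH.anti (deleteEdges_le E)) hmem
    have hdel : H.deleteEdges (insert e E) = (H.deleteEdges E).deleteEdges {e} := by
      rw [deleteEdges_deleteEdges, Set.union_singleton]
    rw [hdel, Set.ncard_insert_of_notMem he hfin]
    induction e using Sym2.ind with | _ u v
    rw [card_component_deleteEdge _ hmem hbr, ih hE', add_assoc]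

/-! ### Cliques and tree paths -/

lemma exists_maxClique_superset [Finite V] (G : SimpleGraph V) {K : Set V} (hK : G.IsClique K) :
    ∃ Q : MaxClique G, K ⊆ Q.1 := by
  obtain ⟨Q, hKQ, hQ⟩ := (Set.toFinite {R : Set V | G.IsClique R}).exists_le_maximal hK
  exact ⟨⟨Q, hQ.prop, fun R hR hQR => hQR.antisymm (hQ.le_of_ge hR hQR)⟩, hKQ⟩

lemma exists_maxClique_mem [Finite V] (G : SimpleGraph V) (x : V) :
    ∃ Q : MaxClique G, x ∈ Q.1 :=
  (exists_maxClique_superset G (K := {x}) (by simp)).imp fun _ h => h rfl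

namespace CliqueTree

variable {G : SimpleGraph V} (T : CliqueTree G)

/-- The tree edges with label `S`. -/
def labelEdges (S : Set V) : Set (Sym2 (MaxClique G)) :=
  {e | ∃ Q R : MaxClique G, e = s(Q, R) ∧ T.tree.Adj Q R ∧ Q.1 ∩ R.1 = S}

/-- The forest left from the clique tree after deleting all edges with label `S`. -/
def cut (S : Set V) : SimpleGraph (MaxClique G) := T.tree.deleteEdges (T.labelEdges S)

lemma cut_adj {S : Set V} {Q R : MaxClique G} :
    (T.cut S).Adj Q R ↔ T.tree.Adj Q R ∧ Q.1 ∩ R.1 ≠ S := by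
  rw [cut, deleteEdges_adj]
  refine and_congr_right fun h => not_congr ⟨?_, fun hS => ⟨Q, R, rfl, h, hS⟩⟩
  rintro ⟨A, B, he, -, rfl⟩
  rcases Sym2.eq_iff.1 he with ⟨rfl, rfl⟩ | ⟨rfl, rfl⟩
  · rfl
  · exact Set.inter_comm _ _

lemma labelEdges_subset (S : Set V) : T.labelEdges S ⊆ T.tree.edgeSet := by
  rintro _ ⟨Q, R, rfl, h, -⟩
  exact h

lemma cut_le (S : Set V) : T.cut S ≤ T.tree := deleteEdges_le _

/-- Subtrees are convex: by uniqueness of tree paths, the tree path between two cliques containing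
`s` coincides with the one inside the subtree of `s`. -/
lemma mem_of_mem_support {Q R A : MaxClique G} {p : T.tree.Walk Q R} (hp : p.IsPath) {s : V}
    (hQ : s ∈ Q.1) (hR : s ∈ R.1) (hA : A ∈ p.support) : s ∈ A.1 := by
  classical
  obtain ⟨q, hq⟩ := (T.subtree s).preconnected ⟨Q, hQ⟩ ⟨R, hR⟩ |>.exists_isPath
  let q' : T.tree.Walk Q R := q.map (Embedding.induce _).toHom
  have hq' : q'.IsPath := hq.map Subtype.val_injective
  have heq : p = q' := (T.isTree.existsUnique_path Q R).unique hp hq'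
  rw [heq] at hA
  obtain ⟨B, -, rfl⟩ := List.mem_map.1 ((Walk.support_map _ q) ▸ hA)
  exact B.2

/-- The subtree of the cliques containing a vertex outside `S` uses no edge with label `S`. -/
lemma reachable_cut_of_mem {S : Set V} {x : V} (hx : x ∉ S) {Q R : MaxClique G}
    (hQ : x ∈ Q.1) (hR : x ∈ R.1) : (T.cut S).Reachable Q R := by
  let φ : T.tree.induce {Q : MaxClique G | x ∈ Q.1} →g T.cut S :=
    { toFun := Subtype.val
      map_rel' := fun {A B} h => T.cut_adj.2 ⟨h, fun hS => hx (hS ▸ ⟨A.2, B.2⟩)⟩ }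
  exact ((T.subtree x).preconnected ⟨Q, hQ⟩ ⟨R, hR⟩).map φ

/-- Adjacent vertices share a maximal clique, so along a walk avoiding `S` all cliques met stay in
one component of the cut forest. -/
lemma reachable_cut_of_reachable [Finite V] {S : Set V} {x y : (Sᶜ : Set V)}
    (h : (G.induce (Sᶜ : Set V)).Reachable x y) {Q R : MaxClique G}
    (hQ : x.1 ∈ Q.1) (hR : y.1 ∈ R.1) : (T.cut S).Reachable Q R := by
  obtain ⟨p⟩ := h
  induction p generalizing Q with
  | @nil x => exact T.reachable_cut_of_mem x.2 hQ hR
  | @cons x z y hxz _ ih =>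
    have hadj : G.Adj x.1 z.1 := hxz
    obtain ⟨A, hA⟩ := exists_maxClique_superset G (isClique_pair.2 fun _ => hadj)
    exact (T.reachable_cut_of_mem x.2 hQ (hA (by simp))).trans (ih (hA (by simp)) hR)

lemma reachable_of_mem {S : Set V} {Q : MaxClique G} {x y : (Sᶜ : Set V)}
    (hx : x.1 ∈ Q.1) (hy : y.1 ∈ Q.1) : (G.induce (Sᶜ : Set V)).Reachable x y := by
  by_cases hxy : x = y
  · rw [hxy]
  · exact Adj.reachable (G := G.induce (Sᶜ : Set V))
      (Q.2.1 hx hy fun h => hxy (Subtype.ext h))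

/-- Choosing from each label along a walk a vertex outside `S` gives a walk avoiding `S`. -/
lemma reachable_of_walk {S : Set V} {Q R : MaxClique G} (p : T.tree.Walk Q R)
    (hp : ∀ A B, s(A, B) ∈ p.edges → ¬ A.1 ∩ B.1 ⊆ S) {x y : (Sᶜ : Set V)}
    (hx : x.1 ∈ Q.1) (hy : y.1 ∈ R.1) : (G.induce (Sᶜ : Set V)).Reachable x y := by
  induction p generalizing x with
  | nil => exact reachable_of_mem hx hy
  | @cons Q A R h p ih =>
    obtain ⟨z, hz, hzS⟩ := Set.not_subset.1 (hp Q A (by simp))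
    have hz' : z ∈ (Sᶜ : Set V) := hzS
    exact (reachable_of_mem (y := ⟨z, hz'⟩) hx hz.1).trans
      (ih (fun B C hBC => hp B C (by simp [hBC])) hz.2 hy)

/-- The tree path between two cliques in the same component of the cut forest runs in that
forest. -/
lemma exists_path_of_reachable_cut {S : Set V} {Q R : MaxClique G}
    (h : (T.cut S).Reachable Q R) :
    ∃ p : T.tree.Walk Q R, p.IsPath ∧ ∀ A B, s(A, B) ∈ p.edges → A.1 ∩ B.1 ≠ S := by
  obtain ⟨q, hq⟩ := h.exists_isPath
  refine ⟨q.mapLe (T.cut_le S), (Walk.isPath_mapLe _).2 hq, fun A B hAB => ?_⟩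
  rw [Walk.edges_mapLe_eq_edges] at hAB
  exact (T.cut_adj.1 (q.adj_of_mem_edges hAB)).2

/-- The tree path from `Q` to `R` lies in the subtree of cliques containing `S` and has no label
equal to `S`, so each of its labels has a vertex outside `S`. -/
lemma reachable_of_reachable_cut {S : Set V} {Q R : MaxClique G} (h : (T.cut S).Reachable Q R)
    (hSQ : S ⊆ Q.1) (hSR : S ⊆ R.1) {x y : (Sᶜ : Set V)}
    (hx : x.1 ∈ Q.1) (hy : y.1 ∈ R.1) : (G.induce (Sᶜ : Set V)).Reachable x y := by
  obtain ⟨p, hp, hlab⟩ := T.exists_path_of_reachable_cut h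
  refine T.reachable_of_walk p (fun A B hAB hsub => hlab A B hAB (hsub.antisymm ?_)) hx hy
  exact fun s hs => ⟨T.mem_of_mem_support hp (hSQ hs) (hSR hs) (p.fst_mem_support_of_mem_edges hAB),
    T.mem_of_mem_support hp (hSQ hs) (hSR hs) (p.snd_mem_support_of_mem_edges hAB)⟩

/-- Walking in the tree towards `Q₀`, one either arrives or stops at the first deleted edge, whose
ends contain `S`. -/
lemma exists_reachable_cut_superset {S : Set V} {R Q₀ : MaxClique G} (hQ₀ : S ⊆ Q₀.1) :
    ∃ Q : MaxClique G, S ⊆ Q.1 ∧ (T.cut S).Reachable R Q := by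
  obtain ⟨p⟩ := T.isTree.connected.preconnected R Q₀
  induction p with
  | nil => exact ⟨_, hQ₀, .rfl⟩
  | @cons R A Q₀ h p ih =>
    by_cases hS : R.1 ∩ A.1 = S
    · exact ⟨R, hS ▸ Set.inter_subset_left, .rfl⟩
    · obtain ⟨Q, hQ, hr⟩ := ih hQ₀
      exact ⟨Q, hQ, (T.cut_adj.2 ⟨h, hS⟩).reachable.trans hr⟩

/-- A minimal separator is a label: some label on the tree path between cliques of `u` and `v` is
contained in `S`, and it already separates `u` from `v`. -/
lemma exists_label_eq [Finite V] {S : Set V} (hS : IsMinimalSeparator G S) :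
    ∃ Q R : MaxClique G, T.tree.Adj Q R ∧ Q.1 ∩ R.1 = S := by
  obtain ⟨u, v, -, -, ⟨hu, hv, hsep⟩, hmin⟩ := hS
  obtain ⟨Q, hQ⟩ := exists_maxClique_mem G u
  obtain ⟨R, hR⟩ := exists_maxClique_mem G v
  obtain ⟨p, hp, hpu⟩ := T.isTree.existsUnique_path Q R
  obtain ⟨A, B, hAB, hsub⟩ : ∃ A B, s(A, B) ∈ p.edges ∧ A.1 ∩ B.1 ⊆ S := by
    by_contra! hcon
    obtain ⟨w⟩ := T.reachable_of_walk p hcon (x := ⟨u, hu⟩) (y := ⟨v, hv⟩) hQ hR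
    obtain ⟨x, hx, hxS⟩ := hsep (w.map (Embedding.induce _).toHom)
    obtain ⟨z, -, rfl⟩ := List.mem_map.1 ((Walk.support_map _ w) ▸ hx)
    exact z.2 hxS
  refine ⟨A, B, p.adj_of_mem_edges hAB, by_contra fun hne => ?_⟩
  refine hmin _ (hsub.ssubset_of_ne hne) ⟨fun h => hu (hsub h), fun h => hv (hsub h), ?_⟩
  intro w
  by_contra! hw
  have hreach : (G.induce ((A.1 ∩ B.1)ᶜ : Set V)).Reachable _ _ := ⟨w.induce _ hw⟩
  -- the tree path uses the edge `AB`, so its ends lie in different components of the cut forest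
  obtain ⟨q, hq, hlab⟩ := T.exists_path_of_reachable_cut
    (T.reachable_cut_of_reachable hreach hQ hR)
  rw [hpu q hq] at hlab
  exact hlab A B hAB rfl

end CliqueTree

/-! ### Components of the cut forest and full components of the separator -/

/-- For a minimal separator `S` of a chordal graph `G`, the number of edges of any
clique tree whose label is `S` equals `c - 1`, where `c` is the number of components
of `G \ S` containing a vertex complete to `S`; in particular it is the same for
every clique tree of `G`. -/
theorem label_multiplicity [Fintype V] (G : SimpleGraph V) (hG : IsChordal G)
    (S : Set V) (hS : IsMinimalSeparator G S) (T : CliqueTree G) :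
    {e : Sym2 (MaxClique G) | ∃ Q R : MaxClique G,
        e = s(Q, R) ∧ T.tree.Adj Q R ∧ Q.1 ∩ R.1 = S}.ncard
      = {C : (G.induce (Sᶜ : Set V)).ConnectedComponent | ∃ x : (Sᶜ : Set V),
          (G.induce (Sᶜ : Set V)).connectedComponentMk x = C ∧
            ∀ s ∈ S, G.Adj x.1 s}.ncard - 1 := by
  classical
  obtain ⟨A, B, hAB, hlab⟩ := T.exists_label_eq hS
  have hSA : S ⊆ A.1 := hlab ▸ Set.inter_subset_left
  have hSB : S ⊆ B.1 := hlab ▸ Set.inter_subset_right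
  have hclique : G.IsClique S := A.2.1.subset hSA
  -- a maximal clique equal to `S` would be contained in both `A` and `B`
  have hne : ∀ Q : MaxClique G, Q.1 ≠ S := by
    rintro Q rfl
    exact hAB.ne (Subtype.ext ((Q.2.2 _ A.2.1 hSA).symm.trans (Q.2.2 _ B.2.1 hSB)))
  choose κ hκ using exists_maxClique_mem G
  let f : (G.induce (Sᶜ : Set V)).ConnectedComponent → (T.cut S).ConnectedComponent :=
    ConnectedComponent.lift (fun x => (T.cut S).connectedComponentMk (κ x.1))
      fun x y p _ => ConnectedComponent.sound
        (T.reachable_cut_of_reachable p.reachable (hκ _) (hκ _))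
  have hfull : ∀ x : (Sᶜ : Set V), (∀ s ∈ S, G.Adj x.1 s) →
      ∃ Q : MaxClique G, x.1 ∈ Q.1 ∧ S ⊆ Q.1 := by
    intro x hx
    obtain ⟨Q, hQ⟩ := exists_maxClique_superset G
      (hclique.insert fun s hs _ => hx s hs : G.IsClique (insert x.1 S))
    exact ⟨Q, hQ (Set.mem_insert _ _), (Set.subset_insert _ _).trans hQ⟩
  set F : Set (G.induce (Sᶜ : Set V)).ConnectedComponent :=
    {C | ∃ x : (Sᶜ : Set V), (G.induce (Sᶜ : Set V)).connectedComponentMk x = C ∧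
      ∀ s ∈ S, G.Adj x.1 s} with hF
  have hinj : Set.InjOn f F := by
    rintro _ ⟨x, rfl, hx⟩ _ ⟨y, rfl, hy⟩ hxy
    have hκκ : (T.cut S).Reachable (κ x.1) (κ y.1) := ConnectedComponent.exact hxy
    obtain ⟨Q, hxQ, hSQ⟩ := hfull x hx
    obtain ⟨R, hyR, hSR⟩ := hfull y hy
    exact ConnectedComponent.sound (T.reachable_of_reachable_cut
      (((T.reachable_cut_of_mem x.2 hxQ (hκ _)).trans hκκ).trans
        (T.reachable_cut_of_mem y.2 (hκ _) hyR)) hSQ hSR hxQ hyR)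
  have hsurj : f '' F = Set.univ := by
    refine Set.eq_univ_of_forall fun K => ?_
    induction K using ConnectedComponent.ind with | _ R
    obtain ⟨Q, hSQ, hRQ⟩ := T.exists_reachable_cut_superset (R := R) hSA
    obtain ⟨x, hxQ, hxS⟩ := Set.not_subset.1 fun h => hne Q (h.antisymm hSQ)
    refine ⟨_, ⟨⟨x, hxS⟩, rfl, fun s hs => Q.2.1 hxQ (hSQ hs) ?_⟩, ?_⟩
    · rintro rfl
      exact hxS hs
    · exact ConnectedComponent.sound ((T.reachable_cut_of_mem hxS (hκ x) hxQ).trans hRQ.symm)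
  have hcard : F.ncard = Nat.card (T.cut S).ConnectedComponent := by
    rw [← hinj.ncard_image, hsurj, Set.ncard_univ]
  have hone : Nat.card T.tree.ConnectedComponent = 1 := by
    have := T.isTree.connected.preconnected.subsingleton_connectedComponent
    have : Nonempty T.tree.ConnectedComponent := ⟨T.tree.connectedComponentMk A⟩
    exact Nat.card_of_subsingleton (Classical.arbitrary _)
  have hcount := card_component_deleteEdges T.tree T.isTree.isAcyclic (T.labelEdges S)
    (T.labelEdges_subset S)
  change (T.labelEdges S).ncard = F.ncard - 1
  rw [hcard, CliqueTree.cut, hcount, hone]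
  omega
end

section
/- Let G be a directed path graph, let u and v be non-adjacent vertices linked by a strong path, and let T be a clique directed path tree of G. Then T(u,v) is a directed path. -/
/-!
Write `D` for the orientation and `≤` for directed reachability in the clique tree `T`. Each set
`T^w` of cliques containing a vertex `w` is a chain for `≤` and is convex, because each edge of `T`
is a bridge: a directed walk that leaves one side of an edge can never come back to it
(`le_of_mem`, `mem_of_le_of_le`).

Suppose that `T(u,v) = p 0, …, p n` is not directed. Then it has three consecutive cliques
`A, M, R` at which the orientation switches; reversing all of `D` if necessary, `A → M ← R`. No
vertex lies in both `A` and `R` (`not_mem_switch`), which excludes a common neighbour of `u` and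
`v`. A chordless path from `u` to `v` must cross both edges, hence has consecutive vertices `l, r`
with `l ∈ A ∩ M` and `r ∈ M ∩ R` (`exists_switch_pair`). Two disjoint such paths give a clique
`l₁, l₂, r₁, r₂` of size four carrying an attachment. All cliques containing some `l` and some `r`
lie above `M` (`ge_of_mem`).

* Type 1 (`attach1_contra`): the two attached vertices give cliques `K, K'` on the directed path
  `T^{l₁}`, both above `M`, one containing `l₂` and not `r₂`, the other `r₂` and not `l₂`. Convexity
  forces each of them to be strictly below the other.
* Type 2 (`attach2_contra`): choose a clique `C` containing `l₁, l₂, r₁, r₂` and all `z_k`, and a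
  clique `K_k` containing `z'_k, z_k, z_{k+1}`. By convexity `K_k` and `K_{k+1}` lie on
  different sides of `C`, so by parity the first or the last of the `K_k` lies below `C`, and then
  below `M` on the side of `A` or of `R`. Say it is the first one, with `z_1` and `l₁` in a
  clique `K` not containing `l₂`. Let `j` be least with `z_1 ∈ p j`. Then `j > 0`, as `z_1` does
  not see `u`, and the edge from `p (j-1)` to `p j` is covered on each path by a vertex seen by
  `z_1`, so by `l₁` and by `l₂`. On the chain `T^{l₁}`, if `K` precedes `p (j-1)` then `z_1` lies
  in `p (j-1)`, and otherwise `l₂` lies in `K`, a contradiction in both cases (`below_contra`).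
-/

open SimpleGraph

variable {V : Type*}

/-- A chordless (induced) path `x 0 - x 1 - ⋯ - x n`: injective, with adjacency exactly
between consecutive vertices. -/
def IsChordlessPathFun (G : SimpleGraph V) {n : ℕ} (x : Fin (n+1) → V) : Prop :=
  Function.Injective x ∧ ∀ i j : Fin (n+1), i < j → (G.Adj (x i) (x j) ↔ (j : ℕ) = (i : ℕ) + 1)

/-- Attachment of type 1 on `{l1,l2}, {r1,r2}` using vertices of `Z`. -/
def Attach1 (G : SimpleGraph V) (Z : Set V) (l1 l2 r1 r2 : V) : Prop :=
  ∃ z ∈ Z, ∃ z' ∈ Z, z ≠ z' ∧ ¬ G.Adj z z' ∧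
    G.Adj z l1 ∧ G.Adj z l2 ∧ G.Adj z r1 ∧ ¬ G.Adj z r2 ∧
    G.Adj z' r1 ∧ G.Adj z' r2 ∧ G.Adj z' l1 ∧ ¬ G.Adj z' l2

/-- Attachment of type 2 on `{l1,l2}, {r1,r2}` using vertices of `Z`, relative to the
set `P = X ∪ Y ∪ {u,v}` of path vertices.  Here `z 0 = l1`, `z (last) = r1` and the
interior values of `z` are the `2t+1` clique vertices; `z' k` sees exactly
`z k.castSucc` and `z k.succ`. -/
def Attach2 (G : SimpleGraph V) (Z P : Set V) (l1 l2 r1 r2 : V) : Prop :=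
  ∃ (t : ℕ) (z : Fin (2*t+3) → V) (z' : Fin (2*t+2) → V),
    z 0 = l1 ∧ z (Fin.last (2*t+2)) = r1 ∧
    Function.Injective z ∧ Function.Injective z' ∧
    (∀ k : Fin (2*t+3), k ≠ 0 → k ≠ Fin.last (2*t+2) → z k ∈ Z) ∧
    (∀ k, z' k ∈ Z) ∧
    G.IsClique ({l1, l2, r1, r2} ∪
      {w | ∃ k : Fin (2*t+3), k ≠ 0 ∧ k ≠ Fin.last (2*t+2) ∧ z k = w}) ∧
    (∀ k : Fin (2*t+3), k ≠ 0 → k ≠ Fin.last (2*t+2) → ∀ w ∈ P,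
      (G.Adj (z k) w ↔ w = l1 ∨ w = l2 ∨ w = r1 ∨ w = r2)) ∧
    (∀ k m : Fin (2*t+2), k ≠ m → ¬ G.Adj (z' k) (z' m)) ∧
    (∀ k : Fin (2*t+2), ∀ w,
      w ∈ P ∪ ({l1, l2, r1, r2} ∪
        {w | ∃ k : Fin (2*t+3), k ≠ 0 ∧ k ≠ Fin.last (2*t+2) ∧ z k = w}) →
      (G.Adj (z' k) w ↔ w = z k.castSucc ∨ w = z k.succ))

/-- Two non-adjacent vertices `u, v` are linked by a strong path: either they have a
common neighbor, or there are two chordless paths `u-x₁-⋯-x_r-v`, `u-y₁-⋯-y_s-v`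
(`r,s ≥ 2`) with disjoint interiors, and a set `Z` disjoint from them, such that every
clique of size four `x_i, x_{i+1}, y_j, y_{j+1}` carries an attachment of type 1 or 2. -/
def LinkedByStrongPath (G : SimpleGraph V) (u v : V) : Prop :=
  (∃ w, G.Adj u w ∧ G.Adj v w) ∨
  (∃ (r s : ℕ), 2 ≤ r ∧ 2 ≤ s ∧
    ∃ (x : Fin (r+2) → V) (y : Fin (s+2) → V) (Z : Set V),
      x 0 = u ∧ x (Fin.last (r+1)) = v ∧ y 0 = u ∧ y (Fin.last (s+1)) = v ∧
      IsChordlessPathFun G x ∧ IsChordlessPathFun G y ∧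
      (∀ i : Fin (r+2), i ≠ 0 → i ≠ Fin.last (r+1) →
        ∀ j : Fin (s+2), j ≠ 0 → j ≠ Fin.last (s+1) → x i ≠ y j) ∧
      Z ∩ (Set.range x ∪ Set.range y) = ∅ ∧
      ∀ i j : ℕ, ∀ _hi1 : 1 ≤ i, ∀ _hi2 : i + 1 ≤ r, ∀ _hj1 : 1 ≤ j, ∀ _hj2 : j + 1 ≤ s,
        G.Adj (x ⟨i, by omega⟩) (y ⟨j, by omega⟩) →
        G.Adj (x ⟨i, by omega⟩) (y ⟨j+1, by omega⟩) →
        G.Adj (x ⟨i+1, by omega⟩) (y ⟨j, by omega⟩) →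
        G.Adj (x ⟨i+1, by omega⟩) (y ⟨j+1, by omega⟩) →
        ∃ l1 l2 r1 r2 : V,
          ((l1 = x ⟨i, by omega⟩ ∧ l2 = y ⟨j, by omega⟩) ∨
           (l1 = y ⟨j, by omega⟩ ∧ l2 = x ⟨i, by omega⟩)) ∧
          ((r1 = x ⟨i+1, by omega⟩ ∧ r2 = y ⟨j+1, by omega⟩) ∨
           (r1 = y ⟨j+1, by omega⟩ ∧ r2 = x ⟨i+1, by omega⟩)) ∧
          (Attach1 G Z l1 l2 r1 r2 ∨
           Attach2 G Z (Set.range x ∪ Set.range y) l1 l2 r1 r2))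

/-- A strong asteroidal triple: an asteroidal triple each pair of which is linked by a
strong path. -/
def IsStrongAsteroidalTriple (G : SimpleGraph V) (a b c : V) : Prop :=
  IsAsteroidalTriple G a b c ∧
    LinkedByStrongPath G a b ∧ LinkedByStrongPath G b c ∧ LinkedByStrongPath G a c

/-- A weak asteroidal triple: an asteroidal triple some pair of which is linked by a
strong path. -/
def IsWeakAsteroidalTriple (G : SimpleGraph V) (a b c : V) : Prop :=
  IsAsteroidalTriple G a b c ∧
    (LinkedByStrongPath G a b ∨ LinkedByStrongPath G b c ∨ LinkedByStrongPath G a c)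

/-- An asteroidal quadruple: four vertices any three of which form an asteroidal triple. -/
def IsAsteroidalQuadruple (G : SimpleGraph V) (a b c d : V) : Prop :=
  IsAsteroidalTriple G a b c ∧ IsAsteroidalTriple G a b d ∧
  IsAsteroidalTriple G a c d ∧ IsAsteroidalTriple G b c d

/-- A weak asteroidal quadruple: four vertices any three of which form a weak
asteroidal triple. -/
def IsWeakAsteroidalQuadruple (G : SimpleGraph V) (a b c d : V) : Prop :=
  IsWeakAsteroidalTriple G a b c ∧ IsWeakAsteroidalTriple G a b d ∧
  IsWeakAsteroidalTriple G a c d ∧ IsWeakAsteroidalTriple G b c d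

/-- A clique directed path tree: a clique tree together with an orientation `D` of its
edges such that for every vertex `w` of `G`, the cliques containing `w` form a directed
path. -/
structure CliqueDPT (G : SimpleGraph V) extends CliqueTree G where
  D : MaxClique G → MaxClique G → Prop
  dadj : ∀ Q R, D Q R → tree.Adj Q R
  total : ∀ Q R, tree.Adj Q R → D Q R ∨ D R Q
  antisymm : ∀ Q R, D Q R → ¬ D R Q
  dirpath : ∀ w : V, ∃ (n : ℕ) (e : Fin (n+1) ≃ {Q : MaxClique G // w ∈ Q.1}),
    ∀ i : Fin n, D (e i.castSucc).1 (e i.succ).1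

/-- A clique rooted path tree: a clique directed path tree whose orientation makes the
tree rooted (every clique is reachable from the root along directed edges). -/
structure CliqueRPT (G : SimpleGraph V) extends CliqueDPT G where
  root : MaxClique G
  rooted : ∀ Q, Relation.ReflTransGen D root Q

/-- A directed path graph: a graph having a clique directed path tree. -/
def DirectedPathGraph (G : SimpleGraph V) : Prop := Nonempty (CliqueDPT G)

/-- A rooted path graph: a graph having a clique rooted path tree. -/
def RootedPathGraph (G : SimpleGraph V) : Prop := Nonempty (CliqueRPT G)

/-- `T(u,v)` is a directed path: the tree path between the closest cliques containing
`u` resp. `v` (characterized by: `u` only in its first vertex, `v` only in its last)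
has all its edges oriented in the same direction. -/
def TuvDirected (G : SimpleGraph V) (T : CliqueDPT G) (u v : V) : Prop :=
  ∃ (n : ℕ) (p : Fin (n+1) → MaxClique G),
    Function.Injective p ∧
    u ∈ (p 0).1 ∧ v ∈ (p (Fin.last n)).1 ∧
    (∀ i, i ≠ (0 : Fin (n+1)) → u ∉ (p i).1) ∧
    (∀ i, i ≠ Fin.last n → v ∉ (p i).1) ∧
    ((∀ i : Fin n, T.D (p i.castSucc) (p i.succ)) ∨
     (∀ i : Fin n, T.D (p i.succ) (p i.castSucc)))

/-! ### Sides of a tree edge and directed reachability -/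

/-- `S` is the side of `A` of the tree edge `A B`: no other edge leaves `S`. -/
structure IsSide {G : SimpleGraph V} (T : CliqueDPT G) (A B : MaxClique G)
    (S : Set (MaxClique G)) : Prop where
  left : A ∈ S
  right : B ∉ S
  bdry : ∀ K ∈ S, ∀ L ∉ S, T.tree.Adj K L → K = A ∧ L = B

/-- Directed reachability in a clique directed path tree. -/
abbrev CliqueDPT.le {G : SimpleGraph V} (T : CliqueDPT G) : MaxClique G → MaxClique G → Prop :=
  Relation.ReflTransGen T.D

/-- The same tree with all orientations reversed. -/
def CliqueDPT.rev {G : SimpleGraph V} (T : CliqueDPT G) : CliqueDPT G where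
  toCliqueTree := T.toCliqueTree
  D := fun Q R => T.D R Q
  dadj := fun Q R h => (T.dadj R Q h).symm
  total := fun Q R h => T.total R Q h.symm
  antisymm := fun Q R h => T.antisymm R Q h
  dirpath := fun w => by
    obtain ⟨n, e, he⟩ := T.dirpath w
    refine ⟨n, Fin.revPerm.trans e, fun i => ?_⟩
    have := he i.rev
    simpa [Fin.rev_castSucc, Fin.rev_succ] using this

section Side
variable {G : SimpleGraph V} {T : CliqueDPT G} {A B : MaxClique G} {S : Set (MaxClique G)}

theorem exists_isSide (h : T.tree.Adj A B) : ∃ S, IsSide T A B S := by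
  have hb := isAcyclic_iff_forall_adj_isBridge.1 T.isTree.2 h
  rw [isBridge_iff] at hb
  refine ⟨{K | (T.tree.deleteEdges {s(A, B)}).Reachable A K}, Reachable.refl _, hb, ?_⟩
  intro K hK L hL hKL
  by_cases he : s(K, L) = s(A, B)
  · rcases Sym2.eq_iff.1 he with h' | ⟨_, rfl⟩
    · exact h'
    · exact absurd (Reachable.refl _) hL
  · refine absurd (Reachable.trans hK (Adj.reachable ?_)) hL
    simp only [deleteEdges_adj, Set.mem_singleton_iff]
    exact ⟨hKL, he⟩

/-- A vertex present on both sides of an edge lies in both ends of it. -/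
theorem IsSide.mem_mem (hS : IsSide T A B S) {w : V} {K L : MaxClique G} (hK : K ∈ S)
    (hL : L ∉ S) (hwK : w ∈ K.1) (hwL : w ∈ L.1) : w ∈ A.1 ∧ w ∈ B.1 := by
  obtain ⟨q⟩ := (T.subtree w).preconnected ⟨K, hwK⟩ ⟨L, hwL⟩
  obtain ⟨d, -, h1, h2⟩ := q.exists_boundary_dart (Subtype.val ⁻¹' S) hK hL
  obtain ⟨rfl, rfl⟩ := hS.bdry _ h1 _ h2 d.adj
  exact ⟨d.fst.2, d.snd.2⟩

/-- A directed walk leaving the side of `A` traverses the edge from `A` to `B`. -/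
theorem IsSide.of_le (hS : IsSide T A B S) {K L : MaxClique G} (h : T.le K L) (hK : K ∈ S)
    (hL : L ∉ S) : T.D A B ∧ T.le B L := by
  induction h with
  | refl => exact absurd hK hL
  | @tail M L h1 h2 ih =>
    by_cases hM : M ∈ S
    · obtain ⟨rfl, rfl⟩ := hS.bdry _ hM _ hL (T.dadj _ _ h2)
      exact ⟨h2, .refl⟩
    · exact ⟨(ih hM).1, (ih hM).2.tail h2⟩

/-- A directed walk entering the side of `A` traverses the edge from `B` to `A`. -/
theorem IsSide.of_le' (hS : IsSide T A B S) {K L : MaxClique G} (h : T.le K L) (hK : K ∉ S)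
    (hL : L ∈ S) : T.D B A := by
  induction h with
  | refl => exact absurd hL hK
  | @tail M L h1 h2 ih =>
    by_cases hM : M ∈ S
    · exact ih hM
    · obtain ⟨rfl, rfl⟩ := hS.bdry _ hL _ hM (T.dadj _ _ h2).symm
      exact h2

/-- The cliques containing a given vertex form a chain for directed reachability. -/
theorem le_of_mem (T : CliqueDPT G) {w : V} {K L : MaxClique G} (hK : w ∈ K.1) (hL : w ∈ L.1) :
    T.le K L ∨ T.le L K := by
  obtain ⟨n, e, he⟩ := T.dirpath w
  have key : ∀ (b : ℕ) (hb : b < n + 1) (a : ℕ) (ha : a < n + 1), a ≤ b →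
      T.le (e ⟨a, ha⟩).1 (e ⟨b, hb⟩).1 := by
    intro b
    induction b with
    | zero => intro hb a ha hab; obtain rfl : a = 0 := by omega
              exact .refl
    | succ b ih =>
      intro hb a ha hab
      rcases Nat.lt_or_eq_of_le hab with h | rfl
      · exact (ih (by omega) a ha (by omega)).tail (he ⟨b, by omega⟩)
      · exact .refl
  obtain ⟨a, ha⟩ := e.surjective ⟨K, hK⟩
  obtain ⟨b, hb⟩ := e.surjective ⟨L, hL⟩
  have ha' : (e a).1 = K := by rw [ha]
  have hb' : (e b).1 = L := by rw [hb]
  rw [← ha', ← hb']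
  rcases le_total a.1 b.1 with h | h
  · exact .inl (key _ b.2 _ a.2 h)
  · exact .inr (key _ a.2 _ b.2 h)

/-- The cliques containing a given vertex form a convex set for directed reachability. -/
theorem mem_of_le_of_le {w : V} {K L M : MaxClique G} (h1 : T.le K L) (h2 : T.le L M)
    (hK : w ∈ K.1) (hM : w ∈ M.1) : w ∈ L.1 := by
  induction h1 using Relation.ReflTransGen.head_induction_on with
  | refl => exact hK
  | @head K K' h h' ih =>
    refine ih ?_
    obtain ⟨S, hS⟩ := exists_isSide (T.dadj _ _ h)
    by_cases hMS : M ∈ S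
    · -- returning to the side of `K` would traverse the edge `K K'` backwards
      exact absurd h (T.antisymm _ _ (hS.of_le' (h'.trans h2) hS.right hMS))
    · exact (hS.mem_mem hS.left hMS hK hM).2

/-- A clique containing a vertex through `A → M` and a vertex of `M` avoiding `A` is reachable
from `M`. -/
theorem ge_of_mem {M K : MaxClique G} {l r : V} (h : T.D A M) (lA : l ∈ A.1)
    (rA : r ∉ A.1) (rM : r ∈ M.1) (lK : l ∈ K.1) (rK : r ∈ K.1) : T.le M K := by
  obtain ⟨S, hS⟩ := exists_isSide (T.dadj _ _ h)
  have hK : K ∉ S := fun hK => rA (hS.mem_mem hK hS.right rK rM).1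
  rcases le_of_mem T lA lK with h' | h'
  · exact (hS.of_le h' hS.left hK).2
  · exact absurd (mem_of_le_of_le h' (.single h) rK rM) rA

end Side

/-! ### The tree path as a sequence of cliques -/

/-- `p 0, …, p n` is a path of the tree. -/
structure IsTreePath {G : SimpleGraph V} (T : CliqueDPT G) (p : ℕ → MaxClique G) (n : ℕ) :
    Prop where
  adj : ∀ j < n, T.tree.Adj (p j) (p (j + 1))
  inj : ∀ i ≤ n, ∀ j ≤ n, p i = p j → i = j

section TreePath
variable {G : SimpleGraph V} {T : CliqueDPT G} {p : ℕ → MaxClique G} {n : ℕ}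

theorem IsTreePath.reverse (hp : IsTreePath T p n) : IsTreePath T (fun j => p (n - j)) n where
  adj j hj := by
    have := (hp.adj (n - (j + 1)) (by omega)).symm
    rwa [show n - (j + 1) + 1 = n - j by omega] at this
  inj i hi j hj h := by
    have := hp.inj _ (by omega) _ (by omega) h
    omega

theorem IsTreePath.exists_side (hp : IsTreePath T p n) {j : ℕ} (hj : j < n) :
    ∃ S, IsSide T (p j) (p (j + 1)) S ∧ ∀ i ≤ n, p i ∈ S ↔ i ≤ j := by
  obtain ⟨S, hS⟩ := exists_isSide (hp.adj j hj)
  have step : ∀ i < n, i ≠ j → (p i ∈ S ↔ p (i + 1) ∈ S) := by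
    intro i hi hij
    constructor
    · intro h
      by_contra h'
      exact hij (hp.inj _ (by omega) _ (by omega) (hS.bdry _ h _ h' (hp.adj i hi)).1)
    · intro h
      by_contra h'
      have := hS.bdry _ h _ h' (hp.adj i hi).symm
      have h1 := hp.inj _ (by omega) _ (by omega) this.1
      have h2 := hp.inj _ (by omega) _ (by omega) this.2
      omega
  have low : ∀ d, d ≤ j → p (j - d) ∈ S := by
    intro d
    induction d with
    | zero => intro _; exact hS.left
    | succ d ih =>
      intro hd
      have := ih (by omega)
      rw [show j - d = j - (d + 1) + 1 by omega] at this
      exact (step _ (by omega) (by omega)).2 this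
  have high : ∀ d, j + 1 + d ≤ n → p (j + 1 + d) ∉ S := by
    intro d
    induction d with
    | zero => intro _; exact hS.right
    | succ d ih =>
      intro hd h
      exact ih (by omega) ((step (j + 1 + d) (by omega) (by omega)).2 h)
  refine ⟨S, hS, fun i hi => ⟨fun h => ?_, fun h => ?_⟩⟩
  · by_contra h'
    have := high (i - (j + 1)) (by omega)
    rw [show j + 1 + (i - (j + 1)) = i by omega] at this
    exact this h
  · have := low (j - i) (by omega)
    rwa [show j - (j - i) = i by omega] at this

/-- A vertex in two cliques of the path is in both ends of each edge in between. -/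
theorem IsTreePath.mem_between (hp : IsTreePath T p n) {a b j : ℕ} (ha : a ≤ j) (hj : j < b)
    (hb : b ≤ n) {w : V} (wa : w ∈ (p a).1) (wb : w ∈ (p b).1) :
    w ∈ (p j).1 ∧ w ∈ (p (j + 1)).1 := by
  obtain ⟨S, hS, h⟩ := hp.exists_side (show j < n by omega)
  exact hS.mem_mem ((h a (by omega)).2 ha) (fun h' => by have := (h b hb).1 h'; omega) wa wb

/-- No vertex covers two consecutive edges with opposite orientations. -/
theorem not_mem_switch (hp : IsTreePath T p n) {i : ℕ} (hi : i + 1 < n)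
    (h1 : T.D (p i) (p (i + 1))) (h2 : T.D (p (i + 2)) (p (i + 1))) {w : V}
    (wA : w ∈ (p i).1) (wR : w ∈ (p (i + 2)).1) : False := by
  obtain ⟨S, hS, h⟩ := hp.exists_side (show i < n by omega)
  obtain ⟨S', hS', h'⟩ := hp.exists_side hi
  rcases le_of_mem T wA wR with hle | hle
  · exact T.antisymm _ _ h2
      (hS'.of_le hle ((h' _ (by omega)).2 (by omega)) hS'.right).1
  · refine T.antisymm _ _ h1 (hS.of_le' hle (fun hm => ?_) hS.left)
    have := (h _ (by omega)).1 hm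
    omega

/-! ### Paths of the graph crossing the tree path -/

theorem exists_maxClique [Finite V] {s : Set V} (hs : G.IsClique s) :
    ∃ K : MaxClique G, s ⊆ K.1 := by
  obtain ⟨b, hb, hm⟩ := Finite.exists_le_maximal (p := fun t : Set V => G.IsClique t) hs
  exact ⟨⟨b, hm.prop, fun R hR hbR => Set.Subset.antisymm hbR (hm.le_of_ge hR hbR)⟩, hb⟩

theorem exists_maxClique_pair [Finite V] {a b : V} (h : G.Adj a b) :
    ∃ K : MaxClique G, a ∈ K.1 ∧ b ∈ K.1 := by
  obtain ⟨K, hK⟩ := exists_maxClique (G := G) (s := {a, b}) (by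
    rw [isClique_pair]; exact fun _ => h)
  exact ⟨K, hK (by simp), hK (by simp)⟩

/-- A walk starting with a vertex confined to one side of an edge and ending with a vertex
reaching the other side has a later vertex lying in both ends of the edge. -/
theorem exists_crossing [Finite V] {A B : MaxClique G} {S : Set (MaxClique G)}
    (hS : IsSide T A B S) {x : ℕ → V} {N a : ℕ} (hx : ∀ m < N, G.Adj (x m) (x (m + 1)))
    (haN : a ≤ N) (ha : ∀ K : MaxClique G, x a ∈ K.1 → K ∈ S) {K : MaxClique G}
    (hK : x N ∈ K.1) (hKS : K ∉ S) :
    ∃ m, a < m ∧ m ≤ N ∧ x m ∈ A.1 ∧ x m ∈ B.1 := by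
  classical
  have hex : ∃ m, a ≤ m ∧ ∃ K : MaxClique G, x m ∈ K.1 ∧ K ∉ S := ⟨N, haN, K, hK, hKS⟩
  have hN : Nat.find hex ≤ N := Nat.find_min' hex ⟨haN, K, hK, hKS⟩
  obtain ⟨h1, L, hL, hLS⟩ := Nat.find_spec hex
  have hmin := fun m => Nat.find_min hex (m := m)
  generalize Nat.find hex = m at *
  have ham : a < m := by
    rcases Nat.lt_or_eq_of_le h1 with h | rfl
    · exact h
    · exact absurd (ha L hL) hLS
  refine ⟨m, ham, hN, ?_⟩
  have hadj := hx (m - 1) (by omega)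
  rw [show m - 1 + 1 = m by omega] at hadj
  obtain ⟨K', h3, h4⟩ := exists_maxClique_pair hadj
  have hK'S : K' ∈ S := by
    by_contra h
    exact hmin (m - 1) (by omega) ⟨by omega, K', h3, h⟩
  exact hS.mem_mem hK'S hLS h4 hL

theorem exists_cover [Finite V] (hp : IsTreePath T p n) {x : ℕ → V} {N : ℕ}
    (hx : ∀ m < N, G.Adj (x m) (x (m + 1)))
    (hu : ∀ j ≤ n, x 0 ∈ (p j).1 → j = 0) (hv : x N ∈ (p n).1) (hu0 : x 0 ∈ (p 0).1)
    {j : ℕ} (hj : j < n) : ∃ m ≤ N, x m ∈ (p j).1 ∧ x m ∈ (p (j + 1)).1 := by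
  obtain ⟨S, hS, h⟩ := hp.exists_side hj
  obtain ⟨m, -, h1, h2⟩ := exists_crossing hS hx (Nat.zero_le _) (fun K hK => by
    by_contra hKS
    have := hu _ (by omega) (hS.mem_mem ((h 0 (by omega)).2 (by omega)) hKS hu0 hK).2
    omega) hv (fun hm => by have := (h _ le_rfl).1 hm; omega)
  exact ⟨m, h1, h2⟩

/-- At a switch, a chordless path has two consecutive vertices, the first covering the edge
before the switch and the second covering the edge after it. -/
theorem exists_switch_pair [Finite V] (hp : IsTreePath T p n) {x : ℕ → V} {N : ℕ}
    (hx : ∀ m < N, G.Adj (x m) (x (m + 1)))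
    (hchord : ∀ m m', m' ≤ N → m + 1 < m' → x m ≠ x m' ∧ ¬ G.Adj (x m) (x m'))
    (hu : ∀ j ≤ n, x 0 ∈ (p j).1 → j = 0) (hu0 : x 0 ∈ (p 0).1)
    (hv : ∀ j ≤ n, x N ∈ (p j).1 → j = n) (hvn : x N ∈ (p n).1)
    {i : ℕ} (hi : i + 1 < n)
    (h1 : T.D (p i) (p (i + 1))) (h2 : T.D (p (i + 2)) (p (i + 1))) :
    ∃ a, 1 ≤ a ∧ a + 1 < N ∧ (x a ∈ (p i).1 ∧ x a ∈ (p (i + 1)).1) ∧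
      x (a + 1) ∈ (p (i + 1)).1 ∧ x (a + 1) ∈ (p (i + 2)).1 := by
  obtain ⟨a, haN, haA, haM⟩ := exists_cover hp hx hu hvn hu0 (show i < n by omega)
  obtain ⟨S, hS, h⟩ := hp.exists_side hi
  obtain ⟨b, hab, hbN, hbM, hbR⟩ := exists_crossing hS hx haN (fun K hK => by
    by_contra hKS
    exact not_mem_switch hp hi h1 h2 haA (hS.mem_mem hS.left hKS haM hK).2) hvn
    (fun hm => by have := (h _ le_rfl).1 hm; omega)
  -- both vertices lie in the clique at the switch, so they are consecutive on the path
  obtain rfl : b = a + 1 := by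
    by_contra hne
    obtain ⟨hne', hna⟩ := hchord a b hbN (by omega)
    exact hna ((p (i + 1)).2.1 haM hbM hne')
  refine ⟨a, ?_, ?_, ⟨haA, haM⟩, hbM, hbR⟩
  · rcases Nat.eq_zero_or_pos a with rfl | h0
    · have := hu _ (by omega) haM
      omega
    · exact h0
  · rcases Nat.lt_or_eq_of_le hbN with h0 | h0
    · exact h0
    · rw [h0] at hbM
      have := hv _ (by omega) hbM
      omega

/-! ### The attachments -/

theorem not_mem_of_not_adj {K : MaxClique G} {z w : V} (hz : z ∈ K.1) (hne : z ≠ w)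
    (h : ¬ G.Adj z w) : w ∉ K.1 := fun hw => h (K.2.1 hz hw hne)

/-- No attachment of type 1 on `l1, l2, r1, r2` exists at a switch: its two vertices give cliques
on the directed path of `l1` above `M`, each of which would have to precede the other. -/
theorem attach1_contra [Finite V] {A M : MaxClique G} {Z : Set V} {l1 l2 r1 r2 : V}
    (h : T.D A M) (h1A : l1 ∈ A.1) (h1M : l1 ∈ M.1) (h2M : l2 ∈ M.1)
    (hr1A : r1 ∉ A.1) (hr1M : r1 ∈ M.1) (hr2M : r2 ∈ M.1)
    (hl2Z : l2 ∉ Z) (hr2Z : r2 ∉ Z) (hatt : Attach1 G Z l1 l2 r1 r2) : False := by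
  obtain ⟨z, hz, z', hz', -, -, a1, a2, a3, a4, b1, b2, b3, b4⟩ := hatt
  have cl : ∀ s ⊆ M.1, G.IsClique s := fun s hs => M.2.1.subset hs
  obtain ⟨K, hK⟩ := exists_maxClique (G := G) (s := insert z {l1, l2, r1}) (by
    refine IsClique.insert (cl _ ?_) ?_
    · rintro w (rfl | rfl | rfl) <;> assumption
    · rintro w (rfl | rfl | rfl) _ <;> assumption)
  obtain ⟨K', hK'⟩ := exists_maxClique (G := G) (s := insert z' {r1, r2, l1}) (by
    refine IsClique.insert (cl _ ?_) ?_
    · rintro w (rfl | rfl | rfl) <;> assumption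
    · rintro w (rfl | rfl | rfl) _ <;> assumption)
  have hr2 : r2 ∉ K.1 := not_mem_of_not_adj (hK (by simp)) (fun e => hr2Z (e ▸ hz)) a4
  have hl2 : l2 ∉ K'.1 := not_mem_of_not_adj (hK' (by simp)) (fun e => hl2Z (e ▸ hz')) b4
  have l1K : l1 ∈ K.1 := hK (by simp)
  have l2K : l2 ∈ K.1 := hK (by simp)
  have r1K : r1 ∈ K.1 := hK (by simp)
  have l1K' : l1 ∈ K'.1 := hK' (by simp)
  have r1K' : r1 ∈ K'.1 := hK' (by simp)
  have r2K' : r2 ∈ K'.1 := hK' (by simp)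
  have hMK := ge_of_mem h h1A hr1A hr1M l1K r1K
  have hMK' := ge_of_mem h h1A hr1A hr1M l1K' r1K'
  rcases le_of_mem T l1K l1K' with hle | hle
  · exact hr2 (mem_of_le_of_le hMK hle hr2M r2K')
  · exact hl2 (mem_of_le_of_le hMK' hle h2M l2K)

/-- The geometric core of type 2. A vertex `z` seeing only `l1, l2, r1, r2` on the two paths
cannot reach, together with `l1`, a clique `K` below `C` that avoids `l2` and `r1`. -/
theorem below_contra (hp : IsTreePath T p n) {X Y : Set V}
    (hX : ∀ j < n, ∃ w ∈ X, w ∈ (p j).1 ∧ w ∈ (p (j + 1)).1)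
    (hY : ∀ j < n, ∃ w ∈ Y, w ∈ (p j).1 ∧ w ∈ (p (j + 1)).1)
    {i : ℕ} (hi : i + 1 ≤ n) (hD : T.D (p i) (p (i + 1))) {l1 l2 r1 r2 z u : V}
    (huX : u ∈ X) (hu0 : u ∈ (p 0).1) (hui : u ∉ (p (i + 1)).1)
    (h1A : l1 ∈ (p i).1) (h1M : l1 ∈ (p (i + 1)).1)
    (h2A : l2 ∈ (p i).1) (h2M : l2 ∈ (p (i + 1)).1)
    (hr1A : r1 ∉ (p i).1) (hr1M : r1 ∈ (p (i + 1)).1)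
    (hr2A : r2 ∉ (p i).1) (hr2M : r2 ∈ (p (i + 1)).1)
    (h1Y : l1 ∉ Y) (h2X : l2 ∉ X)
    (hz : ∀ w ∈ X ∪ Y, ∀ K : MaxClique G, z ∈ K.1 → w ∈ K.1 →
      w = l1 ∨ w = l2 ∨ w = r1 ∨ w = r2)
    {C K : MaxClique G} (hMC : T.le (p (i + 1)) C) (hKC : T.le K C)
    (zC : z ∈ C.1) (rC : r1 ∈ C.1)
    (zK : z ∈ K.1) (lK : l1 ∈ K.1) (l2K : l2 ∉ K.1) (rK : r1 ∉ K.1) : False := by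
  classical
  have hKM : T.le K (p (i + 1)) := by
    rcases le_of_mem T lK h1M with h | h
    · exact h
    · exact absurd (mem_of_le_of_le h hKC hr1M rC) rK
  have zM : z ∈ (p (i + 1)).1 := mem_of_le_of_le hKM hMC zK zC
  have hKA : T.le K (p i) := by
    rcases le_of_mem T lK h1A with h | h
    · exact h
    · exact absurd (mem_of_le_of_le h hKM h2A h2M) l2K
  have zA : z ∈ (p i).1 := mem_of_le_of_le hKA (.single hD) zK zM
  -- `j` is the first clique of the tree path containing `z`
  have hex : ∃ j, z ∈ (p j).1 := ⟨i, zA⟩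
  have hji : Nat.find hex ≤ i := Nat.find_min' hex zA
  have zj := Nat.find_spec hex
  have hmin := fun m => Nat.find_min hex (m := m)
  generalize Nat.find hex = j at *
  rcases Nat.eq_zero_or_pos j with rfl | hj0
  · rcases hz u (.inl huX) _ zj hu0 with rfl | rfl | rfl | rfl <;> exact hui (by assumption)
  obtain ⟨j, rfl⟩ : ∃ k, j = k + 1 := ⟨j - 1, by omega⟩
  have zj' : z ∉ (p j).1 := hmin j (by omega)
  have hr : ∀ w, w ∉ (p i).1 → w ∈ (p (i + 1)).1 → w ∉ (p (j + 1)).1 := fun w h1 h2 h3 =>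
    h1 (hp.mem_between hji (Nat.lt_succ_self i) hi h3 h2).1
  have l1j : l1 ∈ (p j).1 := by
    obtain ⟨w, hw, hwj, hwj'⟩ := hX j (by omega)
    rcases hz w (.inl hw) _ zj hwj' with rfl | rfl | rfl | rfl
    · exact hwj
    · exact absurd hw h2X
    · exact absurd hwj' (hr _ hr1A hr1M)
    · exact absurd hwj' (hr _ hr2A hr2M)
  have l2j : l2 ∈ (p j).1 := by
    obtain ⟨w, hw, hwj, hwj'⟩ := hY j (by omega)
    rcases hz w (.inr hw) _ zj hwj' with rfl | rfl | rfl | rfl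
    · exact absurd hw h1Y
    · exact hwj
    · exact absurd hwj' (hr _ hr1A hr1M)
    · exact absurd hwj' (hr _ hr2A hr2M)
  have hjM : T.le (p j) (p (i + 1)) := by
    rcases le_of_mem T l1j h1M with h | h
    · exact h
    · obtain ⟨S, hS, hSi⟩ := hp.exists_side (show i < n by omega)
      exact absurd hD (T.antisymm _ _ (hS.of_le' h hS.right ((hSi j (by omega)).2 (by omega))))
  rcases le_of_mem T lK l1j with h | h
  · exact zj' (mem_of_le_of_le h hjM zK zM)
  · exact l2K (mem_of_le_of_le h hKM l2j h2M)

/-- `below_contra` for the tree path traversed from `v` to `u`. -/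
theorem below_contra_rev (hp : IsTreePath T p n) {X Y : Set V}
    (hX : ∀ j < n, ∃ w ∈ X, w ∈ (p j).1 ∧ w ∈ (p (j + 1)).1)
    (hY : ∀ j < n, ∃ w ∈ Y, w ∈ (p j).1 ∧ w ∈ (p (j + 1)).1)
    {i : ℕ} (hi : i + 1 < n) (hD : T.D (p (i + 2)) (p (i + 1))) {l1 l2 r1 r2 z v : V}
    (hvX : v ∈ X) (hvn : v ∈ (p n).1) (hvi : v ∉ (p (i + 1)).1)
    (hr1R : r1 ∈ (p (i + 2)).1) (hr1M : r1 ∈ (p (i + 1)).1)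
    (hr2R : r2 ∈ (p (i + 2)).1) (hr2M : r2 ∈ (p (i + 1)).1)
    (h1R : l1 ∉ (p (i + 2)).1) (h1M : l1 ∈ (p (i + 1)).1)
    (h2R : l2 ∉ (p (i + 2)).1) (h2M : l2 ∈ (p (i + 1)).1)
    (hrY : r1 ∉ Y) (hrX : r2 ∉ X)
    (hz : ∀ w ∈ X ∪ Y, ∀ K : MaxClique G, z ∈ K.1 → w ∈ K.1 →
      w = l1 ∨ w = l2 ∨ w = r1 ∨ w = r2)
    {C K : MaxClique G} (hMC : T.le (p (i + 1)) C) (hKC : T.le K C)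
    (zC : z ∈ C.1) (lC : l1 ∈ C.1)
    (zK : z ∈ K.1) (rK : r1 ∈ K.1) (r2K : r2 ∉ K.1) (lK : l1 ∉ K.1) : False := by
  have rev : ∀ W : Set V, (∀ j < n, ∃ w ∈ W, w ∈ (p j).1 ∧ w ∈ (p (j + 1)).1) →
      ∀ j < n, ∃ w ∈ W, w ∈ (p (n - j)).1 ∧ w ∈ (p (n - (j + 1))).1 := by
    intro W hW j hj
    obtain ⟨w, hw, h1, h2⟩ := hW (n - (j + 1)) (by omega)
    rw [show n - (j + 1) + 1 = n - j by omega] at h2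
    exact ⟨w, hw, h2, h1⟩
  have ei : n - (n - i - 2) = i + 2 := by omega
  have ei' : n - (n - i - 2 + 1) = i + 1 := by omega
  refine below_contra hp.reverse (rev X hX) (rev Y hY) (i := n - i - 2) (by omega)
    (l1 := r1) (l2 := r2) (r1 := l1) (r2 := l2) (z := z) (u := v) (C := C) (K := K)
    ?_ hvX hvn ?_ ?_ ?_ ?_ ?_ ?_ ?_ ?_ ?_ hrY hrX
    (fun w hw K h1 h2 => by have := hz w hw K h1 h2; tauto) ?_ hKC zC lC zK rK r2K lK
  all_goals simp only [ei, ei']; assumption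

/-- No attachment of type 2 exists at a switch: one end of the chain `z` would reach below `C`. -/
theorem attach2_contra [Finite V] (hp : IsTreePath T p n) {X Y Z : Set V}
    (hX : ∀ j < n, ∃ w ∈ X, w ∈ (p j).1 ∧ w ∈ (p (j + 1)).1)
    (hY : ∀ j < n, ∃ w ∈ Y, w ∈ (p j).1 ∧ w ∈ (p (j + 1)).1)
    {i : ℕ} (hi : i + 1 < n) (hD : T.D (p i) (p (i + 1))) (hD' : T.D (p (i + 2)) (p (i + 1)))
    {l1 l2 r1 r2 u v : V}
    (huX : u ∈ X) (hu0 : u ∈ (p 0).1) (hui : u ∉ (p (i + 1)).1)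
    (hvX : v ∈ X) (hvY : v ∈ Y) (huY : u ∈ Y) (hvn : v ∈ (p n).1) (hvi : v ∉ (p (i + 1)).1)
    (h1A : l1 ∈ (p i).1) (h1M : l1 ∈ (p (i + 1)).1)
    (h2A : l2 ∈ (p i).1) (h2M : l2 ∈ (p (i + 1)).1)
    (hr1M : r1 ∈ (p (i + 1)).1) (hr1R : r1 ∈ (p (i + 2)).1)
    (hr2M : r2 ∈ (p (i + 1)).1) (hr2R : r2 ∈ (p (i + 2)).1)
    (hl : l1 ∈ X ∧ l1 ∉ Y ∧ l2 ∈ Y ∧ l2 ∉ X ∨ l1 ∈ Y ∧ l1 ∉ X ∧ l2 ∈ X ∧ l2 ∉ Y)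
    (hr : r1 ∈ X ∧ r1 ∉ Y ∧ r2 ∈ Y ∧ r2 ∉ X ∨ r1 ∈ Y ∧ r1 ∉ X ∧ r2 ∈ X ∧ r2 ∉ Y)
    (hZ : ∀ w ∈ Z, w ∉ X ∪ Y) (hatt : Attach2 G Z (X ∪ Y) l1 l2 r1 r2) : False := by
  obtain ⟨t, z, z', z0, zl, zinj, -, hzZ, hzZ', hcl, hzP, -, hz'⟩ := hatt
  have sw : ∀ w, w ∈ (p i).1 → w ∉ (p (i + 2)).1 := fun w h1 h2 =>
    not_mem_switch hp hi hD hD' h1 h2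
  have hr1A : r1 ∉ (p i).1 := fun h => sw _ h hr1R
  have hr2A : r2 ∉ (p i).1 := fun h => sw _ h hr2R
  have l1P : l1 ∈ X ∪ Y := by rcases hl with h | h <;> simp [h.1]
  have l2P : l2 ∈ X ∪ Y := by rcases hl with h | h <;> simp [h.2.2.1]
  have r1P : r1 ∈ X ∪ Y := by rcases hr with h | h <;> simp [h.1]
  have r2P : r2 ∈ X ∪ Y := by rcases hr with h | h <;> simp [h.2.2.1]
  have l12 : l2 ≠ l1 := by
    rintro rfl; rcases hl with h | h
    · exact h.2.1 h.2.2.1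
    · exact h.2.1 h.2.2.1
  have r12 : r2 ≠ r1 := by
    rintro rfl; rcases hr with h | h
    · exact h.2.1 h.2.2.1
    · exact h.2.1 h.2.2.1
  have l2r1 : l2 ≠ r1 := by rintro rfl; exact hr1A h2A
  have r2l1 : r2 ≠ l1 := by rintro rfl; exact hr2A h1A
  set I : Set V := {w | ∃ k : Fin (2*t+3), k ≠ 0 ∧ k ≠ Fin.last (2*t+2) ∧ z k = w} with hI
  have zQ : ∀ k, z k ∈ ({l1, l2, r1, r2} ∪ I : Set V) := by
    intro k
    by_cases h0 : k = 0
    · left; simp [h0, z0]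
    by_cases h1 : k = Fin.last (2*t+2)
    · left; simp [h1, zl]
    · exact .inr ⟨k, h0, h1, rfl⟩
  have zI : ∀ k w, w ∈ X ∪ Y → w ≠ l1 → w ≠ r1 → w ≠ z k := by
    rintro k w hw h1 h2 rfl
    by_cases h0 : k = 0
    · exact h1 (by rw [h0, z0])
    by_cases h3 : k = Fin.last (2*t+2)
    · exact h2 (by rw [h3, zl])
    · exact hZ _ (hzZ k h0 h3) hw
  -- the vertices `z' k` are not in the clique, as they miss `l2`
  have hnot : ∀ k, z' k ∉ ({l1, l2, r1, r2} ∪ I : Set V) := by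
    rintro k (h | h)
    · refine hZ _ (hzZ' k) ?_
      rcases h with h | h | h | h <;> rw [h] <;> assumption
    · have hne : z' k ≠ l2 := fun e => hZ _ (hzZ' k) (e ▸ l2P)
      have := hcl (.inr h) (.inl (by simp : l2 ∈ ({l1, l2, r1, r2} : Set V))) hne
      rcases (hz' k l2 (.inl l2P)).1 this with e | e
      · exact zI _ l2 l2P l12 l2r1 e
      · exact zI _ l2 l2P l12 l2r1 e
  have hKex : ∀ k : Fin (2*t+2), ∃ K : MaxClique G, z k.castSucc ∈ K.1 ∧ z k.succ ∈ K.1 ∧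
      ∀ w ∈ ({l1, l2, r1, r2} ∪ I : Set V), w ∈ K.1 → w = z k.castSucc ∨ w = z k.succ := by
    intro k
    obtain ⟨K, hK⟩ := exists_maxClique (G := G) (s := insert (z' k) {z k.castSucc, z k.succ}) (by
      refine IsClique.insert (hcl.subset ?_) ?_
      · rintro w (rfl | rfl) <;> exact zQ _
      · intro w hw _
        refine (hz' k w (.inr ?_)).2 hw
        rcases hw with rfl | rfl <;> exact zQ _)
    refine ⟨K, hK (by simp), hK (by simp), fun w hw hwK => ?_⟩
    refine (hz' k w (.inr hw)).1 (K.2.1 (hK (by simp)) hwK ?_)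
    rintro rfl
    exact hnot k hw
  choose K hKa hKb hKo using hKex
  obtain ⟨C, hC⟩ := exists_maxClique hcl
  have zC : ∀ k, z k ∈ C.1 := fun k => hC (zQ k)
  have l1C : l1 ∈ C.1 := hC (by simp)
  have l2C : l2 ∈ C.1 := hC (by simp)
  have r1C : r1 ∈ C.1 := hC (by simp)
  have r2C : r2 ∈ C.1 := hC (by simp)
  have hMC : T.le (p (i + 1)) C := ge_of_mem hD h1A hr1A hr1M l1C r1C
  have hni : ∀ m : Fin (2*t+3), ∀ q : Fin (2*t+2), (m : ℕ) ≠ q → (m : ℕ) ≠ q + 1 →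
      z m ∉ (K q).1 := by
    intro m q h1 h2 h
    rcases hKo q _ (zQ m) h with e | e
    · exact h1 (by rw [zinj e]; simp)
    · exact h2 (by rw [zinj e]; simp)
  -- consecutive cliques lie on different sides of `C`
  have alt : ∀ k (h : k + 1 < 2*t+2),
      T.le C (K ⟨k + 1, h⟩) ↔ ¬ T.le C (K ⟨k, by omega⟩) := by
    intro k h
    have e1 : z ⟨k, by omega⟩ ∈ (K ⟨k, by omega⟩).1 := hKa ⟨k, by omega⟩
    have e2 : z ⟨k + 1, by omega⟩ ∈ (K ⟨k, by omega⟩).1 := hKb ⟨k, by omega⟩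
    have e3 : z ⟨k + 1, by omega⟩ ∈ (K ⟨k + 1, by omega⟩).1 := hKa ⟨k + 1, by omega⟩
    have e4 : z ⟨k + 2, by omega⟩ ∈ (K ⟨k + 1, by omega⟩).1 := hKb ⟨k + 1, by omega⟩
    have f1 : z ⟨k + 2, by omega⟩ ∉ (K ⟨k, by omega⟩).1 :=
      hni _ _ (by simp) (by simp)
    have f2 : z ⟨k, by omega⟩ ∉ (K ⟨k + 1, by omega⟩).1 :=
      hni _ _ (by simp) (by simp; omega)
    have cmp := le_of_mem T e2 e3
    constructor
    · intro h2 h1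
      rcases cmp with c | c
      · exact f1 (mem_of_le_of_le h1 c (zC _) e4)
      · exact f2 (mem_of_le_of_le h2 c (zC _) e1)
    · intro h1
      have h1' := (le_of_mem T (zC _) e2).resolve_left h1
      by_contra h2
      have h2' := (le_of_mem T (zC _) e3).resolve_left h2
      rcases cmp with c | c
      · exact f2 (mem_of_le_of_le c h2' e1 (zC _))
      · exact f1 (mem_of_le_of_le c h1' e4 (zC _))
  have par : ∀ k (h : 2*k+1 < 2*t+2),
      T.le C (K ⟨2*k+1, h⟩) ↔ ¬ T.le C (K ⟨0, by omega⟩) := by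
    intro k
    induction k with
    | zero => intro h; exact alt 0 h
    | succ k ih =>
      intro h
      have a1 := alt (2*k+1) (by omega)
      have a2 := alt (2*k+2) (by omega)
      have a3 := ih (by omega)
      have : T.le C (K ⟨2*(k+1)+1, h⟩) ↔ T.le C (K ⟨2*k+1, by omega⟩) := by
        rw [show T.le C (K ⟨2*(k+1)+1, h⟩) = T.le C (K ⟨2*k+2+1, by omega⟩) from rfl, a2, a1,
          not_not]
      rw [this, a3]
  have hzK : ∀ k : Fin (2*t+3), k ≠ 0 → k ≠ Fin.last (2*t+2) → ∀ w ∈ X ∪ Y,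
      ∀ K : MaxClique G, z k ∈ K.1 → w ∈ K.1 → w = l1 ∨ w = l2 ∨ w = r1 ∨ w = r2 := by
    intro k h0 h1 w hw K hk hwK
    refine (hzP k h0 h1 w hw).1 (K.2.1 hk hwK ?_)
    rintro rfl
    exact hZ _ (hzZ k h0 h1) hw
  have l2K : ∀ k, l2 ∉ (K k).1 := fun k h => by
    rcases hKo k l2 (by simp) h with e | e <;> exact zI _ l2 l2P l12 l2r1 e
  have r2K : ∀ k, r2 ∉ (K k).1 := fun k h => by
    rcases hKo k r2 (by simp) h with e | e <;> exact zI _ r2 r2P r2l1 r12 e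
  by_cases hF : T.le C (K ⟨0, by omega⟩)
  · -- the last clique is below `C`, on the side of `v`: traverse the tree path backwards
    have hF' : ¬ T.le C (K ⟨2*t+1, by omega⟩) := fun h => (par t (by omega)).1 h hF
    have zK : z ⟨2*t+1, by omega⟩ ∈ (K ⟨2*t+1, by omega⟩).1 := hKa ⟨2*t+1, by omega⟩
    have rK : r1 ∈ (K ⟨2*t+1, by omega⟩).1 := by
      have := hKb ⟨2*t+1, by omega⟩
      rw [← zl]; exact this
    have lK : l1 ∉ (K ⟨2*t+1, by omega⟩).1 := by
      rw [← z0]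
      exact hni _ _ (by simp) (by simp)
    have hKC := (le_of_mem T r1C rK).resolve_left hF'
    have hne0 : (⟨2*t+1, by omega⟩ : Fin (2*t+3)) ≠ 0 := by simp [Fin.ext_iff]
    have hnel : (⟨2*t+1, by omega⟩ : Fin (2*t+3)) ≠ Fin.last (2*t+2) := by simp [Fin.ext_iff]
    have hl1R := sw _ h1A
    have hl2R := sw _ h2A
    have hzz := hzK _ hne0 hnel
    rcases hr with h | h
    · exact below_contra_rev hp hX hY hi hD' hvX hvn hvi hr1R hr1M hr2R hr2M hl1R h1M hl2R h2M
        h.2.1 h.2.2.2 hzz hMC hKC (zC _) l1C zK rK (r2K _) lK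
    · exact below_contra_rev hp hY hX hi hD' hvY hvn hvi hr1R hr1M hr2R hr2M hl1R h1M hl2R h2M
        h.2.1 h.2.2.2 (by rwa [Set.union_comm]) hMC hKC (zC _) l1C zK rK (r2K _) lK
  · have zK : z ⟨1, by omega⟩ ∈ (K ⟨0, by omega⟩).1 := hKb ⟨0, by omega⟩
    have lK : l1 ∈ (K ⟨0, by omega⟩).1 := by
      have := hKa ⟨0, by omega⟩
      rw [← z0]; exact this
    have rK : r1 ∉ (K ⟨0, by omega⟩).1 := by
      rw [← zl]
      exact hni _ _ (by simp) (by simp)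
    have hKC := (le_of_mem T l1C lK).resolve_left hF
    have hne0 : (⟨1, by omega⟩ : Fin (2*t+3)) ≠ 0 := by simp [Fin.ext_iff]
    have hnel : (⟨1, by omega⟩ : Fin (2*t+3)) ≠ Fin.last (2*t+2) := by simp [Fin.ext_iff]
    have hzz := hzK _ hne0 hnel
    rcases hl with h | h
    · exact below_contra hp hX hY (by omega) hD huX hu0 hui h1A h1M h2A h2M hr1A hr1M hr2A hr2M
        h.2.1 h.2.2.2 hzz hMC hKC (zC _) r1C zK lK (l2K _) rK
    · exact below_contra hp hY hX (by omega) hD huY hu0 hui h1A h1M h2A h2M hr1A hr1M hr2A hr2M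
        h.2.1 h.2.2.2 (by rwa [Set.union_comm]) hMC hKC (zC _) r1C zK lK (l2K _) rK

/-! ### Switches and strong paths -/

/-- An inner vertex of one path avoids another path with the same ends and disjoint interior. -/
theorem not_mem_range_of_inner {r s : ℕ} {x : Fin (r+2) → V} {y : Fin (s+2) → V}
    (hxi : Function.Injective x) (h0 : x 0 = y 0) (hl : x (Fin.last (r+1)) = y (Fin.last (s+1)))
    (hd : ∀ i : Fin (r+2), i ≠ 0 → i ≠ Fin.last (r+1) →
        ∀ j : Fin (s+2), j ≠ 0 → j ≠ Fin.last (s+1) → x i ≠ y j)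
    {i : Fin (r+2)} (hi0 : i ≠ 0) (hil : i ≠ Fin.last (r+1)) : x i ∉ Set.range y := by
  rintro ⟨j, hj⟩
  by_cases j0 : j = 0
  · exact hi0 (hxi (by rw [← hj, j0, h0]))
  by_cases jl : j = Fin.last (s+1)
  · exact hil (hxi (by rw [← hj, jl, hl]))
  · exact hd i hi0 hil j j0 jl hj.symm

/-- The vertices of a chordless path from `u` to `v` cover every edge of the tree path, and at a
switch two consecutive inner vertices cover the two edges. -/
theorem chordless_data [Finite V] (hp : IsTreePath T p n) {u v : V}
    (hu : ∀ j ≤ n, u ∈ (p j).1 → j = 0) (hu0 : u ∈ (p 0).1)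
    (hv : ∀ j ≤ n, v ∈ (p j).1 → j = n) (hvn : v ∈ (p n).1)
    {i : ℕ} (hi : i + 1 < n)
    (h1 : T.D (p i) (p (i + 1))) (h2 : T.D (p (i + 2)) (p (i + 1)))
    {r : ℕ} {x : Fin (r+2) → V} (hx0 : x 0 = u) (hxl : x (Fin.last (r+1)) = v)
    (hx : IsChordlessPathFun G x) :
    (∀ j < n, ∃ w ∈ Set.range x, w ∈ (p j).1 ∧ w ∈ (p (j + 1)).1) ∧
    ∃ a, ∃ ha : 1 ≤ a, ∃ ha' : a + 1 ≤ r,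
      (x ⟨a, by omega⟩ ∈ (p i).1 ∧ x ⟨a, by omega⟩ ∈ (p (i + 1)).1) ∧
      x ⟨a + 1, by omega⟩ ∈ (p (i + 1)).1 ∧ x ⟨a + 1, by omega⟩ ∈ (p (i + 2)).1 := by
  -- truncating the index gives a function on `ℕ` that agrees with `x` wherever `x` is defined
  let xs : ℕ → V := fun m => x ⟨min m (r + 1), by omega⟩
  have hxs : ∀ m (h : m < r + 2), xs m = x ⟨m, h⟩ := by
    intro m h
    simp only [xs]
    congr 2
    omega
  have e0 : xs 0 = u := by rw [hxs 0 (by omega), ← hx0]; rfl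
  have eN : xs (r + 1) = v := by rw [hxs (r + 1) (by omega), ← hxl]; rfl
  have hadj : ∀ m < r + 1, G.Adj (xs m) (xs (m + 1)) := by
    intro m hm
    rw [hxs m (by omega), hxs (m + 1) (by omega)]
    exact (hx.2 _ _ (by simp)).2 rfl
  have hchord : ∀ m m', m' ≤ r + 1 → m + 1 < m' → xs m ≠ xs m' ∧ ¬ G.Adj (xs m) (xs m') := by
    intro m m' h h'
    rw [hxs m (by omega), hxs m' (by omega)]
    refine ⟨fun e => ?_, fun e => ?_⟩
    · have := Fin.mk.inj_iff.1 (hx.1 e)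
      omega
    · have := (hx.2 _ _ (by simp; omega)).1 e
      simp at this
      omega
  constructor
  · intro j hj
    obtain ⟨m, -, hm⟩ := exists_cover hp hadj (by rwa [e0]) (by rwa [eN]) (by rwa [e0]) hj
    exact ⟨xs m, ⟨_, rfl⟩, hm⟩
  · obtain ⟨a, ha, ha', h3, h4⟩ := exists_switch_pair hp hadj hchord (by rwa [e0]) (by rwa [e0])
      (by rwa [eN]) (by rwa [eN]) hi h1 h2
    rw [hxs a (by omega)] at h3
    rw [hxs (a + 1) (by omega)] at h4
    exact ⟨a, ha, by omega, h3, h4⟩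

/-- The tree path between two vertices linked by a strong path has no switch `A → M ← R`. -/
theorem no_switch [Finite V] (hp : IsTreePath T p n) {u v : V}
    (hu : ∀ j ≤ n, u ∈ (p j).1 → j = 0) (hu0 : u ∈ (p 0).1)
    (hv : ∀ j ≤ n, v ∈ (p j).1 → j = n) (hvn : v ∈ (p n).1)
    (hlink : LinkedByStrongPath G u v) {i : ℕ} (hi : i + 1 < n)
    (h1 : T.D (p i) (p (i + 1))) (h2 : T.D (p (i + 2)) (p (i + 1))) : False := by
  rcases hlink with ⟨w, huw, hvw⟩ | ⟨r, s, -, -, x, y, Z, hx0, hxl, hy0, hyl, hx, hy, hd, hZ, hatt⟩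
  · -- a common neighbour covers the whole tree path
    let xs : ℕ → V := fun m => if m = 0 then u else if m = 1 then w else v
    have hw : ∀ j < n, w ∈ (p j).1 ∧ w ∈ (p (j + 1)).1 := by
      intro j hj
      obtain ⟨m, hm, h3, h4⟩ := exists_cover hp (x := xs) (N := 2) (by
        intro m hm
        obtain rfl | rfl : m = 0 ∨ m = 1 := by omega
        · exact huw
        · exact hvw.symm) hu hvn hu0 hj
      obtain rfl | rfl | rfl : m = 0 ∨ m = 1 ∨ m = 2 := by omega
      · have := hu _ (by omega) h4
        omega
      · exact ⟨h3, h4⟩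
      · have := hv _ (by omega) h3
        omega
    exact not_mem_switch hp hi h1 h2 (hw i (by omega)).1 (hw (i + 1) hi).2
  · obtain ⟨hX, a, ha, ha', ⟨xA, xM⟩, xM', xR⟩ :=
      chordless_data hp hu hu0 hv hvn hi h1 h2 hx0 hxl hx
    obtain ⟨hY, b, hb, hb', ⟨yA, yM⟩, yM', yR⟩ :=
      chordless_data hp hu hu0 hv hvn hi h1 h2 hy0 hyl hy
    have xY : ∀ m (h : m < r + 2), 1 ≤ m → m ≤ r → x ⟨m, h⟩ ∉ Set.range y := by
      intro m h h3 h4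
      refine not_mem_range_of_inner hx.1 (hx0.trans hy0.symm) (hxl.trans hyl.symm) hd ?_ ?_ <;>
        simp [Fin.ext_iff] <;> omega
    have yX : ∀ m (h : m < s + 2), 1 ≤ m → m ≤ s → y ⟨m, h⟩ ∉ Set.range x := by
      intro m h h3 h4
      refine not_mem_range_of_inner hy.1 (hy0.trans hx0.symm) (hyl.trans hxl.symm)
        (fun i h h' j k k' e => hd j k k' i h h' e.symm) ?_ ?_ <;>
        simp [Fin.ext_iff] <;> omega
    have hne : ∀ (m : ℕ) (h : m < r + 2) (k : ℕ) (h' : k < s + 2), 1 ≤ m → m ≤ r →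
        x ⟨m, h⟩ ≠ y ⟨k, h'⟩ := fun m h k h' h3 h4 e => xY m h h3 h4 ⟨_, e.symm⟩
    have adj : ∀ (m : ℕ) (h : m < r + 2) (k : ℕ) (h' : k < s + 2), 1 ≤ m → m ≤ r →
        x ⟨m, h⟩ ∈ (p (i + 1)).1 → y ⟨k, h'⟩ ∈ (p (i + 1)).1 → G.Adj (x ⟨m, h⟩) (y ⟨k, h'⟩) :=
      fun m h k h' h3 h4 h5 h6 => (p (i + 1)).2.1 h5 h6 (hne m h k h' h3 h4)
    obtain ⟨l1, l2, r1, r2, hl, hr, hat⟩ := hatt a b ha ha' hb hb'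
      (adj _ _ _ _ (by omega) (by omega) xM yM) (adj _ _ _ _ (by omega) (by omega) xM yM')
      (adj _ _ _ _ (by omega) (by omega) xM' yM) (adj _ _ _ _ (by omega) (by omega) xM' yM')
    have hZ' : ∀ w ∈ Z, w ∉ Set.range x ∪ Set.range y := fun w hw hw' =>
      (Set.mem_empty_iff_false w).1 (hZ ▸ ⟨hw, hw'⟩)
    have hlp : (l1 ∈ (p i).1 ∧ l1 ∈ (p (i + 1)).1) ∧ l2 ∈ (p i).1 ∧ l2 ∈ (p (i + 1)).1 := by
      rcases hl with ⟨rfl, rfl⟩ | ⟨rfl, rfl⟩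
      · exact ⟨⟨xA, xM⟩, yA, yM⟩
      · exact ⟨⟨yA, yM⟩, xA, xM⟩
    have hrp : (r1 ∈ (p (i + 1)).1 ∧ r1 ∈ (p (i + 2)).1) ∧
        r2 ∈ (p (i + 1)).1 ∧ r2 ∈ (p (i + 2)).1 := by
      rcases hr with ⟨rfl, rfl⟩ | ⟨rfl, rfl⟩
      · exact ⟨⟨xM', xR⟩, yM', yR⟩
      · exact ⟨⟨yM', yR⟩, xM', xR⟩
    obtain ⟨⟨l1A, l1M⟩, l2A, l2M⟩ := hlp
    obtain ⟨⟨r1M, r1R⟩, r2M, r2R⟩ := hrp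
    have hlr : l1 ∈ Set.range x ∧ l1 ∉ Set.range y ∧ l2 ∈ Set.range y ∧ l2 ∉ Set.range x ∨
        l1 ∈ Set.range y ∧ l1 ∉ Set.range x ∧ l2 ∈ Set.range x ∧ l2 ∉ Set.range y := by
      rcases hl with ⟨rfl, rfl⟩ | ⟨rfl, rfl⟩
      · exact .inl ⟨⟨_, rfl⟩, xY _ _ ha (by omega), ⟨_, rfl⟩, yX _ _ hb (by omega)⟩
      · exact .inr ⟨⟨_, rfl⟩, yX _ _ hb (by omega), ⟨_, rfl⟩, xY _ _ ha (by omega)⟩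
    have hrr : r1 ∈ Set.range x ∧ r1 ∉ Set.range y ∧ r2 ∈ Set.range y ∧ r2 ∉ Set.range x ∨
        r1 ∈ Set.range y ∧ r1 ∉ Set.range x ∧ r2 ∈ Set.range x ∧ r2 ∉ Set.range y := by
      rcases hr with ⟨rfl, rfl⟩ | ⟨rfl, rfl⟩
      · exact .inl ⟨⟨_, rfl⟩, xY _ _ (by omega) ha', ⟨_, rfl⟩, yX _ _ (by omega) hb'⟩
      · exact .inr ⟨⟨_, rfl⟩, yX _ _ (by omega) hb', ⟨_, rfl⟩, xY _ _ (by omega) ha'⟩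
    have hui : u ∉ (p (i + 1)).1 := fun h => by have := hu _ (by omega) h; omega
    have hvi : v ∉ (p (i + 1)).1 := fun h => by have := hv _ (by omega) h; omega
    rcases hat with hat | hat
    · refine attach1_contra h1 l1A l1M l2M
        (fun h => not_mem_switch hp hi h1 h2 h r1R) r1M r2M (fun h => hZ' _ h ?_)
        (fun h => hZ' _ h ?_) hat
      · rcases hlr with h | h <;> simp only [Set.mem_union, h.2.2.1, true_or, or_true]
      · rcases hrr with h | h <;> simp only [Set.mem_union, h.2.2.1, true_or, or_true]
    · exact attach2_contra hp hX hY hi h1 h2 ⟨0, hx0⟩ hu0 hui ⟨_, hxl⟩ ⟨_, hyl⟩ ⟨0, hy0⟩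
        hvn hvi l1A l1M l2A l2M r1M r1R r2M r2R hlr hrr hZ' hat

/-- A shortest path of the tree from the cliques containing `u` to those containing `v`. -/
theorem exists_treePath (T : CliqueDPT G) (u v : V) :
    ∃ (n : ℕ) (p : ℕ → MaxClique G), IsTreePath T p n ∧
      (∀ j ≤ n, u ∈ (p j).1 → j = 0) ∧ u ∈ (p 0).1 ∧
      (∀ j ≤ n, v ∈ (p j).1 → j = n) ∧ v ∈ (p n).1 := by
  classical
  have hex : ∃ n, ∃ K L : MaxClique G, u ∈ K.1 ∧ v ∈ L.1 ∧ ∃ q : T.tree.Walk K L,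
      q.length = n := by
    obtain ⟨⟨K, hK⟩⟩ := (T.subtree u).nonempty
    obtain ⟨⟨L, hL⟩⟩ := (T.subtree v).nonempty
    obtain ⟨q⟩ := T.isTree.1.preconnected K L
    exact ⟨_, K, L, hK, hL, q, rfl⟩
  obtain ⟨K, L, hK, hL, q, hq⟩ := Nat.find_spec hex
  have hmin : ∀ (K L : MaxClique G), u ∈ K.1 → v ∈ L.1 → ∀ q' : T.tree.Walk K L,
      q.length ≤ q'.length := fun K L hK hL q' => by
    rw [hq]
    exact Nat.find_min' hex ⟨K, L, hK, hL, q', rfl⟩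
  have hpath : q.IsPath := by
    obtain ⟨q', hq'⟩ := T.isTree.1.exists_walk_length_eq_dist K L
    refine q.isPath_of_length_eq_dist (le_antisymm ?_ (dist_le q))
    rw [← hq']
    exact hmin K L hK hL q'
  refine ⟨q.length, q.getVert, ⟨fun j hj => q.adj_getVert_succ hj,
    fun i hi j hj h => hpath.getVert_injOn hi hj h⟩, ?_, by simpa using hK, ?_, by simpa using hL⟩
  · intro j hj huj
    have := hmin _ _ huj hL (q.drop j)
    rw [Walk.drop_length] at this
    omega
  · intro j hj hvj
    have := hmin _ _ hK hvj (q.take j)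
    rw [Walk.take_length] at this
    omega

end TreePath

/-- If `u` and `v` are non-adjacent vertices of a directed path graph linked by a
strong path, then in every clique directed path tree the path `T(u,v)` is directed. -/
theorem strong_path_Tuv_directed [Fintype V] (G : SimpleGraph V)
    (hG : DirectedPathGraph G) (u v : V) (huv : u ≠ v) (hadj : ¬ G.Adj u v)
    (hlink : LinkedByStrongPath G u v) :
    ∀ T : CliqueDPT G, TuvDirected G T u v := by
  intro T
  obtain ⟨n, p, hp, hu, hu0, hv, hvn⟩ := exists_treePath T u v
  have in_in : ∀ i, i + 1 < n → T.D (p i) (p (i + 1)) → T.D (p (i + 1)) (p (i + 2)) := by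
    intro i hi h
    refine (T.total _ _ (hp.adj (i + 1) hi)).resolve_right fun hD => ?_
    exact no_switch hp hu hu0 hv hvn hlink hi h hD
  -- a switch `A ← M → R` is a switch of the first kind for the reversed orientation
  have out_out : ∀ i, i + 1 < n → T.D (p (i + 1)) (p i) → T.D (p (i + 2)) (p (i + 1)) := by
    intro i hi h
    refine (T.total _ _ (hp.adj (i + 1) hi)).resolve_left fun hD => ?_
    exact no_switch (T := T.rev) ⟨hp.adj, hp.inj⟩ hu hu0 hv hvn hlink hi h hD
  have hdir : (∀ i < n, T.D (p i) (p (i + 1))) ∨ (∀ i < n, T.D (p (i + 1)) (p i)) := by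
    rcases Nat.eq_zero_or_pos n with rfl | hn
    · left; intro i hi; omega
    rcases T.total _ _ (hp.adj 0 hn) with h | h
    · left
      intro i
      induction i with
      | zero => exact fun _ => h
      | succ i ih => exact fun hi => in_in i hi (ih (by omega))
    · right
      intro i
      induction i with
      | zero => exact fun _ => h
      | succ i ih => exact fun hi => out_out i hi (ih (by omega))
  refine ⟨n, fun i => p i, fun i j h => Fin.ext (hp.inj _ (by omega) _ (by omega) h), hu0, hvn,
    fun i hi h => hi (Fin.ext (hu _ (by omega) h)),
    fun i hi h => hi (Fin.ext (hv _ (by omega) h)), ?_⟩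
  exact hdir.imp (fun h i => h i i.2) (fun h i => h i i.2)
end
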